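/- arXiv:2405.10179 — 2 statements merged into one kernel-verified Lean document; each statement's English description precedes it below -/
import Mathlib

section
/- In the nonlinear setting with standing conditions (N1)–(N5): let C be the family of all closed subintervals of [0,1] that intersect the set {b_j : j ≥ 0}. Then for every ε > 0 there exists n_0 ∈ ℕ such that for every n ≥ n_0 and every Δ ∈ C, one has m_n(Δ)/|Δ|^{h_n} ≤ 1 + ε. -/
open Set Filter MeasureTheory Topology

noncomputable section

/-- Composition `g_{i₁} ∘ g_{i₂} ∘ ⋯ ∘ g_{i_l}` along a finite word. -/
def wordComp (g : ℕ → ℝ → ℝ) : List ℕ → ℝ → ℝ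
  | [] => id
  | k :: w => g k ∘ wordComp g w

/-- The limit set `J_n` of the IFS `S_n = {g_1, …, g_n}`. -/
def limitSet (g : ℕ → ℝ → ℝ) (n : ℕ) : Set ℝ :=
  ⋂ l : ℕ, ⋃ w ∈ {w : List ℕ | w.length = l + 1 ∧ ∀ i ∈ w, 1 ≤ i ∧ i ≤ n},
    wordComp g w '' Set.Icc (0 : ℝ) 1

/-- The distortion `κ(g) = sup_{x,y ∈ [0,1]} |g′(y)|/|g′(x)|` of a map with derivative `f'`. -/
def distortion (f' : ℝ → ℝ) : ℝ :=
  ⨆ x ∈ Set.Icc (0 : ℝ) 1, ⨆ y ∈ Set.Icc (0 : ℝ) 1, |f' y| / |f' x|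

/-- The nonlinear setting of the paper: a strictly decreasing sequence `b_k → 0` with `b_0 = 1`,
    decreasing `C²` diffeomorphisms `g_k : [0,1] → [b_k, b_{k-1}]` (with first and second
    derivatives `g'` and `g''`), the Hausdorff dimensions `h_n` of the limit sets `J_n`, and
    the standing conditions (N1)–(N5). -/
structure NonlinearIFS where
  b : ℕ → ℝ
  g : ℕ → ℝ → ℝ
  g' : ℕ → ℝ → ℝ
  g'' : ℕ → ℝ → ℝ
  h : ℕ → ℝ
  b_zero : b 0 = 1
  b_anti : StrictAnti b
  b_lim : Filter.Tendsto b Filter.atTop (nhds 0)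
  g_image : ∀ k, 1 ≤ k → g k '' Set.Icc (0 : ℝ) 1 = Set.Icc (b k) (b (k - 1))
  g_anti : ∀ k, 1 ≤ k → StrictAntiOn (g k) (Set.Icc (0 : ℝ) 1)
  g_zero : ∀ k, 1 ≤ k → g k 0 = b (k - 1)
  g_one : ∀ k, 1 ≤ k → g k 1 = b k
  deriv1 : ∀ k, 1 ≤ k → ∀ x ∈ Set.Icc (0 : ℝ) 1, HasDerivAt (g k) (g' k x) x
  deriv2 : ∀ k, 1 ≤ k → ∀ x ∈ Set.Icc (0 : ℝ) 1, HasDerivAt (g' k) (g'' k x) x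
  deriv_ne : ∀ k, 1 ≤ k → ∀ x ∈ Set.Icc (0 : ℝ) 1, g' k x ≠ 0
  h_dim : ∀ n, 1 ≤ n → dimH (limitSet g n) = ENNReal.ofReal (h n)
  N1 : Filter.Tendsto (fun n : ℕ => (1 - h n) * Real.log n) Filter.atTop (nhds 0)
  N2 : Filter.Tendsto (fun n : ℕ => ⨆ k ∈ Set.Ici n, b k / b (k + 1)) Filter.atTop (nhds 1)
  N3 : ∃ c : ℝ, 0 < c ∧ ∀ n, 1 ≤ n → ∀ x ∈ Set.Icc (0 : ℝ) 1, |g'' n x / g' n x| < c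
  N4 : Filter.Tendsto (fun n : ℕ => distortion (g' n)) Filter.atTop (nhds 1)
  N5 : ∃ α : ℝ, α < 1 ∧ ∀ n, 1 ≤ n → ∀ x ∈ Set.Icc (0 : ℝ) 1, |g' n x| < α

/-- The normalized Hausdorff measure `m_n(A) = H_{h_n}(A ∩ J_n)/H_{h_n}(J_n)`. -/
def normMeas (S : NonlinearIFS) (n : ℕ) (A : Set ℝ) : ENNReal :=
  μH[S.h n] (A ∩ limitSet S.g n) / μH[S.h n] (limitSet S.g n)

namespace NonlinearIFS

variable (S : NonlinearIFS)

/-- Letters are positive. -/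
def Good (w : List ℕ) : Prop := ∀ i ∈ w, 1 ≤ i

/-- Monotone or antitone on the unit interval. -/
def MA (F : ℝ → ℝ) : Prop := MonotoneOn F (Icc (0:ℝ) 1) ∨ AntitoneOn F (Icc (0:ℝ) 1)

lemma Good.tail {k : ℕ} {w : List ℕ} (h : Good (k :: w)) : Good w :=
  fun i hi => h i (List.mem_cons_of_mem _ hi)

lemma Good.head {k : ℕ} {w : List ℕ} (h : Good (k :: w)) : 1 ≤ k :=
  h k List.mem_cons_self

lemma Good.append {u w : List ℕ} (h : Good u) (h' : Good w) : Good (u ++ w) := by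
  intro i hi
  rcases List.mem_append.1 hi with hi | hi
  · exact h i hi
  · exact h' i hi

lemma wc_append (g : ℕ → ℝ → ℝ) (u w : List ℕ) (x : ℝ) :
    wordComp g (u ++ w) x = wordComp g u (wordComp g w x) := by
  induction u with
  | nil => rfl
  | cons k u ih => simp only [List.cons_append, wordComp, Function.comp, ih]

lemma b_pos (k : ℕ) : 0 < S.b k := by
  have h1 : S.b (k+1) < S.b k := S.b_anti (Nat.lt_succ_self k)
  have h2 : 0 ≤ S.b (k+1) := S.b_anti.antitone.le_of_tendsto S.b_lim (k+1)
  linarith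

lemma b_le_one (k : ℕ) : S.b k ≤ 1 := by
  rw [← S.b_zero]; exact S.b_anti.antitone (Nat.zero_le k)

lemma b_mem (k : ℕ) : S.b k ∈ Icc (0:ℝ) 1 := ⟨(S.b_pos k).le, S.b_le_one k⟩

lemma g_mem {k : ℕ} (hk : 1 ≤ k) {x : ℝ} (hx : x ∈ Icc (0:ℝ) 1) :
    S.g k x ∈ Icc (S.b k) (S.b (k-1)) := by
  rw [← S.g_image k hk]; exact mem_image_of_mem _ hx

lemma g_maps {k : ℕ} (hk : 1 ≤ k) {x : ℝ} (hx : x ∈ Icc (0:ℝ) 1) :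
    S.g k x ∈ Icc (0:ℝ) 1 := by
  have := S.g_mem hk hx
  exact ⟨(S.b_pos k).le.trans this.1, this.2.trans (S.b_le_one _)⟩

lemma wc_maps {w : List ℕ} (hw : Good w) {x : ℝ} (hx : x ∈ Icc (0:ℝ) 1) :
    wordComp S.g w x ∈ Icc (0:ℝ) 1 := by
  induction w with
  | nil => exact hx
  | cons k w ih => exact S.g_maps hw.head (ih hw.tail)

lemma wc_inj {w : List ℕ} (hw : Good w) : InjOn (wordComp S.g w) (Icc (0:ℝ) 1) := by
  induction w with
  | nil => exact fun x _ y _ h => h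
  | cons k w ih =>
    intro x hx y hy h
    exact ih hw.tail hx hy ((S.g_anti k hw.head).injOn (S.wc_maps hw.tail hx)
      (S.wc_maps hw.tail hy) h)

lemma wc_cont {w : List ℕ} (hw : Good w) : ContinuousOn (wordComp S.g w) (Icc (0:ℝ) 1) := by
  induction w with
  | nil => exact continuousOn_id
  | cons k w ih =>
    refine ContinuousOn.comp (t := Icc (0:ℝ) 1) ?_ (ih hw.tail) (fun x hx => S.wc_maps hw.tail hx)
    exact fun x hx => (S.deriv1 k hw.head x hx).continuousAt.continuousWithinAt

lemma MA.comp_g {F : ℝ → ℝ} (hF : MA F) {k : ℕ} (hk : 1 ≤ k) : MA (F ∘ S.g k) := by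
  have hg := (S.g_anti k hk).antitoneOn
  have hm : MapsTo (S.g k) (Icc (0:ℝ) 1) (Icc 0 1) := fun x hx => S.g_maps hk hx
  rcases hF with hF | hF
  · exact Or.inr (fun x hx y hy hxy => hF (hm hy) (hm hx) (hg hx hy hxy))
  · exact Or.inl (fun x hx y hy hxy => hF (hm hy) (hm hx) (hg hx hy hxy))

lemma MA.comp_wc {F : ℝ → ℝ} (hF : MA F) {w : List ℕ} (hw : Good w) :
    MA (F ∘ wordComp S.g w) := by
  induction w generalizing F with
  | nil => exact hF
  | cons k w ih => exact ih (hF.comp_g S hw.head) hw.tail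

lemma MA_id : MA id := Or.inl (fun _ _ _ _ h => h)

lemma wc_MA {w : List ℕ} (hw : Good w) : MA (wordComp S.g w) := MA_id.comp_wc S hw

lemma MA.uIcc {F : ℝ → ℝ} (hF : MA F) {p q x : ℝ} (hp : p ∈ Icc (0:ℝ) 1) (hq : q ∈ Icc (0:ℝ) 1)
    (hx : x ∈ uIcc p q) : F x ∈ uIcc (F p) (F q) := by
  have hx' : x ∈ Icc (0:ℝ) 1 := (uIcc_subset_Icc hp hq) hx
  rw [mem_uIcc] at hx ⊢
  rcases hF with hF | hF <;> rcases hx with hx | hx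
  · exact Or.inl ⟨hF hp hx' hx.1, hF hx' hq hx.2⟩
  · exact Or.inr ⟨hF hq hx' hx.1, hF hx' hp hx.2⟩
  · exact Or.inr ⟨hF hx' hq hx.2, hF hp hx' hx.1⟩
  · exact Or.inl ⟨hF hx' hp hx.2, hF hq hx' hx.1⟩

/-- contraction -/
lemma exists_contr : ∃ α : ℝ, 0 < α ∧ α < 1 ∧ ∀ w, Good w → ∀ x ∈ Icc (0:ℝ) 1,
    ∀ y ∈ Icc (0:ℝ) 1, |wordComp S.g w y - wordComp S.g w x| ≤ α ^ w.length * |y - x| := by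
  obtain ⟨α, h1, hα⟩ := S.N5
  have h0 : 0 < α := (abs_nonneg _).trans_lt (hα 1 le_rfl 0 (by simp))
  refine ⟨α, h0, h1, ?_⟩
  intro w hw x hx y hy
  induction w with
  | nil => simp [wordComp]
  | cons k w ih =>
    have hk := hw.head
    have := Convex.norm_image_sub_le_of_norm_hasDerivWithin_le (f := S.g k) (f' := S.g' k) (C := α)
      (s := Icc (0:ℝ) 1) (fun z hz => (S.deriv1 k hk z hz).hasDerivWithinAt)
      (fun z hz => (hα k hk z hz).le) (convex_Icc 0 1) (S.wc_maps hw.tail hx)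
      (S.wc_maps hw.tail hy)
    simp only [Real.norm_eq_abs] at this
    simp only [wordComp, Function.comp, List.length_cons, pow_succ]
    calc _ ≤ _ := this
      _ ≤ α * (α ^ w.length * |y - x|) := by gcongr; exact ih hw.tail
      _ = _ := by ring

lemma mvt {k : ℕ} (hk : 1 ≤ k) {p q x y : ℝ} (hp : p ∈ Icc (0:ℝ) 1) (hq : q ∈ Icc (0:ℝ) 1)
    (hx : x ∈ uIcc p q) (hy : y ∈ uIcc p q) :
    ∃ z ∈ uIcc p q, S.g k y - S.g k x = S.g' k z * (y - x) := by
  wlog hxy : x < y generalizing x y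
  · rcases eq_or_lt_of_le (not_lt.1 hxy) with h | h
    · exact ⟨x, hx, by simp [h]⟩
    · obtain ⟨z, hz, h⟩ := this hy hx h
      exact ⟨z, hz, by linarith⟩
  have hsub : Icc x y ⊆ uIcc p q := by
    rw [← uIcc_of_le hxy.le]; exact uIcc_subset_uIcc hx hy
  have hsub' : Icc x y ⊆ Icc 0 1 := hsub.trans (uIcc_subset_Icc hp hq)
  obtain ⟨z, hz, h⟩ := exists_hasDerivAt_eq_slope (S.g k) (S.g' k) hxy
    (fun z hz => (S.deriv1 k hk z (hsub' hz)).continuousAt.continuousWithinAt)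
    (fun z hz => S.deriv1 k hk z (hsub' (Ioo_subset_Icc_self hz)))
  refine ⟨z, hsub (Ioo_subset_Icc_self hz), ?_⟩
  rw [h]; field_simp [sub_ne_zero.2 hxy.ne']

lemma secant_g {c : ℝ} (hc : ∀ n, 1 ≤ n → ∀ x ∈ Set.Icc (0 : ℝ) 1, |S.g'' n x / S.g' n x| < c)
    (hc0 : 0 < c) {k : ℕ} (hk : 1 ≤ k) {p q x y x' y' : ℝ} (hp : p ∈ Icc (0:ℝ) 1)
    (hq : q ∈ Icc (0:ℝ) 1)
    (hx : x ∈ uIcc p q) (hy : y ∈ uIcc p q) (hx' : x' ∈ uIcc p q) (hy' : y' ∈ uIcc p q) :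
    |S.g k y - S.g k x| * |y' - x'| ≤
      Real.exp (c * |p - q|) * (|S.g k y' - S.g k x'| * |y - x|) := by
  obtain ⟨z, hz, h⟩ := S.mvt hk hp hq hx hy
  obtain ⟨z', hz', h'⟩ := S.mvt hk hp hq hx' hy'
  have hs := uIcc_subset_Icc hp hq
  have key := Convex.norm_image_sub_le_of_norm_hasDerivWithin_le (f := fun t => Real.log (S.g' k t))
      (f' := fun t => S.g'' k t / S.g' k t) (C := c)
      (s := Icc (0:ℝ) 1) (fun z hz => ((S.deriv2 k hk z hz).log
        (S.deriv_ne k hk z hz)).hasDerivWithinAt)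
      (fun z hz => (hc k hk z hz).le) (convex_Icc 0 1) (hs hz') (hs hz)
  simp only [Real.norm_eq_abs] at key
  have h1 : |z - z'| ≤ |p - q| := by
    have := abs_sub_le_of_uIcc_subset_uIcc (uIcc_subset_uIcc hz' hz)
    rwa [abs_sub_comm p q]
  have h2 : Real.log (S.g' k z) ≤ c * |p - q| + Real.log (S.g' k z') := by
    have : c * |z - z'| ≤ c * |p - q| := by gcongr
    linarith [(abs_le.1 key).2]
  have h3 := Real.exp_le_exp.2 h2
  rw [Real.exp_add, Real.exp_log_eq_abs (S.deriv_ne k hk z (hs hz)),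
    Real.exp_log_eq_abs (S.deriv_ne k hk z' (hs hz'))] at h3
  rw [h, h', abs_mul, abs_mul]
  calc |S.g' k z| * |y - x| * |y' - x'| ≤
      (Real.exp (c * |p - q|) * |S.g' k z'|) * |y - x| * |y' - x'| := by gcongr
    _ = _ := by ring

/-- distortion -/
lemma exists_secant : ∃ K : ℝ, 0 < K ∧ ∀ w, Good w → ∀ p ∈ Icc (0:ℝ) 1, ∀ q ∈ Icc (0:ℝ) 1,
    ∀ x ∈ uIcc p q, ∀ y ∈ uIcc p q, ∀ x' ∈ uIcc p q, ∀ y' ∈ uIcc p q,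
    |wordComp S.g w y - wordComp S.g w x| * |y' - x'| ≤
      Real.exp (K * |p - q|) * (|wordComp S.g w y' - wordComp S.g w x'| * |y - x|) := by
  obtain ⟨α, h0, h1, hα⟩ := S.exists_contr
  obtain ⟨c, hc0, hc⟩ := S.N3
  have h1' : 0 < 1 - α := by linarith
  have main : ∀ w, Good w → ∀ p ∈ Icc (0:ℝ) 1, ∀ q ∈ Icc (0:ℝ) 1,
    ∀ x ∈ uIcc p q, ∀ y ∈ uIcc p q, ∀ x' ∈ uIcc p q, ∀ y' ∈ uIcc p q,
    |wordComp S.g w y - wordComp S.g w x| * |y' - x'| ≤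
      Real.exp (c / (1 - α) * (1 - α ^ w.length) * |p - q|) *
        (|wordComp S.g w y' - wordComp S.g w x'| * |y - x|) := by
    intro w hw p hp q hq x hx y hy x' hx' y' hy'
    induction w with
    | nil => simp [wordComp, mul_comm]
    | cons k w ih =>
      have hw' := hw.tail
      have ih := ih hw'
      have hu : ∀ z ∈ uIcc p q, wordComp S.g w z ∈ uIcc (wordComp S.g w p) (wordComp S.g w q) :=
        fun z hz => (S.wc_MA hw').uIcc hp hq hz
      have e := S.secant_g hc hc0 hw.head (S.wc_maps hw' hp) (S.wc_maps hw' hq) (hu x hx) (hu y hy)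
        (hu x' hx') (hu y' hy')
      have hs := uIcc_subset_Icc hp hq
      rcases eq_or_ne x' y' with heq | hne
      · subst heq; simp
      have hB : 0 < |wordComp S.g w y' - wordComp S.g w x'| := by
        rw [abs_pos, sub_ne_zero]
        exact fun h => hne ((S.wc_inj hw' (hs hy') (hs hx') h).symm)
      rcases eq_or_ne x y with heq | hne
      · subst heq; simp
      have hA : 0 < |wordComp S.g w y - wordComp S.g w x| := by
        rw [abs_pos, sub_ne_zero]
        exact fun h => hne ((S.wc_inj hw' (hs hy) (hs hx) h).symm)
      have hl := hα w hw' q hq p hp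
      simp only [wordComp, Function.comp, List.length_cons]
      set A := |wordComp S.g w y - wordComp S.g w x|
      set B := |wordComp S.g w y' - wordComp S.g w x'|
      set A1 := |S.g k (wordComp S.g w y) - S.g k (wordComp S.g w x)|
      set B1 := |S.g k (wordComp S.g w y') - S.g k (wordComp S.g w x')|
      set E := Real.exp (c / (1 - α) * (1 - α ^ w.length) * |p - q|)
      have e2 : A1 * B ≤ Real.exp (c * (α ^ w.length * |p - q|)) * (B1 * A) := by
        refine e.trans ?_
        have : 0 ≤ B1 := abs_nonneg _
        gcongr
      have e3 : Real.exp (c / (1 - α) * (1 - α ^ (w.length + 1)) * |p - q|) =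
          E * Real.exp (c * (α ^ w.length * |p - q|)) := by
        rw [← Real.exp_add]; congr 1; field_simp; ring
      rw [e3]
      set E' := Real.exp (c * (α ^ w.length * |p - q|))
      have hB1 : 0 ≤ B1 := abs_nonneg _
      have hE' : 0 ≤ E' := (Real.exp_pos _).le
      have : (A1 * |y' - x'|) * (A * B) ≤ (E * E' * (B1 * |y - x|)) * (A * B) := by
        calc (A1 * |y' - x'|) * (A * B) = (A1 * B) * (A * |y' - x'|) := by ring
          _ ≤ (E' * (B1 * A)) * (E * (B * |y - x|)) := by gcongr
          _ = _ := by ring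
      exact le_of_mul_le_mul_right this (by positivity)
  refine ⟨c / (1 - α), by positivity, ?_⟩
  intro w hw p hp q hq x hx y hy x' hx' y' hy'
  refine (main w hw p hp q hq x hx y hy x' hx' y' hy').trans ?_
  gcongr ?_ * _
  rw [Real.exp_le_exp]
  have : 0 < α ^ w.length := by positivity
  have h5 : 0 < c / (1 - α) := by positivity
  gcongr
  nlinarith

/-- Words of length `l` with letters in `1..n`. -/
def W (n : ℕ) : ℕ → Finset (List ℕ)
  | 0 => {[]}
  | l + 1 => (Finset.range n ×ˢ W n l).image (fun p => (p.1 + 1) :: p.2)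

lemma mem_W {n l : ℕ} {w : List ℕ} :
    w ∈ W n l ↔ w.length = l ∧ ∀ i ∈ w, 1 ≤ i ∧ i ≤ n := by
  induction l generalizing w with
  | zero =>
    simp only [W, Finset.mem_singleton, List.length_eq_zero_iff]
    constructor
    · rintro rfl; simp
    · exact fun h => h.1
  | succ l ih =>
    simp only [W, Finset.mem_image, Finset.mem_product, Finset.mem_range, Prod.exists]
    constructor
    · rintro ⟨k, u, ⟨hk, hu⟩, rfl⟩
      have := ih.1 hu
      refine ⟨by simp [this.1], ?_⟩
      intro i hi
      rcases List.mem_cons.1 hi with rfl | hi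
      · omega
      · exact this.2 i hi
    · rintro ⟨hl, hw⟩
      cases w with
      | nil => simp at hl
      | cons k u =>
        have hk := hw k List.mem_cons_self
        refine ⟨k - 1, u, ⟨by omega, ih.2 ⟨by simpa using hl,
          fun i hi => hw i (List.mem_cons_of_mem _ hi)⟩⟩, ?_⟩
        congr 1; omega

lemma W_good {n l : ℕ} {w : List ℕ} (h : w ∈ W n l) : Good w := fun i hi => ((mem_W.1 h).2 i hi).1

lemma sum_W (n l : ℕ) (f : List ℕ → ℝ) :
    ∑ u ∈ W n (l+1), f u = ∑ k ∈ Finset.range n, ∑ u ∈ W n l, f ((k+1) :: u) := by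
  rw [W, Finset.sum_image, Finset.sum_product]
  rintro ⟨a, u⟩ _ ⟨a', u'⟩ _ h
  simp only [List.cons.injEq, Nat.add_right_cancel_iff] at h
  exact Prod.ext h.1 h.2

lemma card_W (n l : ℕ) : (W n l).card = n ^ l := by
  induction l with
  | zero => simp [W]
  | succ l ih =>
    rw [W, Finset.card_image_of_injOn, Finset.card_product, ih, Finset.card_range, pow_succ,
      mul_comm]
    rintro ⟨a, u⟩ _ ⟨a', u'⟩ _ h
    simp only [List.cons.injEq, Nat.add_right_cancel_iff] at h
    exact Prod.ext h.1 h.2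

lemma telescope {F : ℝ → ℝ} (hF : MA F) (n : ℕ) :
    ∑ k ∈ Finset.range n, |F (S.b (k+1)) - F (S.b k)| = |F 1 - F (S.b n)| := by
  have main : ∀ F : ℝ → ℝ, MonotoneOn F (Icc (0:ℝ) 1) →
      ∑ k ∈ Finset.range n, |F (S.b (k+1)) - F (S.b k)| = |F 1 - F (S.b n)| := by
    intro F hF
    have h1 : ∀ k ∈ Finset.range n, |F (S.b (k+1)) - F (S.b k)| = F (S.b k) - F (S.b (k+1)) := by
      intro k _
      rw [abs_of_nonpos]
      · ring
      · exact sub_nonpos.2 (hF (S.b_mem _) (S.b_mem _) (S.b_anti.antitone (Nat.le_succ k)))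
    rw [Finset.sum_congr rfl h1, Finset.sum_range_sub' (fun k => F (S.b k)), S.b_zero, abs_of_nonneg]
    exact sub_nonneg.2 (hF (S.b_mem _) (by simp) (S.b_le_one n))
  rcases hF with hF | hF
  · exact main F hF
  · have := main (fun x => - F x) hF.neg
    simp only [neg_sub_neg] at this
    simpa only [abs_sub_comm] using this

lemma MA.abs_le {F : ℝ → ℝ} (hF : MA F) {x : ℝ} (hx : x ∈ Icc (0:ℝ) 1) :
    |F 1 - F x| ≤ |F 1 - F 0| := by
  have := hF.uIcc (p := 0) (q := 1) (x := x) (by simp) (by simp) (by simpa using hx)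
  exact abs_sub_right_of_mem_uIcc this

lemma sum_words {F : ℝ → ℝ} (hF : MA F) (n l : ℕ) :
    ∑ u ∈ W n l, |F (wordComp S.g u 1) - F (wordComp S.g u 0)| ≤ |F 1 - F 0| := by
  induction l generalizing F with
  | zero => simp [W, wordComp]
  | succ l ih =>
    rw [sum_W]
    calc _ ≤ ∑ k ∈ Finset.range n, |F (S.b (k+1)) - F (S.b k)| := by
          refine Finset.sum_le_sum fun k _ => ?_
          have := ih (hF.comp_g S (Nat.le_add_left 1 k))
          simpa only [wordComp, Function.comp, S.g_zero (k+1) (Nat.le_add_left 1 k),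
            S.g_one (k+1) (Nat.le_add_left 1 k), Nat.add_sub_cancel] using this
      _ = _ := S.telescope hF n
      _ ≤ _ := hF.abs_le (S.b_mem n)

/-- Word over `1..n`. -/
def Wd (n : ℕ) (w : List ℕ) : Prop := ∀ i ∈ w, 1 ≤ i ∧ i ≤ n

lemma Wd.good {n : ℕ} {w : List ℕ} (h : Wd n w) : Good w := fun i hi => (h i hi).1

lemma Wd.append {n : ℕ} {u w : List ℕ} (h : Wd n u) (h' : Wd n w) : Wd n (u ++ w) := by
  intro i hi
  rcases List.mem_append.1 hi with hi | hi
  · exact h i hi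
  · exact h' i hi

lemma Wd_nil (n : ℕ) : Wd n [] := by intro i hi; simp at hi

lemma Wd_single {n k : ℕ} (hk : k ∈ Finset.range n) : Wd n [k+1] := by
  intro i hi
  have := Finset.mem_range.1 hk
  simp only [List.mem_singleton] at hi
  omega

lemma W_Wd {n l : ℕ} {w : List ℕ} (h : w ∈ W n l) : Wd n w := (mem_W.1 h).2

lemma mem_J {n : ℕ} {x : ℝ} : x ∈ limitSet S.g n ↔
    ∀ l, ∃ w ∈ W n (l+1), x ∈ wordComp S.g w '' Icc (0:ℝ) 1 := by
  simp only [limitSet, mem_iInter, mem_iUnion, mem_ofPred_eq, exists_prop, mem_W]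

lemma J_sub (n : ℕ) : limitSet S.g n ⊆ Icc (0:ℝ) 1 := by
  intro x hx
  obtain ⟨w, hw, y, hy, rfl⟩ := S.mem_J.1 hx 0
  exact S.wc_maps (W_good hw) hy

lemma J_compact (n : ℕ) : IsCompact (limitSet S.g n) := by
  have : IsClosed (limitSet S.g n) := by
    have : limitSet S.g n = ⋂ l : ℕ, ⋃ w ∈ W n (l+1), wordComp S.g w '' Icc (0:ℝ) 1 := by
      ext x
      rw [S.mem_J]; simp
    rw [this]
    refine isClosed_iInter fun l => ?_
    refine isClosed_biUnion_finset fun w hw => ?_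
    exact (isCompact_Icc.image_of_continuousOn (S.wc_cont (W_good hw))).isClosed
  exact isCompact_Icc.of_isClosed_subset this (S.J_sub n)

lemma gJ_sub {n k : ℕ} (hk : k ∈ Finset.range n) {y : ℝ} (hy : y ∈ limitSet S.g n) :
    S.g (k+1) y ∈ limitSet S.g n := by
  rw [S.mem_J]
  intro l
  cases l with
  | zero =>
    refine ⟨[k+1], mem_W.2 ⟨rfl, Wd_single hk⟩, y, S.J_sub n hy, rfl⟩
  | succ l =>
    obtain ⟨w, hw, z, hz, rfl⟩ := S.mem_J.1 hy l
    exact ⟨[k+1] ++ w, mem_W.2 ⟨by simp [(mem_W.1 hw).1],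
      (Wd_single hk).append (W_Wd hw)⟩, z, hz, rfl⟩

lemma wcJ_sub {n : ℕ} {w : List ℕ} (hw : Wd n w) {y : ℝ} (hy : y ∈ limitSet S.g n) :
    wordComp S.g w y ∈ limitSet S.g n := by
  induction w with
  | nil => exact hy
  | cons k w ih =>
    have hk := hw k List.mem_cons_self
    have := S.gJ_sub (n := n) (k := k - 1) (by simp; omega)
      (ih (fun i hi => hw i (List.mem_cons_of_mem _ hi)))
    rwa [Nat.sub_add_cancel hk.1] at this

lemma J_decomp {n : ℕ} {x : ℝ} (hx : x ∈ limitSet S.g n) :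
    ∃ k ∈ Finset.range n, ∃ y ∈ limitSet S.g n, S.g (k+1) y = x := by
  rw [S.mem_J] at hx
  have h1 : ∀ l, ∃ k : Fin n, ∃ u ∈ W n l, x ∈ S.g (k+1) '' (wordComp S.g u '' Icc (0:ℝ) 1) := by
    intro l
    obtain ⟨w, hw, y, hy, rfl⟩ := hx l
    simp only [W, Finset.mem_image, Finset.mem_product, Finset.mem_range, Prod.exists] at hw
    obtain ⟨k, u, ⟨hk, hu⟩, rfl⟩ := hw
    exact ⟨⟨k, hk⟩, u, hu, _, ⟨y, hy, rfl⟩, rfl⟩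
  choose k u hu hxu using h1
  obtain ⟨k0, hk0⟩ := Finite.exists_infinite_fiber k
  have hinf : (k ⁻¹' {k0}).Infinite := Set.infinite_coe_iff.1 hk0
  have h1k : 1 ≤ (k0 : ℕ) + 1 := Nat.le_add_left 1 _
  obtain ⟨l0, hl0, -⟩ := hinf.exists_gt 0
  obtain ⟨y, ⟨z0, hz0, hz0y⟩, hy⟩ := hxu l0
  have hk00 : k l0 = k0 := hl0
  rw [hk00] at hy
  have hyI : y ∈ Icc (0:ℝ) 1 := by rw [← hz0y]; exact S.wc_maps (W_good (hu l0)) hz0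
  refine ⟨k0, Finset.mem_range.2 k0.2, y, ?_, hy⟩
  rw [S.mem_J]
  intro l
  obtain ⟨l', hl', hll⟩ := hinf.exists_gt l
  have hk' : k l' = k0 := hl'
  obtain ⟨y', ⟨z, hz, hzy⟩, hy'⟩ := hxu l'
  rw [hk'] at hy'
  have hyI' : y' ∈ Icc (0:ℝ) 1 := by rw [← hzy]; exact S.wc_maps (W_good (hu l')) hz
  have heq : y' = y := (S.g_anti _ h1k).injOn hyI' hyI (hy'.trans hy.symm)
  subst heq
  have hm := mem_W.1 (hu l')
  refine ⟨(u l').take (l+1), mem_W.2 ⟨?_, fun i hi => hm.2 i (List.mem_of_mem_take hi)⟩,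
    wordComp S.g ((u l').drop (l+1)) z, S.wc_maps (fun i hi => (hm.2 i (List.mem_of_mem_drop hi)).1) hz, ?_⟩
  · rw [List.length_take, hm.1]; omega
  · rw [← wc_append, List.take_append_drop, hzy]

lemma J_decomp_words {n : ℕ} (l : ℕ) {x : ℝ} (hx : x ∈ limitSet S.g n) :
    ∃ u ∈ W n l, ∃ y ∈ limitSet S.g n, wordComp S.g u y = x := by
  induction l generalizing x with
  | zero => exact ⟨[], by simp [W], x, hx, rfl⟩
  | succ l ih =>
    obtain ⟨k, hk, y, hy, rfl⟩ := S.J_decomp hx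
    obtain ⟨u, hu, z, hz, rfl⟩ := ih hy
    refine ⟨(k+1) :: u, ?_, z, hz, rfl⟩
    simp only [W, Finset.mem_image, Finset.mem_product]
    exact ⟨(k, u), ⟨hk, hu⟩, rfl⟩

/-- Conformal measure package. -/
structure Conf (n : ℕ) (ν : Measure ℝ) : Prop where
  prob : IsProbabilityMeasure ν
  hpos : 0 < S.h n
  hle : S.h n ≤ 1
  atoms : ∀ x, ν {x} = 0
  full : ν.real (limitSet S.g n) = 1
  lip : ∀ w, Wd n w → ∀ A ⊆ limitSet S.g n, ∀ C : NNReal, LipschitzOnWith C (wordComp S.g w) A →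
    ν.real (wordComp S.g w '' A) ≤ (C:ℝ) ^ S.h n * ν.real A

lemma h_le_one {n : ℕ} (hn : 1 ≤ n) : S.h n ≤ 1 := by
  have h1 : dimH (limitSet S.g n) ≤ 1 := by
    rw [← Real.dimH_univ]; exact dimH_mono (subset_univ _)
  rw [S.h_dim n hn] at h1
  exact ENNReal.ofReal_le_one.1 h1

lemma exists_conf {n : ℕ} (hn : 1 ≤ n) (hh : 0 < S.h n)
    (h0 : μH[S.h n] (limitSet S.g n) ≠ 0) (htop : μH[S.h n] (limitSet S.g n) ≠ ⊤) :
    ∃ ν : Measure ℝ, S.Conf n ν ∧ ∀ A, normMeas S n A = ν A := by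
  set M := μH[S.h n] (limitSet S.g n) with hM
  have hJ : MeasurableSet (limitSet S.g n) := (S.J_compact n).measurableSet
  have hap : ∀ A : Set ℝ, (M⁻¹ • (μH[S.h n] : Measure ℝ).restrict (limitSet S.g n)) A
      = M⁻¹ * μH[S.h n] (A ∩ limitSet S.g n) := by
    intro A
    rw [Measure.smul_apply, Measure.restrict_apply' hJ, smul_eq_mul]
  have hsub : ∀ A : Set ℝ, A ⊆ limitSet S.g n →
      (M⁻¹ • (μH[S.h n] : Measure ℝ).restrict (limitSet S.g n)) A
      = M⁻¹ * μH[S.h n] A := by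
    intro A hA
    rw [hap, inter_eq_left.2 hA]
  have hJ1 : (M⁻¹ • (μH[S.h n] : Measure ℝ).restrict (limitSet S.g n)) (limitSet S.g n) = 1 := by
    rw [hsub _ subset_rfl, ← hM, ENNReal.inv_mul_cancel h0 htop]
  have hprob : IsProbabilityMeasure (M⁻¹ • (μH[S.h n] : Measure ℝ).restrict (limitSet S.g n)) := by
    constructor
    rw [hap, univ_inter, ← hM, ENNReal.inv_mul_cancel h0 htop]
  refine ⟨M⁻¹ • (μH[S.h n] : Measure ℝ).restrict (limitSet S.g n), ⟨hprob, hh, S.h_le_one hn,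
    ?_, ?_, ?_⟩, ?_⟩
  · intro x
    have := Measure.nullSingletonClass_hausdorff ℝ hh
    rw [hap]
    have : μH[S.h n] ({x} ∩ limitSet S.g n) = 0 :=
      measure_mono_null inter_subset_left (measure_singleton x)
    rw [this, mul_zero]
  · rw [measureReal_def, hJ1]; rfl
  · intro w hw A hA C hC
    have hA' : wordComp S.g w '' A ⊆ limitSet S.g n := by
      rintro _ ⟨x, hx, rfl⟩; exact S.wcJ_sub hw (hA hx)
    have h1 := hC.hausdorffMeasure_image_le hh.le
    have h2 : (M⁻¹ • (μH[S.h n] : Measure ℝ).restrict (limitSet S.g n)) (wordComp S.g w '' A) ≤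
        (C : ENNReal) ^ S.h n *
          (M⁻¹ • (μH[S.h n] : Measure ℝ).restrict (limitSet S.g n)) A := by
      rw [hsub _ hA', hsub _ hA]
      calc _ ≤ M⁻¹ * ((C : ENNReal) ^ S.h n * μH[S.h n] A) := by gcongr
        _ = _ := by ring
    rw [measureReal_def, measureReal_def]
    have h3 := ENNReal.toReal_mono (ENNReal.mul_ne_top
      (ENNReal.rpow_ne_top_of_nonneg hh.le ENNReal.coe_ne_top) (measure_ne_top _ _)) h2
    rw [ENNReal.toReal_mul, ← ENNReal.toReal_rpow, ENNReal.coe_toReal] at h3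
    exact h3
  · intro A
    rw [hap, normMeas, ENNReal.div_eq_inv_mul]

/-- Length of the cylinder. -/
def d (w : List ℕ) : ℝ := |wordComp S.g w 1 - wordComp S.g w 0|

lemma d_pos {w : List ℕ} (hw : Good w) : 0 < S.d w := by
  rw [d, abs_pos, sub_ne_zero]
  exact fun h => one_ne_zero (S.wc_inj hw (by simp) (by simp) h)

lemma d_nil : S.d [] = 1 := by simp [d, wordComp]

lemma d_le_one {w : List ℕ} (hw : Good w) : S.d w ≤ 1 := by
  have h1 := S.wc_maps hw (x := 1) (by simp)
  have h0 := S.wc_maps hw (x := 0) (by simp)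
  rw [d, abs_le]; constructor <;> linarith [h1.1, h1.2, h0.1, h0.2]

lemma sum_d {w : List ℕ} (hw : Good w) (n l : ℕ) : ∑ u ∈ W n l, S.d (w ++ u) ≤ S.d w := by
  have := S.sum_words (S.wc_MA hw) n l
  simpa only [d, wc_append] using this

/-- Weight of the cylinder. -/
def pw (n : ℕ) (ν : Measure ℝ) (w : List ℕ) : ℝ := ν.real (wordComp S.g w '' limitSet S.g n)

lemma pw_nonneg (n : ℕ) (ν : Measure ℝ) (w : List ℕ) : 0 ≤ S.pw n ν w := measureReal_nonneg

lemma pw_nil {n : ℕ} {ν : Measure ℝ} (hν : S.Conf n ν) : S.pw n ν [] = 1 := by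
  rw [pw]; simp [wordComp, hν.full]

lemma pw_split {n : ℕ} {ν : Measure ℝ} (hν : S.Conf n ν) {w : List ℕ} (hw : Wd n w) :
    S.pw n ν w = ∑ k ∈ Finset.range n, S.pw n ν (w ++ [k+1]) := by
  have := hν.prob
  have hU : wordComp S.g w '' limitSet S.g n =
      ⋃ k ∈ Finset.range n, wordComp S.g (w ++ [k+1]) '' limitSet S.g n := by
    ext x
    simp only [mem_iUnion, exists_prop]
    constructor
    · rintro ⟨y, hy, rfl⟩
      obtain ⟨k, hk, z, hz, rfl⟩ := S.J_decomp hy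
      exact ⟨k, hk, z, hz, by rw [wc_append]; rfl⟩
    · rintro ⟨k, hk, z, hz, rfl⟩
      exact ⟨S.g (k+1) z, S.gJ_sub hk hz, by rw [wc_append]; rfl⟩
  have hdis : ∀ j k : ℕ, j < k → AEDisjoint ν (wordComp S.g (w ++ [j+1]) '' limitSet S.g n)
      (wordComp S.g (w ++ [k+1]) '' limitSet S.g n) := by
    intro j k hjk
    refine measure_mono_null (t := {wordComp S.g w (S.b k)}) ?_ (hν.atoms _)
    rintro _ ⟨⟨y, hy, rfl⟩, ⟨z, hz, hzy⟩⟩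
    rw [wc_append, wc_append] at hzy
    have hy := S.J_sub n hy
    have hz := S.J_sub n hz
    have e1 := S.g_mem (Nat.le_add_left 1 j) hy
    have e2 := S.g_mem (Nat.le_add_left 1 k) hz
    have e3 := S.wc_inj hw.good (S.g_maps (Nat.le_add_left 1 k) hz)
      (S.g_maps (Nat.le_add_left 1 j) hy) hzy
    have e4 : S.b k ≤ S.b (j+1) := S.b_anti.antitone hjk
    rw [e3] at e2
    simp only [Nat.add_sub_cancel] at e2
    have e5 : S.g (j+1) y = S.b k := le_antisymm e2.2 (e4.trans e1.1)
    rw [mem_singleton_iff, wc_append, ← e5]; rfl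
  rw [pw, hU, measureReal_biUnion_finset₀]
  · rfl
  · intro j _ k _ hjk
    rcases lt_or_gt_of_ne hjk with h | h
    · exact hdis j k h
    · exact (hdis k j h).symm
  · intro k hk
    exact ((S.J_compact n).image_of_continuousOn ((S.wc_cont
      (hw.append (Wd_single hk)).good).mono (S.J_sub n))).measurableSet.nullMeasurableSet

lemma pw_sum {n : ℕ} {ν : Measure ℝ} (hν : S.Conf n ν) {w : List ℕ} (hw : Wd n w) (l : ℕ) :
    ∑ u ∈ W n l, S.pw n ν (w ++ u) = S.pw n ν w := by
  induction l generalizing w with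
  | zero => simp [W]
  | succ l ih =>
    rw [sum_W, S.pw_split hν hw]
    refine Finset.sum_congr rfl fun k hk => ?_
    rw [← ih (hw.append (Wd_single hk))]
    simp

/-- Constants. -/
structure Consts (α K : ℝ) : Prop where
  α0 : 0 < α
  α1 : α < 1
  contr : ∀ w, Good w → ∀ x ∈ Icc (0:ℝ) 1,
    ∀ y ∈ Icc (0:ℝ) 1, |wordComp S.g w y - wordComp S.g w x| ≤ α ^ w.length * |y - x|
  K0 : 0 < K
  sec : ∀ w, Good w → ∀ p ∈ Icc (0:ℝ) 1, ∀ q ∈ Icc (0:ℝ) 1,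
    ∀ x ∈ uIcc p q, ∀ y ∈ uIcc p q, ∀ x' ∈ uIcc p q, ∀ y' ∈ uIcc p q,
    |wordComp S.g w y - wordComp S.g w x| * |y' - x'| ≤
      Real.exp (K * |p - q|) * (|wordComp S.g w y' - wordComp S.g w x'| * |y - x|)

lemma exists_consts : ∃ α K, S.Consts α K := by
  obtain ⟨α, h1, h2, h3⟩ := S.exists_contr
  obtain ⟨K, h4, h5⟩ := S.exists_secant
  exact ⟨α, K, h1, h2, h3, h4, h5⟩

variable {S}

lemma Consts.sec1 {α K : ℝ} (hC : S.Consts α K) {w : List ℕ} (hw : Good w) {x y x' y' : ℝ}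
    (hx : x ∈ Icc (0:ℝ) 1) (hy : y ∈ Icc (0:ℝ) 1) (hx' : x' ∈ Icc (0:ℝ) 1)
    (hy' : y' ∈ Icc (0:ℝ) 1) :
    |wordComp S.g w y - wordComp S.g w x| * |y' - x'| ≤
      Real.exp K * (|wordComp S.g w y' - wordComp S.g w x'| * |y - x|) := by
  have := hC.sec w hw 0 (by simp) 1 (by simp) x (by simpa using hx) y (by simpa using hy)
    x' (by simpa using hx') y' (by simpa using hy')
  simpa using this

lemma Consts.d_le {α K : ℝ} (hC : S.Consts α K) {w : List ℕ} (hw : Good w) :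
    S.d w ≤ α ^ w.length := by
  have := hC.contr w hw 0 (by simp) 1 (by simp)
  simpa [d] using this

/-- `d w * d v ≤ D d (w v)`. -/
lemma Consts.d_mul {α K : ℝ} (hC : S.Consts α K) {w v : List ℕ} (hw : Good w) (hv : Good v) :
    S.d w * S.d v ≤ Real.exp K * S.d (w ++ v) := by
  have := hC.sec1 hw (x := 0) (y := 1) (by simp) (by simp) (S.wc_maps hv (x := 0) (by simp))
    (S.wc_maps hv (x := 1) (by simp))
  simpa [d, wc_append] using this

lemma Consts.pw_dist {α K : ℝ} (hC : S.Consts α K) {n : ℕ} {ν : Measure ℝ} (hν : S.Conf n ν)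
    {w v : List ℕ} (hw : Wd n w) (hv : Wd n v) :
    S.pw n ν (w ++ v) * S.d v ^ S.h n ≤
      Real.exp (K * α ^ v.length) * (S.d (w ++ v) ^ S.h n * S.pw n ν v) := by
  have hdv := S.d_pos hv.good
  have hdwv := S.d_pos (hw.append hv).good
  have hv0 := S.wc_maps hv.good (x := 0) (by simp)
  have hv1 := S.wc_maps hv.good (x := 1) (by simp)
  set E := Real.exp (K * α ^ v.length) with hE
  have hE0 : 0 < E := Real.exp_pos _
  have hE1 : 1 ≤ E := by
    rw [hE, Real.one_le_exp_iff]
    exact mul_nonneg hC.K0.le (pow_nonneg hC.α0.le _)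
  have hL : LipschitzOnWith (E * S.d (w ++ v) / S.d v).toNNReal (wordComp S.g w)
      (wordComp S.g v '' limitSet S.g n) := by
    refine LipschitzOnWith.of_dist_le_mul ?_
    rintro _ ⟨x, hx, rfl⟩ _ ⟨y, hy, rfl⟩
    rw [Real.coe_toNNReal _ (by positivity), Real.dist_eq, Real.dist_eq]
    have hx := S.J_sub n hx
    have hy := S.J_sub n hy
    have hu : ∀ z ∈ Icc (0:ℝ) 1, wordComp S.g v z ∈ uIcc (wordComp S.g v 0) (wordComp S.g v 1) :=
      fun z hz => (S.wc_MA hv.good).uIcc (by simp) (by simp) (by simpa using hz)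
    have := hC.sec w hw.good _ hv0 _ hv1 _ (hu y hy) _ (hu x hx) _ (hu 0 (by simp)) _
      (hu 1 (by simp))
    rw [abs_sub_comm (wordComp S.g v 0)] at this
    change _ * S.d v ≤ Real.exp (K * S.d v) * _ at this
    have h2 : Real.exp (K * S.d v) ≤ E := by
      rw [hE, Real.exp_le_exp]
      exact mul_le_mul_of_nonneg_left (hC.d_le hv.good) hC.K0.le
    rw [div_mul_eq_mul_div, le_div_iff₀ hdv]
    refine this.trans ?_
    rw [← wc_append, ← wc_append]
    change _ * (S.d (w ++ v) * _) ≤ _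
    rw [mul_assoc]
    gcongr
  have hAs : wordComp S.g v '' limitSet S.g n ⊆ limitSet S.g n := by
    rintro _ ⟨x, hx, rfl⟩; exact S.wcJ_sub hv hx
  have h1 := hν.lip w hw _ hAs _ hL
  rw [Real.coe_toNNReal _ (by positivity)] at h1
  have e1 : wordComp S.g w '' (wordComp S.g v '' limitSet S.g n) =
      wordComp S.g (w ++ v) '' limitSet S.g n := by
    rw [image_image]; simp only [wc_append]
  rw [e1] at h1
  change S.pw n ν (w ++ v) ≤ _ * S.pw n ν v at h1
  rw [Real.div_rpow (by positivity) hdv.le, Real.mul_rpow hE0.le hdwv.le] at h1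
  have h3 : E ^ S.h n ≤ E := by
    conv_rhs => rw [← Real.rpow_one E]
    exact Real.rpow_le_rpow_of_exponent_le hE1 hν.hle
  have hp := S.pw_nonneg n ν v
  calc S.pw n ν (w ++ v) * S.d v ^ S.h n
      ≤ (E ^ S.h n * S.d (w ++ v) ^ S.h n / S.d v ^ S.h n * S.pw n ν v) * S.d v ^ S.h n := by
        gcongr
    _ = E ^ S.h n * (S.d (w ++ v) ^ S.h n * S.pw n ν v) := by
        have : S.d v ^ S.h n ≠ 0 := (Real.rpow_pos_of_pos hdv _).ne'
        field_simp
    _ ≤ _ := by gcongr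

lemma sum_rpow {ι : Type*} (s : Finset ι) (f : ι → ℝ) (hf : ∀ i ∈ s, 0 ≤ f i) {h : ℝ}
    (h0 : 0 < h) (h1 : h ≤ 1) {m : ℝ} (hm : (s.card : ℝ) ≤ m) :
    ∑ i ∈ s, f i ^ h ≤ m ^ (1 - h) * (∑ i ∈ s, f i) ^ h := by
  have hp : 1 ≤ 1 / h := by rw [le_div_iff₀ h0]; linarith
  have key := Real.rpow_sum_le_const_mul_sum_rpow_of_nonneg s (f := fun i => f i ^ h) hp
    (fun i hi => Real.rpow_nonneg (hf i hi) h)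
  have e : ∀ i ∈ s, (f i ^ h) ^ (1 / h) = f i := by
    intro i hi
    rw [← Real.rpow_mul (hf i hi), mul_one_div_cancel h0.ne', Real.rpow_one]
  rw [Finset.sum_congr rfl e] at key
  have hA : 0 ≤ ∑ i ∈ s, f i ^ h := Finset.sum_nonneg fun i hi => Real.rpow_nonneg (hf i hi) h
  have hB : 0 ≤ ∑ i ∈ s, f i := Finset.sum_nonneg hf
  have hc : (0:ℝ) ≤ s.card := Nat.cast_nonneg _
  have k2 := Real.rpow_le_rpow (Real.rpow_nonneg hA _) key h0.le
  rw [← Real.rpow_mul hA, one_div_mul_cancel h0.ne', Real.rpow_one,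
    Real.mul_rpow (Real.rpow_nonneg hc _) hB, ← Real.rpow_mul hc] at k2
  have e2 : (1 / h - 1) * h = 1 - h := by field_simp
  rw [e2] at k2
  refine k2.trans ?_
  have : 0 ≤ 1 - h := by linarith
  gcongr

variable (S) in
/-- The counting factor. -/
def T (n l : ℕ) : ℝ := ((n:ℝ) ^ l) ^ (1 - S.h n)

variable (S) in
lemma T_tendsto (l : ℕ) : Tendsto (fun n => S.T n l) atTop (𝓝 1) := by
  have h1 : Tendsto (fun n : ℕ => Real.exp (l * ((1 - S.h n) * Real.log n))) atTop (𝓝 1) := by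
    have := (Real.continuous_exp.tendsto _).comp (S.N1.const_mul (l:ℝ))
    simpa [Function.comp_def] using this
  refine h1.congr' ?_
  filter_upwards [eventually_ge_atTop 1] with n hn
  have hn' : (0:ℝ) < n := by exact_mod_cast hn
  rw [T, Real.rpow_def_of_pos (by positivity), Real.log_pow]
  congr 1; ring

lemma T_ge_one {n : ℕ} (hn : 1 ≤ n) (l : ℕ) : 1 ≤ S.T n l := by
  refine Real.one_le_rpow (one_le_pow₀ (by exact_mod_cast hn)) ?_
  linarith [S.h_le_one hn]

lemma Consts.sum_lower {α K : ℝ} (hC : S.Consts α K) {w : List ℕ} (hw : Good w) {N : ℕ}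
    (hN : Real.exp K * S.b N ≤ 1) (l : ℕ) :
    (1 - Real.exp K * S.b N) ^ l * S.d w ≤ ∑ v ∈ W N l, S.d (w ++ v) := by
  induction l generalizing w with
  | zero => simp [W]
  | succ l ih =>
    rw [sum_W]
    have h0 : 0 ≤ 1 - Real.exp K * S.b N := by linarith
    have h1 : (1 - Real.exp K * S.b N) * S.d w ≤ ∑ k ∈ Finset.range N, S.d (w ++ [k+1]) := by
      have e1 := S.telescope (S.wc_MA hw) N
      have e2 : ∑ k ∈ Finset.range N, S.d (w ++ [k+1]) =
          |wordComp S.g w 1 - wordComp S.g w (S.b N)| := by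
        rw [← e1]
        refine Finset.sum_congr rfl fun k _ => ?_
        simp only [d, wc_append, wordComp, Function.comp, id, S.g_zero (k+1) (Nat.le_add_left 1 k),
            S.g_one (k+1) (Nat.le_add_left 1 k), Nat.add_sub_cancel]
      rw [e2]
      have e3 := hC.sec1 hw (x := 0) (y := S.b N) (x' := 0) (y' := 1) (by simp) (S.b_mem N)
        (by simp) (by simp)
      simp only [sub_zero, abs_one, mul_one, abs_of_pos (S.b_pos N)] at e3
      change _ ≤ _ * (S.d w * _) at e3
      have e4 : S.d w ≤ |wordComp S.g w 1 - wordComp S.g w (S.b N)| +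
        |wordComp S.g w (S.b N) - wordComp S.g w 0| := abs_sub_le _ _ _
      nlinarith
    calc _ = (1 - Real.exp K * S.b N) ^ l * ((1 - Real.exp K * S.b N) * S.d w) := by ring
      _ ≤ (1 - Real.exp K * S.b N) ^ l * ∑ k ∈ Finset.range N, S.d (w ++ [k+1]) := by gcongr
      _ = ∑ k ∈ Finset.range N, (1 - Real.exp K * S.b N) ^ l * S.d (w ++ [k+1]) :=
        Finset.mul_sum _ _ _
      _ ≤ _ := by
        refine Finset.sum_le_sum fun k hk => ?_
        have := ih (hw.append (Wd_single hk).good)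
        simpa using this

lemma W_mono {N n : ℕ} (h : N ≤ n) (l : ℕ) : W N l ⊆ W n l := by
  intro w hw
  rw [mem_W] at hw ⊢
  exact ⟨hw.1, fun i hi => ⟨(hw.2 i hi).1, (hw.2 i hi).2.trans h⟩⟩

lemma Consts.key_n {α K : ℝ} (hC : S.Consts α K) {n : ℕ} {ν : Measure ℝ} (hν : S.Conf n ν)
    {N : ℕ} (hN : 1 ≤ N) (hNn : N ≤ n) (l : ℕ) :
    ∃ L : ℝ, 1 ≤ L ∧ (∀ w, Wd n w → S.pw n ν w ≤ L * S.d w ^ S.h n) ∧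
      L * (∑ v ∈ W N l, S.d v - N ^ l * (S.T n l - 1) * Real.exp K) ≤
        Real.exp (K * α ^ l) := by
  set D := Real.exp K with hD
  have hD0 : 0 < D := Real.exp_pos K
  have hD1 : 1 ≤ D := by rw [hD, Real.one_le_exp_iff]; exact hC.K0.le
  set R : Set ℝ := {r | ∃ w, Wd n w ∧ r = S.pw n ν w / S.d w ^ S.h n} with hR
  have hdp : ∀ w, Wd n w → 0 < S.d w ^ S.h n := fun w hw =>
    Real.rpow_pos_of_pos (S.d_pos hw.good) _
  have hbdd : BddAbove R := by
    refine ⟨D, ?_⟩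
    rintro _ ⟨w, hw, rfl⟩
    have := hC.pw_dist hν hw (Wd_nil n)
    simp only [List.append_nil, S.d_nil, S.pw_nil hν, Real.one_rpow, mul_one, List.length_nil,
      pow_zero] at this
    rwa [div_le_iff₀ (hdp w hw)]
  have h1R : (1:ℝ) ∈ R := ⟨[], Wd_nil n, by simp [S.pw_nil hν, S.d_nil]⟩
  set L := sSup R with hL
  have hL1 : 1 ≤ L := le_csSup hbdd h1R
  have hLw : ∀ w, Wd n w → S.pw n ν w ≤ L * S.d w ^ S.h n := by
    intro w hw
    rw [← div_le_iff₀ (hdp w hw)]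
    exact le_csSup hbdd ⟨w, hw, rfl⟩
  refine ⟨L, hL1, hLw, ?_⟩
  have hT1 : 1 ≤ S.T n l := T_ge_one (hN.trans hNn) l
  set E := Real.exp (K * α ^ l) with hE
  have hE0 : 0 < E := Real.exp_pos _
  have main : ∀ r ∈ R, ∑ v ∈ W N l, (L * S.d v - (L * S.T n l - r) * D) ≤ E := by
    intro r hr
    have hrL : r ≤ L := le_csSup hbdd hr
    obtain ⟨w, hw, hr⟩ := hr
    have hr' : S.pw n ν w = r * S.d w ^ S.h n := by
      rw [hr, div_mul_cancel₀ _ (hdp w hw).ne']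
    have hpos : 0 ≤ L * S.T n l - r := by nlinarith
    have each : ∀ v ∈ W N l, L * S.d v - (L * S.T n l - r) * D ≤ E * S.pw n ν v := by
      intro v hv
      have hv := W_mono hNn l hv
      have hvW := W_Wd hv
      have hwv := hw.append hvW
      have s1 := S.pw_sum hν hw l
      rw [← Finset.add_sum_erase _ _ hv] at s1
      have s2 : ∑ u ∈ (W n l).erase v, S.pw n ν (w ++ u) ≤
          ∑ u ∈ (W n l).erase v, L * S.d (w ++ u) ^ S.h n :=
        Finset.sum_le_sum fun u hu => hLw _ (hw.append (W_Wd (Finset.mem_of_mem_erase hu)))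
      have s3 : ∑ u ∈ W n l, L * S.d (w ++ u) ^ S.h n ≤ L * (S.T n l * S.d w ^ S.h n) := by
        rw [← Finset.mul_sum]
        refine mul_le_mul_of_nonneg_left ?_ (by linarith)
        refine (sum_rpow (W n l) (fun u => S.d (w ++ u)) (fun u _ => abs_nonneg _) hν.hpos hν.hle
          (m := (n:ℝ)^l) (by rw [card_W]; push_cast; exact le_rfl)).trans ?_
        refine mul_le_mul_of_nonneg_left ?_ (by linarith [hT1, show S.T n l = ((n:ℝ) ^ l) ^ (1 - S.h n) from rfl])
        exact Real.rpow_le_rpow (Finset.sum_nonneg fun u _ => abs_nonneg _) (S.sum_d hw.good n l)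
          hν.hpos.le
      rw [← Finset.add_sum_erase _ _ hv] at s3
      have s4 : L * S.d (w ++ v) ^ S.h n - (L * S.T n l - r) * S.d w ^ S.h n ≤
          S.pw n ν (w ++ v) := by
        rw [hr'] at s1; nlinarith
      have s5 := hC.pw_dist hν hw hvW
      rw [(mem_W.1 hv).1] at s5
      have hdv := S.d_pos hvW.good
      have hdw := S.d_pos hw.good
      have hdwv := S.d_pos hwv.good
      have s6 : S.d w ^ S.h n * S.d v ^ S.h n ≤ D * S.d (w ++ v) ^ S.h n := by
        rw [← Real.mul_rpow hdw.le hdv.le]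
        refine (Real.rpow_le_rpow (by positivity) (hC.d_mul hw.good hvW.good) hν.hpos.le).trans ?_
        rw [Real.mul_rpow hD0.le hdwv.le]
        gcongr
        conv_rhs => rw [← Real.rpow_one D]
        exact Real.rpow_le_rpow_of_exponent_le hD1 hν.hle
      have s7 : S.d v ≤ S.d v ^ S.h n := by
        conv_lhs => rw [← Real.rpow_one (S.d v)]
        exact Real.rpow_le_rpow_of_exponent_ge hdv (S.d_le_one hvW.good) hν.hle
      have hq := hdp _ hwv
      have hqv := hdp _ hvW
      set q := S.d (w ++ v) ^ S.h n
      set qv := S.d v ^ S.h n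
      set qw := S.d w ^ S.h n
      refine le_of_mul_le_mul_right ?_ hq
      calc (L * S.d v - (L * S.T n l - r) * D) * q
          = L * S.d v * q - (L * S.T n l - r) * (D * q) := by ring
        _ ≤ L * qv * q - (L * S.T n l - r) * (qw * qv) := by gcongr
        _ = (L * q - (L * S.T n l - r) * qw) * qv := by ring
        _ ≤ S.pw n ν (w ++ v) * qv := by gcongr
        _ ≤ _ := s5
        _ = _ := by ring
    calc _ ≤ ∑ v ∈ W N l, E * S.pw n ν v := Finset.sum_le_sum each
      _ ≤ ∑ v ∈ W n l, E * S.pw n ν v :=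
        Finset.sum_le_sum_of_subset_of_nonneg (W_mono hNn l)
          (fun v _ _ => mul_nonneg hE0.le (S.pw_nonneg n ν v))
      _ = E * ∑ v ∈ W n l, S.pw n ν ([] ++ v) := by rw [Finset.mul_sum]; simp
      _ = E := by rw [S.pw_sum hν (Wd_nil n), S.pw_nil hν, mul_one]
  have hNl : (0:ℝ) < N ^ l * D := by
    have : (0:ℝ) < N := by exact_mod_cast hN
    positivity
  have fin : L ≤ (E - L * ∑ v ∈ W N l, S.d v + N ^ l * D * (L * S.T n l)) / (N ^ l * D) := by
    refine csSup_le ⟨1, h1R⟩ fun r hr => ?_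
    have := main r hr
    rw [Finset.sum_sub_distrib, ← Finset.mul_sum, Finset.sum_const, card_W, nsmul_eq_mul] at this
    push_cast at this
    rw [le_div_iff₀ hNl]
    nlinarith
  rw [le_div_iff₀ hNl] at fin
  nlinarith

/-- Uniform bound for all cylinders. -/
lemma key (S : NonlinearIFS) {ε : ℝ} (hε : 0 < ε) : ∃ n₀ : ℕ, ∀ n ≥ n₀, 1 ≤ n ∧ ∀ ν, S.Conf n ν →
    ∀ w, Wd n w → S.pw n ν w ≤ (1 + ε) * S.d w ^ S.h n := by
  obtain ⟨α, K, hC⟩ := S.exists_consts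
  have t1 : Tendsto (fun l : ℕ => Real.exp (K * α ^ l)) atTop (𝓝 1) := by
    have := (Real.continuous_exp.tendsto _).comp
      ((tendsto_pow_atTop_nhds_zero_of_lt_one hC.α0.le hC.α1).const_mul K)
    simpa [Function.comp_def] using this
  obtain ⟨l, hl⟩ := (t1.eventually_lt_const (show (1:ℝ) < 1 + ε by linarith)).exists
  have ht : Real.exp (K * α ^ l) / (1 + ε) < 1 := by
    rw [div_lt_one (by linarith)]; exact hl
  have t2 : Tendsto (fun N : ℕ => (1 - Real.exp K * S.b N) ^ l) atTop (𝓝 1) := by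
    have := ((S.b_lim.const_mul (Real.exp K)).const_sub 1).pow l
    simpa using this
  have t3 : Tendsto (fun N : ℕ => Real.exp K * S.b N) atTop (𝓝 0) := by
    simpa using S.b_lim.const_mul (Real.exp K)
  obtain ⟨N, hN1, hN2, hN3⟩ := ((t2.eventually_const_lt ht).and
    ((t3.eventually_le_const (show (0:ℝ) < 1 by norm_num)).and (eventually_ge_atTop 1))).exists
  have hS := hC.sum_lower (w := []) (fun i hi => by simp at hi) hN2 l
  simp only [S.d_nil, mul_one, List.nil_append] at hS
  have t4 : Tendsto (fun n : ℕ => ∑ v ∈ W N l, S.d v - N ^ l * (S.T n l - 1) * Real.exp K) atTop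
      (𝓝 (∑ v ∈ W N l, S.d v)) := by
    have := ((((S.T_tendsto l).sub_const 1).const_mul ((N:ℝ)^l)).mul_const
      (Real.exp K)).const_sub (∑ v ∈ W N l, S.d v)
    simpa using this
  obtain ⟨n₀, hn₀⟩ := eventually_atTop.1 ((t4.eventually_const_lt (hN1.trans_le hS)).and
    (eventually_ge_atTop N))
  refine ⟨n₀, fun n hn => ⟨hN3.trans (hn₀ n hn).2, fun ν hν w hw => ?_⟩⟩
  obtain ⟨h1, h2⟩ := hn₀ n hn
  obtain ⟨L, hL1, hLw, hL⟩ := hC.key_n hν hN3 h2 l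
  have hLe : L ≤ 1 + ε := by
    rw [div_lt_iff₀ (by linarith)] at h1
    set X := ∑ v ∈ W N l, S.d v - N ^ l * (S.T n l - 1) * Real.exp K
    by_contra hcon
    push Not at hcon
    have hX : 0 < X := by
      have := Real.exp_pos (K * α ^ l)
      by_contra hx
      nlinarith
    nlinarith
  refine (hLw w hw).trans ?_
  have := Real.rpow_nonneg (S.d_pos hw.good).le (S.h n)
  gcongr

/-- Truncation to `[a,b]`. -/
def cl (a b x : ℝ) : ℝ := max a (min b x)

lemma cl_mono (a b : ℝ) : Monotone (cl a b) := fun _ _ h =>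
  max_le_max le_rfl (min_le_min le_rfl h)

lemma cl_of_mem {a b x : ℝ} (h : x ∈ Icc a b) : cl a b x = x := by
  rw [cl, min_eq_right h.2, max_eq_right h.1]

lemma cl_one {a b : ℝ} (hab : a ≤ b) (hb : b ≤ 1) : cl a b 1 = b := by
  rw [cl, min_eq_left hb, max_eq_right hab]

lemma cl_zero {a b : ℝ} (ha : 0 ≤ a) (hab : a ≤ b) : cl a b 0 = a := by
  rw [cl, min_eq_right (ha.trans hab), max_eq_left ha]

lemma cl_mem {a b : ℝ} (hab : a ≤ b) (x : ℝ) : cl a b x ∈ Icc a b :=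
  ⟨le_max_left _ _, max_le hab (min_le_left _ _)⟩

lemma MA.comp_cl {F : ℝ → ℝ} (hF : MA F) {a b : ℝ} (ha : 0 ≤ a) (hab : a ≤ b) (hb : b ≤ 1) :
    MA (fun x => F (cl a b x)) := by
  have hm : ∀ x, cl a b x ∈ Icc (0:ℝ) 1 := fun x =>
    ⟨ha.trans (cl_mem hab x).1, (cl_mem hab x).2.trans hb⟩
  rcases hF with hF | hF
  · exact Or.inl fun x _ y _ h => hF (hm x) (hm y) (cl_mono a b h)
  · exact Or.inr fun x _ y _ h => hF (hm x) (hm y) (cl_mono a b h)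

lemma cover {n : ℕ} {ν : Measure ℝ} (hν : S.Conf n ν) {L : ℝ} (hL : 0 ≤ L)
    (hLw : ∀ w, Wd n w → S.pw n ν w ≤ L * S.d w ^ S.h n) {w : List ℕ} (hw : Wd n w)
    {a b : ℝ} (ha : 0 ≤ a) (hab : a ≤ b) (hb : b ≤ 1) (l : ℕ) (A : Set ℝ)
    (hA : ∀ x ∈ A, ∃ u ∈ W n l, x ∈ wordComp S.g u '' limitSet S.g n ∧
      wordComp S.g u 0 ∈ Icc a b ∧ wordComp S.g u 1 ∈ Icc a b) :
    ν.real (wordComp S.g w '' A) ≤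
      L * (S.T n l * |wordComp S.g w b - wordComp S.g w a| ^ S.h n) := by
  classical
  have := hν.prob
  set U := (W n l).filter (fun u => wordComp S.g u 0 ∈ Icc a b ∧ wordComp S.g u 1 ∈ Icc a b)
    with hU
  have hUW : U ⊆ W n l := Finset.filter_subset _ _
  have h1 : wordComp S.g w '' A ⊆ ⋃ u ∈ U, wordComp S.g (w ++ u) '' limitSet S.g n := by
    rintro _ ⟨x, hx, rfl⟩
    obtain ⟨u, hu, ⟨y, hy, rfl⟩, h2⟩ := hA x hx
    simp only [mem_iUnion, exists_prop]
    exact ⟨u, Finset.mem_filter.2 ⟨hu, h2⟩, y, hy, wc_append _ _ _ _⟩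
  have h2 : ∑ u ∈ U, S.d (w ++ u) ≤ |wordComp S.g w b - wordComp S.g w a| := by
    have := S.sum_words ((S.wc_MA hw.good).comp_cl ha hab hb) n l
    simp only [cl_one hab hb, cl_zero ha hab] at this
    refine le_trans ?_ this
    calc ∑ u ∈ U, S.d (w ++ u) = ∑ u ∈ U, |wordComp S.g w (cl a b (wordComp S.g u 1)) -
          wordComp S.g w (cl a b (wordComp S.g u 0))| := by
          refine Finset.sum_congr rfl fun u hu => ?_
          have := (Finset.mem_filter.1 hu).2
          rw [cl_of_mem this.1, cl_of_mem this.2, d, wc_append, wc_append]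
      _ ≤ _ := Finset.sum_le_sum_of_subset_of_nonneg hUW fun _ _ _ => abs_nonneg _
  have hc : (U.card : ℝ) ≤ (n:ℝ)^l := by
    have := Finset.card_le_card hUW
    rw [card_W] at this
    exact_mod_cast this
  calc _ ≤ ν.real (⋃ u ∈ U, wordComp S.g (w ++ u) '' limitSet S.g n) :=
        measureReal_mono h1 (measure_ne_top _ _)
    _ ≤ ∑ u ∈ U, S.pw n ν (w ++ u) := measureReal_biUnion_finset_le _ _
    _ ≤ ∑ u ∈ U, L * S.d (w ++ u) ^ S.h n :=
        Finset.sum_le_sum fun u hu => hLw _ (hw.append (W_Wd (hUW hu)))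
    _ = L * ∑ u ∈ U, S.d (w ++ u) ^ S.h n := by rw [Finset.mul_sum]
    _ ≤ L * (S.T n l * (∑ u ∈ U, S.d (w ++ u)) ^ S.h n) := by
        gcongr
        exact sum_rpow U (fun u => S.d (w ++ u)) (fun u _ => abs_nonneg _) hν.hpos hν.hle hc
    _ ≤ _ := by
        have h3 : 0 ≤ S.T n l := Real.rpow_nonneg (by positivity) _
        have h4 : 0 ≤ ∑ u ∈ U, S.d (w ++ u) := Finset.sum_nonneg fun _ _ => abs_nonneg _
        have := hν.hpos.le
        gcongr

lemma exists_eta {ε : ℝ} (hε : 0 < ε) : ∃ η : ℝ, 0 < η ∧ (1 + η) * ((1 + η) * (1 + η)) ≤ 1 + ε := by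
  refine ⟨min 1 (ε / 7), by positivity, ?_⟩
  have h1 := min_le_left 1 (ε / 7)
  have h2 := min_le_right 1 (ε / 7)
  have h3 : 0 < min 1 (ε / 7) := by positivity
  set η := min 1 (ε / 7)
  nlinarith [mul_nonneg h3.le h3.le, mul_le_mul_of_nonneg_left h1 h3.le, mul_le_mul_of_nonneg_left h1 (mul_nonneg h3.le h3.le)]

/-- combine three `1 + η` factors -/
lemma combine {ε η L T x y h m : ℝ} (hη0 : 0 < η) (hη : (1 + η) * ((1 + η) * (1 + η)) ≤ 1 + ε)
    (hL : L = 1 + η) (hT : T ≤ 1 + η) (h0 : 0 < h) (h1 : h ≤ 1) (hx : 0 ≤ x) (hy : 0 ≤ y)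
    (hxy : x ≤ (1 + η) * y) (hm : m ≤ L * (T * x ^ h)) : m ≤ (1 + ε) * y ^ h := by
  have e1 : x ^ h ≤ (1 + η) * y ^ h := by
    refine (Real.rpow_le_rpow hx hxy h0.le).trans ?_
    rw [Real.mul_rpow (by linarith) hy]
    have := Real.rpow_nonneg hy h
    gcongr
    conv_rhs => rw [← Real.rpow_one (1 + η)]
    exact Real.rpow_le_rpow_of_exponent_le (by linarith) h1
  have hxh := Real.rpow_nonneg hx h
  have hyh := Real.rpow_nonneg hy h
  calc m ≤ L * (T * x ^ h) := hm
    _ ≤ (1 + η) * ((1 + η) * ((1 + η) * y ^ h)) := by rw [hL]; gcongr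
    _ = ((1 + η) * ((1 + η) * (1 + η))) * y ^ h := by ring
    _ ≤ _ := by gcongr

/-- Large intervals. -/
lemma large (S : NonlinearIFS) {ε δ : ℝ} (hε : 0 < ε) (hδ : 0 < δ) : ∃ n₀ : ℕ, ∀ n ≥ n₀,
    ∀ ν, S.Conf n ν → ∀ w, Wd n w → ∀ a b : ℝ, 0 ≤ a → b ≤ 1 → δ ≤ b - a →
    ν.real (wordComp S.g w '' (limitSet S.g n ∩ Icc a b)) ≤
      (1 + ε) * |wordComp S.g w b - wordComp S.g w a| ^ S.h n := by
  obtain ⟨α, K, hC⟩ := S.exists_consts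
  obtain ⟨η, hη0, hη⟩ := exists_eta hε
  have t1 : Tendsto (fun l : ℕ => Real.exp K * (2 * α ^ l)) atTop (𝓝 0) := by
    have := ((tendsto_pow_atTop_nhds_zero_of_lt_one hC.α0.le hC.α1).const_mul 2).const_mul
      (Real.exp K)
    simpa using this
  obtain ⟨l, hl⟩ := (t1.eventually_lt_const (show 0 < η * δ by positivity)).exists
  obtain ⟨n₁, hn₁⟩ := S.key hη0
  obtain ⟨n₂, hn₂⟩ := eventually_atTop.1
    ((S.T_tendsto l).eventually_le_const (show (1:ℝ) < 1 + η by linarith))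
  refine ⟨max n₁ n₂, fun n hn ν hν w hw a b ha hb hab => ?_⟩
  obtain ⟨-, hLw⟩ := hn₁ n ((le_max_left _ _).trans hn)
  have hT := hn₂ n ((le_max_right _ _).trans hn)
  have hLw := hLw ν hν
  have hαl : 0 < α ^ l := pow_pos hC.α0 l
  have hab' : a < b := by linarith
  set a' := max 0 (a - α ^ l)
  set b' := min 1 (b + α ^ l)
  have ha' : 0 ≤ a' := le_max_left _ _
  have ha'a : a' ≤ a := max_le ha (by linarith)
  have haa' : a - a' ≤ α ^ l := by linarith [le_max_right 0 (a - α ^ l)]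
  have hb' : b' ≤ 1 := min_le_left _ _
  have hb'b : b ≤ b' := le_min hb (by linarith)
  have hbb' : b' - b ≤ α ^ l := by linarith [min_le_right 1 (b + α ^ l)]
  have hm : ∀ x ∈ Icc a b, ∀ z ∈ Icc (0:ℝ) 1, |z - x| ≤ α ^ l → z ∈ Icc a' b' := by
    intro x hx z hz hzx
    have := abs_le.1 hzx
    exact ⟨max_le hz.1 (by linarith [hx.1]), le_min hz.2 (by linarith [hx.2])⟩
  have hcov := cover hν (by linarith) hLw hw ha' (by linarith) hb' l (limitSet S.g n ∩ Icc a b) (by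
    rintro x ⟨hxJ, hx⟩
    obtain ⟨u, hu, y, hy, rfl⟩ := S.J_decomp_words l hxJ
    have hug := W_good hu
    have hyI := S.J_sub n hy
    have hd : ∀ z ∈ Icc (0:ℝ) 1, wordComp S.g u z ∈ Icc a' b' := by
      intro z hz
      refine hm _ hx _ (S.wc_maps hug hz) ?_
      refine (hC.contr u hug y hyI z hz).trans ?_
      rw [(mem_W.1 hu).1]
      have : |z - y| ≤ 1 := by rw [abs_le]; constructor <;> linarith [hz.1, hz.2, hyI.1, hyI.2]
      nlinarith
    exact ⟨u, hu, ⟨y, hy, rfl⟩, hd 0 (by simp), hd 1 (by simp)⟩)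
  refine combine hη0 hη rfl hT hν.hpos hν.hle (abs_nonneg _) (abs_nonneg _) ?_ hcov
  have mem : ∀ x, a' ≤ x → x ≤ b' → x ∈ Icc (0:ℝ) 1 := fun x h1 h2 => ⟨ha'.trans h1, h2.trans hb'⟩
  have ma' := mem a' le_rfl (by linarith)
  have mb' := mem b' (by linarith) le_rfl
  have ma := mem a ha'a (by linarith)
  have mb := mem b (by linarith) hb'b
  have s1 := hC.sec1 hw.good ma' ma ma mb
  have s2 := hC.sec1 hw.good mb mb' ma mb
  rw [abs_of_pos (show 0 < b - a by linarith)] at s1 s2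
  rw [abs_of_nonneg (show 0 ≤ a - a' by linarith)] at s1
  rw [abs_of_nonneg (show 0 ≤ b' - b by linarith)] at s2
  have tri : |wordComp S.g w b' - wordComp S.g w a'| ≤ |wordComp S.g w b' - wordComp S.g w b| +
      (|wordComp S.g w b - wordComp S.g w a| + |wordComp S.g w a - wordComp S.g w a'|) :=
    (abs_sub_le _ _ _).trans (add_le_add le_rfl (abs_sub_le _ _ _))
  set X := |wordComp S.g w b - wordComp S.g w a|
  set P := |wordComp S.g w b' - wordComp S.g w b|
  set Q := |wordComp S.g w a - wordComp S.g w a'|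
  have hX : 0 ≤ X := abs_nonneg _
  have hD : 0 < Real.exp K := Real.exp_pos K
  have s3 : (P + Q) * (b - a) ≤ (η * X) * (b - a) := by
    calc (P + Q) * (b - a) = P * (b - a) + Q * (b - a) := by ring
      _ ≤ Real.exp K * (X * (b' - b)) + Real.exp K * (X * (a - a')) := add_le_add s2 s1
      _ ≤ Real.exp K * (X * α ^ l) + Real.exp K * (X * α ^ l) := by gcongr
      _ = (Real.exp K * (2 * α ^ l)) * X := by ring
      _ ≤ (η * δ) * X := by gcongr
      _ ≤ (η * (b - a)) * X := by gcongr
      _ = _ := by ring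
  have s4 := le_of_mul_le_mul_right s3 (by linarith)
  linarith

lemma null_seg {n : ℕ} {ν : Measure ℝ} (hν : S.Conf n ν) (w : List ℕ) (a : ℝ) (A : Set ℝ) :
    ν.real (wordComp S.g w '' (A ∩ Icc a a)) = 0 := by
  have := hν.prob
  have h : ν (wordComp S.g w '' (A ∩ Icc a a)) = 0 := by
    refine measure_mono_null (t := {wordComp S.g w a}) ?_ (hν.atoms _)
    rintro _ ⟨x, ⟨-, hx⟩, rfl⟩
    rw [Icc_self, mem_singleton_iff] at hx
    simp [hx]
  rw [measureReal_def, h]; rfl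

lemma N2' (S : NonlinearIFS) {η : ℝ} (hη : 0 < η) : ∃ k₀ : ℕ, ∀ k ≥ k₀, S.b k ≤ (1 + η) * S.b (k+1) := by
  have h1 := S.N2.eventually_const_lt (show (1/2:ℝ) < 1 by norm_num)
  have h2 := S.N2.eventually_lt_const (show (1:ℝ) < 1 + η by linarith)
  obtain ⟨m, hm1, hm2⟩ := (h1.and h2).exists
  refine ⟨m, fun k hk => ?_⟩
  have hbd : BddAbove (range fun k => ⨆ (_ : k ∈ Ici m), S.b k / S.b (k+1)) := by
    by_contra hcon
    rw [Real.iSup_of_not_bddAbove hcon] at hm1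
    norm_num at hm1
  have h3 := le_ciSup hbd k
  have h4 : (⨆ (_ : k ∈ Ici m), S.b k / S.b (k+1)) = S.b k / S.b (k+1) :=
    ciSup_pos (mem_Ici.2 hk)
  simp only [h4] at h3
  have h5 := h3.trans hm2.le
  rwa [div_le_iff₀ (S.b_pos _)] at h5

/-- Initial segments. -/
lemma init_seg (S : NonlinearIFS) {ε : ℝ} (hε : 0 < ε) : ∃ n₀ : ℕ, ∀ n ≥ n₀,
    ∀ ν, S.Conf n ν → ∀ w, Wd n w → ∀ v : ℝ, 0 ≤ v → v ≤ 1 →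
    ν.real (wordComp S.g w '' (limitSet S.g n ∩ Icc 0 v)) ≤
      (1 + ε) * |wordComp S.g w v - wordComp S.g w 0| ^ S.h n := by
  obtain ⟨α, K, hC⟩ := S.exists_consts
  obtain ⟨η, hη0, hη⟩ := exists_eta hε
  have hD : 0 < Real.exp K := Real.exp_pos K
  obtain ⟨k₀, hk₀⟩ := S.N2' (show 0 < η / Real.exp K by positivity)
  obtain ⟨n₁, hn₁⟩ := S.key hη0
  obtain ⟨n₂, hn₂⟩ := eventually_atTop.1
    ((S.T_tendsto 1).eventually_le_const (show (1:ℝ) < 1 + η by linarith))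
  obtain ⟨n₃, hn₃⟩ := S.large hε (S.b_pos k₀)
  refine ⟨max n₃ (max n₁ n₂), fun n hn ν hν w hw v hv0 hv1 => ?_⟩
  obtain ⟨-, hLw⟩ := hn₁ n (((le_max_left _ _).trans (le_max_right _ _)).trans hn)
  have hT := hn₂ n (((le_max_right _ _).trans (le_max_right _ _)).trans hn)
  have hlarge := hn₃ n ((le_max_left _ _).trans hn) ν hν w hw
  have hLw := hLw ν hν
  rcases le_or_gt (S.b k₀) v with hbig | hsmall
  · exact hlarge 0 v le_rfl hv1 (by linarith)
  rcases eq_or_lt_of_le hv0 with rfl | hv0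
  · rw [null_seg hν]
    positivity
  have hex : ∃ i, S.b i ≤ v := (S.b_lim.eventually_le_const hv0).exists
  classical
  obtain ⟨i, hi, hmin⟩ : ∃ i, S.b i ≤ v ∧ ∀ j < i, v < S.b j :=
    ⟨Nat.find hex, Nat.find_spec hex, fun j hj => not_le.1 (Nat.find_min hex hj)⟩
  have hik : k₀ < i := by
    by_contra hcon
    have := S.b_anti.antitone (not_lt.1 hcon)
    linarith
  obtain ⟨i, rfl⟩ : ∃ i', i = i' + 1 := ⟨i - 1, by omega⟩
  have hvi := hmin i (Nat.lt_succ_self i)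
  have hcov := cover hν (by linarith) hLw hw le_rfl (S.b_pos i).le (S.b_le_one i) 1
    (limitSet S.g n ∩ Icc 0 v) (by
    rintro x ⟨hxJ, hx⟩
    obtain ⟨k, hk, y, hy, rfl⟩ := S.J_decomp hxJ
    have h1k := Nat.le_add_left 1 k
    have hyI := S.J_sub n hy
    have hg := S.g_mem h1k hyI
    have hki : i ≤ k := by
      by_contra hcon
      have := S.b_anti.antitone (show k + 1 ≤ i by omega)
      linarith [hg.1, hx.2]
    refine ⟨[k+1], mem_W.2 ⟨rfl, Wd_single hk⟩, ⟨y, hy, rfl⟩, ?_, ?_⟩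
    · simp only [wordComp, Function.comp, id, S.g_zero _ h1k, Nat.add_sub_cancel]
      exact ⟨(S.b_pos k).le, S.b_anti.antitone hki⟩
    · simp only [wordComp, Function.comp, id, S.g_one _ h1k]
      exact ⟨(S.b_pos _).le, S.b_anti.antitone (by omega)⟩)
  refine combine hη0 hη rfl hT hν.hpos hν.hle (abs_nonneg _) (abs_nonneg _) ?_ hcov
  have s1 := hC.sec1 hw.good (x := v) (y := S.b i) (x' := 0) (y' := v) ⟨hv0.le, hv1⟩ (S.b_mem i)
    (by simp) ⟨hv0.le, hv1⟩
  rw [sub_zero, abs_of_pos hv0, abs_of_pos (show 0 < S.b i - v by linarith)] at s1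
  have tri : |wordComp S.g w (S.b i) - wordComp S.g w 0| ≤
      |wordComp S.g w (S.b i) - wordComp S.g w v| + |wordComp S.g w v - wordComp S.g w 0| :=
    abs_sub_le _ _ _
  set X := |wordComp S.g w v - wordComp S.g w 0|
  set P := |wordComp S.g w (S.b i) - wordComp S.g w v|
  have hX : 0 ≤ X := abs_nonneg _
  have hb := hk₀ i (by omega)
  have hd : S.b i - v ≤ η / Real.exp K * v := by
    have : η / Real.exp K * S.b (i+1) ≤ η / Real.exp K * v := by gcongr
    linarith
  have s3 : P * v ≤ (η * X) * v := by
    calc P * v ≤ Real.exp K * (X * (S.b i - v)) := s1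
      _ ≤ Real.exp K * (X * (η / Real.exp K * v)) := by gcongr
      _ = _ := by field_simp
  have s4 := le_of_mul_le_mul_right s3 hv0
  linarith

/-- End segments. -/
lemma end_seg (S : NonlinearIFS) {ε : ℝ} (hε : 0 < ε) : ∃ n₀ : ℕ, ∀ n ≥ n₀,
    ∀ ν, S.Conf n ν → ∀ w, Wd n w → ∀ u : ℝ, 0 ≤ u → u ≤ 1 →
    ν.real (wordComp S.g w '' (limitSet S.g n ∩ Icc u 1)) ≤
      (1 + ε) * |wordComp S.g w 1 - wordComp S.g w u| ^ S.h n := by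
  have hb1 : S.b 1 < 1 := by rw [← S.b_zero]; exact S.b_anti Nat.one_pos
  obtain ⟨n₁, hn₁⟩ := S.large hε (show 0 < 1 - S.b 1 by linarith)
  obtain ⟨n₂, hn₂⟩ := S.init_seg hε
  refine ⟨max 1 (max n₁ n₂), fun n hn ν hν w hw u hu0 hu1 => ?_⟩
  have := hν.prob
  have hn1 : 1 ≤ n := (le_max_left _ _).trans hn
  rcases le_or_gt u (S.b 1) with hu | hu
  · exact hn₁ n (((le_max_left _ _).trans (le_max_right _ _)).trans hn) ν hν w hw u 1 hu0 le_rfl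
      (by linarith)
  have h11 : (1:ℕ) ≤ 1 := le_rfl
  obtain ⟨v, hv, hvu⟩ : u ∈ S.g 1 '' Icc (0:ℝ) 1 := by
    rw [S.g_image 1 le_rfl]; exact ⟨hu.le, by rw [Nat.sub_self, S.b_zero]; exact hu1⟩
  have hw1 : Wd n (w ++ [1]) := hw.append (Wd_single (k := 0) (Finset.mem_range.2 hn1))
  have h := hn₂ n (((le_max_right _ _).trans (le_max_right _ _)).trans hn) ν hν (w ++ [1]) hw1 v
    hv.1 hv.2
  have e : ∀ x, wordComp S.g (w ++ [1]) x = wordComp S.g w (S.g 1 x) := fun x => by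
    rw [wc_append]; rfl
  rw [e, e, hvu, S.g_zero 1 le_rfl, Nat.sub_self, S.b_zero, abs_sub_comm] at h
  refine le_trans (measureReal_mono ?_ (measure_ne_top _ _)) h
  rintro _ ⟨x, ⟨hxJ, hx⟩, rfl⟩
  obtain ⟨k, hk, y, hy, rfl⟩ := S.J_decomp hxJ
  have hyI := S.J_sub n hy
  have hg := S.g_mem (Nat.le_add_left 1 k) hyI
  have hk0 : k = 0 := by
    by_contra hcon
    have := S.b_anti.antitone (show 1 ≤ k by omega)
    rw [Nat.add_sub_cancel] at hg
    linarith [hg.2, hx.1]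
  subst hk0
  refine ⟨y, ⟨hy, hyI.1, ?_⟩, e y⟩
  by_contra hcon
  have := S.g_anti 1 le_rfl hv hyI (not_le.1 hcon)
  rw [hvu] at this
  have := hx.1
  simp only [zero_add] at this
  linarith

lemma main_conf (S : NonlinearIFS) {ε : ℝ} (hε : 0 < ε) : ∃ n₀ : ℕ, ∀ n ≥ n₀,
    ∀ ν, S.Conf n ν → ∀ s t : ℝ, 0 ≤ s → s < t → t ≤ 1 → (∃ j : ℕ, S.b j ∈ Set.Icc s t) →
    ν.real (Icc s t ∩ limitSet S.g n) ≤ (1 + ε) * (t - s) ^ S.h n := by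
  obtain ⟨η, hη0, hη⟩ := exists_eta hε
  obtain ⟨n₁, hn₁⟩ := S.init_seg hη0
  obtain ⟨n₂, hn₂⟩ := S.end_seg hη0
  obtain ⟨n₃, hn₃⟩ := eventually_atTop.1
    ((S.T_tendsto 1).eventually_le_const (show (1:ℝ) < 1 + η by linarith))
  refine ⟨max n₃ (max n₁ n₂), fun n hn ν hν s t hs hst ht hj => ?_⟩
  obtain ⟨j, hj⟩ := hj
  have hprob := hν.prob
  have hI := hn₁ n (((le_max_left _ _).trans (le_max_right _ _)).trans hn) ν hν
  have hE := hn₂ n (((le_max_right _ _).trans (le_max_right _ _)).trans hn) ν hν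
  have hT := hn₃ n ((le_max_left _ _).trans hn)
  have each : ∀ k ∈ Finset.range n,
      ν.real (S.g (k+1) '' (limitSet S.g n ∩ {x | S.g (k+1) x ∈ Icc s t})) ≤
        (1 + η) * |cl s t (S.b (k+1)) - cl s t (S.b k)| ^ S.h n := by
    intro k hk
    have h1k := Nat.le_add_left 1 k
    have hanti := (S.g_anti _ h1k)
    have hwc : wordComp S.g [k+1] = S.g (k+1) := rfl
    have hb1 : S.b (k+1) ≤ S.b k := S.b_anti.antitone (Nat.le_succ k)
    have hemp : (limitSet S.g n ∩ {x | S.g (k+1) x ∈ Icc s t} = ∅) →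
      ν.real (S.g (k+1) '' (limitSet S.g n ∩ {x | S.g (k+1) x ∈ Icc s t})) ≤
        (1 + η) * |cl s t (S.b (k+1)) - cl s t (S.b k)| ^ S.h n := by
      intro h
      rw [h]; simp only [image_empty, measureReal_empty]; positivity
    have hgm : ∀ x ∈ limitSet S.g n, S.g (k+1) x ∈ Icc (S.b (k+1)) (S.b k) := fun x hx =>
      S.g_mem h1k (S.J_sub n hx)
    rcases le_or_gt j k with hjk | hjk
    · have hbk : S.b k ≤ S.b j := S.b_anti.antitone hjk
      rcases lt_or_ge (S.b k) s with hks | hks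
      · refine hemp (eq_empty_of_forall_notMem ?_)
        rintro x ⟨hx, hx'⟩
        linarith [(hgm x hx).2, hx'.1]
      have c1 : cl s t (S.b k) = S.b k := cl_of_mem ⟨hks, hbk.trans hj.2⟩
      have c2 : cl s t (S.b (k+1)) ∈ Icc (S.b (k+1)) (S.b k) := by
        refine ⟨?_, c1 ▸ cl_mono s t hb1⟩
        rw [cl, min_eq_right (hb1.trans (hbk.trans hj.2))]; exact le_max_right _ _
      obtain ⟨v, hv, hvc⟩ : cl s t (S.b (k+1)) ∈ S.g (k+1) '' Icc (0:ℝ) 1 := by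
        rw [S.g_image _ h1k]; exact c2
      have h := hI [k+1] (Wd_single hk) v hv.1 hv.2
      rw [hwc, hvc, S.g_zero _ h1k, Nat.add_sub_cancel] at h
      rw [c1]
      refine le_trans (measureReal_mono (image_mono ?_) (measure_ne_top _ _)) h
      rintro x ⟨hx, hx'⟩
      have hxI := S.J_sub n hx
      refine ⟨hx, hxI.1, ?_⟩
      by_contra hcon
      have h5 := hanti hv hxI (not_le.1 hcon)
      rw [hvc, cl, min_eq_right (hb1.trans (hbk.trans hj.2))] at h5
      exact absurd h5 (not_lt.2 (max_le hx'.1 (hgm x hx).1))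
    · have hbk : S.b j ≤ S.b (k+1) := S.b_anti.antitone hjk
      rcases lt_or_ge t (S.b (k+1)) with hks | hks
      · refine hemp (eq_empty_of_forall_notMem ?_)
        rintro x ⟨hx, hx'⟩
        linarith [(hgm x hx).1, hx'.2]
      have c1 : cl s t (S.b (k+1)) = S.b (k+1) := cl_of_mem ⟨hj.1.trans hbk, hks⟩
      have c3 : cl s t (S.b k) = min t (S.b k) := by
        rw [cl, max_eq_right]
        exact le_min hst.le (hj.1.trans (hbk.trans hb1))
      have c2 : cl s t (S.b k) ∈ Icc (S.b (k+1)) (S.b k) := by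
        refine ⟨c1 ▸ cl_mono s t hb1, ?_⟩
        rw [c3]; exact min_le_right _ _
      obtain ⟨v, hv, hvc⟩ : cl s t (S.b k) ∈ S.g (k+1) '' Icc (0:ℝ) 1 := by
        rw [S.g_image _ h1k]; exact c2
      have h := hE [k+1] (Wd_single hk) v hv.1 hv.2
      rw [hwc, hvc, S.g_one _ h1k] at h
      rw [c1]
      refine le_trans (measureReal_mono (image_mono ?_) (measure_ne_top _ _)) h
      rintro x ⟨hx, hx'⟩
      have hxI := S.J_sub n hx
      refine ⟨hx, ?_, hxI.2⟩
      by_contra hcon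
      have h5 := hanti hxI hv (not_le.1 hcon)
      rw [hvc, c3] at h5
      exact absurd h5 (not_lt.2 (le_min hx'.2 (hgm x hx).2))
  have hsub : Icc s t ∩ limitSet S.g n ⊆ ⋃ k ∈ Finset.range n,
      S.g (k+1) '' (limitSet S.g n ∩ {x | S.g (k+1) x ∈ Icc s t}) := by
    rintro x ⟨hx, hxJ⟩
    obtain ⟨k, hk, y, hy, rfl⟩ := S.J_decomp hxJ
    simp only [mem_iUnion, exists_prop]
    exact ⟨k, hk, y, ⟨hy, hx⟩, rfl⟩
  have hMA : MA (cl s t) := MA_id.comp_cl hs hst.le ht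
  have tele : ∑ k ∈ Finset.range n, |cl s t (S.b (k+1)) - cl s t (S.b k)| ≤ t - s := by
    rw [S.telescope hMA n]
    refine (hMA.abs_le (S.b_mem n)).trans ?_
    rw [cl_one hst.le ht, cl_zero hs hst.le, abs_of_pos (by linarith)]
  refine combine (x := t - s) (y := t - s) (L := 1 + η) (T := S.T n 1) hη0 hη rfl hT hν.hpos hν.hle
    (by linarith) (by linarith) (by nlinarith) ?_
  calc _ ≤ ν.real (⋃ k ∈ Finset.range n,
        S.g (k+1) '' (limitSet S.g n ∩ {x | S.g (k+1) x ∈ Icc s t})) :=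
        measureReal_mono hsub (measure_ne_top _ _)
    _ ≤ _ := measureReal_biUnion_finset_le _ _
    _ ≤ ∑ k ∈ Finset.range n, (1 + η) * |cl s t (S.b (k+1)) - cl s t (S.b k)| ^ S.h n :=
        Finset.sum_le_sum each
    _ = (1 + η) * ∑ k ∈ Finset.range n, |cl s t (S.b (k+1)) - cl s t (S.b k)| ^ S.h n := by
        rw [Finset.mul_sum]
    _ ≤ (1 + η) * (S.T n 1 *
          (∑ k ∈ Finset.range n, |cl s t (S.b (k+1)) - cl s t (S.b k)|) ^ S.h n) := by
        gcongr
        exact sum_rpow _ _ (fun _ _ => abs_nonneg _) hν.hpos hν.hle (by simp)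
    _ ≤ _ := by
        have h3 : 0 ≤ S.T n 1 := Real.rpow_nonneg (by positivity) _
        have h4 : 0 ≤ ∑ k ∈ Finset.range n, |cl s t (S.b (k+1)) - cl s t (S.b k)| :=
          Finset.sum_nonneg fun _ _ => abs_nonneg _
        have := hν.hpos.le
        gcongr

lemma h_pos_eventually (S : NonlinearIFS) : ∀ᶠ n in atTop, 0 < S.h n := by
  have h1 := (S.N1.eventually_lt_const (show (0:ℝ) < 1/2 by norm_num))
  have h2 : Tendsto (fun n : ℕ => Real.log n) atTop atTop :=
    Real.tendsto_log_atTop.comp tendsto_natCast_atTop_atTop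
  filter_upwards [h1, h2.eventually_ge_atTop 1] with n h3 h4
  by_contra hcon
  push Not at hcon
  nlinarith

end NonlinearIFS

/-- In the nonlinear setting, for every `ε > 0` there is `n₀` such that every closed subinterval
    of `[0,1]` meeting `{b_j : j ≥ 0}` has density at most `1 + ε` for all `n ≥ n₀`. -/
theorem nonlinear_density_family_C (S : NonlinearIFS) :
    ∀ ε > (0 : ℝ), ∃ n₀ : ℕ, ∀ n ≥ n₀, ∀ s t : ℝ,
      0 ≤ s → s < t → t ≤ 1 → (∃ j : ℕ, S.b j ∈ Set.Icc s t) →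
      normMeas S n (Set.Icc s t) / ENNReal.ofReal ((t - s) ^ S.h n) ≤
        ENNReal.ofReal (1 + ε) := by
  intro ε hε
  obtain ⟨n₁, hn₁⟩ := S.main_conf hε
  obtain ⟨n₂, hn₂⟩ := eventually_atTop.1 S.h_pos_eventually
  refine ⟨max 1 (max n₁ n₂), fun n hn s t hs hst ht hj => ?_⟩
  have hn1 : 1 ≤ n := (le_max_left _ _).trans hn
  have hh := hn₂ n (((le_max_right _ _).trans (le_max_right _ _)).trans hn)
  have hm := hn₁ n (((le_max_left _ _).trans (le_max_right _ _)).trans hn)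
  by_cases h0 : μH[S.h n] (limitSet S.g n) = 0
  · have : normMeas S n (Set.Icc s t) = 0 := by
      rw [normMeas, measure_mono_null inter_subset_right h0, ENNReal.zero_div]
    rw [this, ENNReal.zero_div]; exact zero_le
  by_cases htop : μH[S.h n] (limitSet S.g n) = ⊤
  · have : normMeas S n (Set.Icc s t) = 0 := by
      rw [normMeas, htop, ENNReal.div_top]
    rw [this, ENNReal.zero_div]; exact zero_le
  obtain ⟨ν, hν, hνm⟩ := S.exists_conf hn1 hh h0 htop
  have hprob := hν.prob
  have h1 := hm ν hν s t hs hst ht hj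
  have h2 : normMeas S n (Set.Icc s t) = ν (Set.Icc s t ∩ limitSet S.g n) := by
    rw [← hνm, normMeas, normMeas, inter_assoc, inter_self]
  refine ENNReal.div_le_of_le_mul ?_
  rw [h2, ← ofReal_measureReal, ← ENNReal.ofReal_mul (by linarith)]
  exact ENNReal.ofReal_le_ofReal h1
end
end

section
/- In the nonlinear setting with standing conditions (N1)–(N5): for every ε > 0 there exists n_0 ∈ ℕ such that for every n > n_0 and every closed interval Δ ⊂ [0,1] of positive length, one has m_n(Δ)/|Δ|^{h_n} ≤ 1 + ε. -/
open Set Filter MeasureTheory Topology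

noncomputable section

namespace ND

variable (S : NonlinearIFS)

lemma b_pos (k : ℕ) : 0 < S.b k := by
  have h1 : S.b (k+1) < S.b k := S.b_anti (Nat.lt_succ_self k)
  have h2 : 0 ≤ S.b (k+1) := S.b_anti.antitone.le_of_tendsto S.b_lim (k+1)
  linarith

lemma b_le_one (k : ℕ) : S.b k ≤ 1 := by
  have := S.b_anti.antitone (Nat.zero_le k)
  rwa [S.b_zero] at this

lemma g_mem {k : ℕ} (hk : 1 ≤ k) {x : ℝ} (hx : x ∈ Icc (0:ℝ) 1) :
    S.g k x ∈ Icc (S.b k) (S.b (k-1)) := by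
  rw [← S.g_image k hk]; exact mem_image_of_mem _ hx

lemma Icc_sub (k : ℕ) : Icc (S.b k) (S.b (k-1)) ⊆ Icc (0:ℝ) 1 :=
  Icc_subset_Icc (b_pos S k).le (b_le_one S _)

lemma g_mem' {k : ℕ} (hk : 1 ≤ k) {x : ℝ} (hx : x ∈ Icc (0:ℝ) 1) :
    S.g k x ∈ Icc (0:ℝ) 1 := Icc_sub S k (g_mem S hk hx)

lemma g_cont {k : ℕ} (hk : 1 ≤ k) : ContinuousOn (S.g k) (Icc (0:ℝ) 1) :=
  fun x hx => (S.deriv1 k hk x hx).continuousAt.continuousWithinAt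

lemma g'_cont {k : ℕ} (hk : 1 ≤ k) : ContinuousOn (S.g' k) (Icc (0:ℝ) 1) :=
  fun x hx => (S.deriv2 k hk x hx).continuousAt.continuousWithinAt

lemma loglip {c : ℝ} (hc : ∀ n, 1 ≤ n → ∀ x ∈ Set.Icc (0 : ℝ) 1, |S.g'' n x / S.g' n x| < c)
    {k : ℕ} (hk : 1 ≤ k) {x y : ℝ} (hx : x ∈ Icc (0:ℝ) 1) (hy : y ∈ Icc (0:ℝ) 1) :
    |S.g' k x| ≤ Real.exp (c * |x - y|) * |S.g' k y| := by
  have h := (convex_Icc (0:ℝ) 1).norm_image_sub_le_of_norm_hasDerivWithin_le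
    (f := fun z => Real.log (S.g' k z)) (f' := fun z => S.g'' k z / S.g' k z) (C := c)
    (fun z hz => ((S.deriv2 k hk z hz).log (S.deriv_ne k hk z hz)).hasDerivWithinAt)
    (fun z hz => (hc k hk z hz).le) hy hx
  have hxp := abs_pos.2 (S.deriv_ne k hk x hx)
  have hyp := abs_pos.2 (S.deriv_ne k hk y hy)
  rw [Real.norm_eq_abs, Real.norm_eq_abs] at h
  have h2 := (le_abs_self _).trans h
  rw [← Real.exp_log hxp, Real.log_abs]
  rw [← Real.exp_log hyp]
  rw [Real.log_abs, ← Real.exp_add, Real.exp_le_exp]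
  linarith

lemma lip {k : ℕ} (hk : 1 ≤ k) {u v L : ℝ} (hu : 0 ≤ u) (hv : v ≤ 1)
    (hL : ∀ x ∈ Icc u v, |S.g' k x| ≤ L) {x y : ℝ} (hx : x ∈ Icc u v) (hy : y ∈ Icc u v) :
    |S.g k x - S.g k y| ≤ L * |x - y| := by
  have hsub : Icc u v ⊆ Icc (0:ℝ) 1 := Icc_subset_Icc hu hv
  exact (convex_Icc u v).norm_image_sub_le_of_norm_hasDerivWithin_le
    (f := S.g k) (f' := S.g' k) (C := L)
    (fun z hz => ((S.deriv1 k hk z (hsub hz))).hasDerivWithinAt) hL hy hx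

lemma g_lt {k : ℕ} (hk : 1 ≤ k) {u v : ℝ} (hu : 0 ≤ u) (huv : u < v) (hv : v ≤ 1) :
    S.g k v < S.g k u :=
  S.g_anti k hk ⟨hu, huv.le.trans hv⟩ ⟨hu.trans huv.le, hv⟩ huv

lemma g_le {k : ℕ} (hk : 1 ≤ k) {u v : ℝ} (hu : 0 ≤ u) (huv : u ≤ v) (hv : v ≤ 1) :
    S.g k v ≤ S.g k u :=
  (S.g_anti k hk).antitoneOn ⟨hu, huv.trans hv⟩ ⟨hu.trans huv, hv⟩ huv

lemma mvt {k : ℕ} (hk : 1 ≤ k) {u v : ℝ} (hu : 0 ≤ u) (huv : u < v) (hv : v ≤ 1) :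
    ∃ z ∈ Icc u v, S.g k u - S.g k v = |S.g' k z| * (v - u) := by
  have hsub : Icc u v ⊆ Icc (0:ℝ) 1 := Icc_subset_Icc hu hv
  obtain ⟨z, hz, he⟩ := exists_hasDerivAt_eq_slope (S.g k) (S.g' k) huv
    ((g_cont S hk).mono hsub) (fun x hx => S.deriv1 k hk x (hsub (Ioo_subset_Icc_self hx)))
  refine ⟨z, Ioo_subset_Icc_self hz, ?_⟩
  have h0 : 0 < v - u := by linarith
  have h1 := g_lt S hk hu huv hv
  rw [he, abs_div, abs_of_pos h0, abs_of_neg (by linarith)]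
  field_simp
  ring

lemma image_Icc {k : ℕ} (hk : 1 ≤ k) {u v : ℝ} (hu : 0 ≤ u) (huv : u ≤ v) (hv : v ≤ 1) :
    S.g k '' Icc u v = Icc (S.g k v) (S.g k u) := by
  have hsub : Icc u v ⊆ Icc (0:ℝ) 1 := Icc_subset_Icc hu hv
  apply Subset.antisymm
  · rintro _ ⟨x, hx, rfl⟩
    exact ⟨g_le S hk (hu.trans hx.1) hx.2 hv, g_le S hk hu hx.1 (hx.2.trans hv)⟩
  · exact intermediate_value_Icc' huv ((g_cont S hk).mono hsub)

lemma preimage_ex {k : ℕ} (hk : 1 ≤ k) {p r : ℝ} (hp : S.b k ≤ p) (hpr : p < r)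
    (hr : r ≤ S.b (k-1)) : ∃ u v, 0 ≤ u ∧ u < v ∧ v ≤ 1 ∧ S.g k u = r ∧ S.g k v = p := by
  have h1 : r ∈ S.g k '' Icc 0 1 := by rw [S.g_image k hk]; exact ⟨by linarith, hr⟩
  have h2 : p ∈ S.g k '' Icc 0 1 := by rw [S.g_image k hk]; exact ⟨hp, by linarith⟩
  obtain ⟨u, hu, rfl⟩ := h1
  obtain ⟨v, hv, rfl⟩ := h2
  refine ⟨u, v, hu.1, ?_, hv.2, rfl, rfl⟩
  by_contra hcon
  have := g_le S hk hv.1 (not_lt.1 hcon) hu.2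
  linarith

lemma N2' {q : ℝ} (hq : 1 < q) : ∃ K, ∀ k ≥ K, S.b k ≤ q * S.b (k+1) := by
  have h1 := S.N2.eventually (Ioo_mem_nhds zero_lt_one hq)
  obtain ⟨K, hK⟩ := h1.exists
  refine ⟨K, fun k hk => ?_⟩
  have hb : BddAbove (range fun k => ⨆ _ : k ∈ Set.Ici K, S.b k / S.b (k + 1)) := by
    by_contra hcon
    have := Real.iSup_of_not_bddAbove hcon
    linarith [hK.1]
  have h2 := le_ciSup hb k
  have hk' : k ∈ Set.Ici K := hk
  simp only [hk', ciSup_unique] at h2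
  have h3 := h2.trans hK.2.le
  rwa [div_le_iff₀ (b_pos S _)] at h3

lemma N4' {q : ℝ} (hq : 1 < q) : ∃ K, ∀ k ≥ K, 1 ≤ k → ∀ x ∈ Icc (0:ℝ) 1, ∀ y ∈ Icc (0:ℝ) 1,
    |S.g' k y| ≤ q * |S.g' k x| := by
  obtain ⟨c, hc0, hc⟩ := S.N3
  have h1 := S.N4.eventually (Iio_mem_nhds hq)
  obtain ⟨K, hK⟩ := eventually_atTop.1 h1
  refine ⟨K, fun k hk hk1 x hx y hy => ?_⟩
  have hrat : ∀ x ∈ Icc (0:ℝ) 1, ∀ y ∈ Icc (0:ℝ) 1, |S.g' k y| / |S.g' k x| ≤ Real.exp c := by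
    intro x hx y hy
    rw [div_le_iff₀ (abs_pos.2 (S.deriv_ne k hk1 x hx))]
    refine (loglip S hc hk1 hy hx).trans ?_
    gcongr
    have : |y - x| ≤ 1 := by rw [abs_le]; constructor <;> linarith [hx.1, hx.2, hy.1, hy.2]
    nlinarith
  have hin : ∀ x ∈ Icc (0:ℝ) 1, ∀ y, (⨆ _ : y ∈ Icc (0:ℝ) 1, |S.g' k y| / |S.g' k x|) ≤ Real.exp c :=
    fun x hx y => Real.iSup_le (fun hy => hrat x hx y hy) (Real.exp_pos c).le
  have hb1 : ∀ x ∈ Icc (0:ℝ) 1,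
      BddAbove (range fun y => ⨆ _ : y ∈ Icc (0:ℝ) 1, |S.g' k y| / |S.g' k x|) := by
    intro x hx
    refine ⟨Real.exp c, ?_⟩
    rintro _ ⟨y, rfl⟩
    exact hin x hx y
  have hb2 : BddAbove (range fun x => ⨆ _ : x ∈ Icc (0:ℝ) 1,
      ⨆ y ∈ Icc (0:ℝ) 1, |S.g' k y| / |S.g' k x|) := by
    refine ⟨Real.exp c, ?_⟩
    rintro _ ⟨x, rfl⟩
    exact Real.iSup_le (fun hx => Real.iSup_le (fun y => hin x hx y) (Real.exp_pos c).le)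
      (Real.exp_pos c).le
  have e1 := le_ciSup hb2 x
  have e2 := le_ciSup (hb1 x hx) y
  simp only [hx, ciSup_unique] at e1
  simp only [hy, ciSup_unique] at e2
  have h3 : |S.g' k y| / |S.g' k x| < q := lt_of_le_of_lt (e2.trans e1) (hK k hk)
  rw [div_lt_iff₀ (abs_pos.2 (S.deriv_ne k hk1 x hx))] at h3
  exact h3.le

/-- uniform small-scale distortion -/
lemma smallDist {q : ℝ} (hq : 1 < q) : ∃ δ > 0, ∀ k, 1 ≤ k → ∀ u v, 0 ≤ u → u < v → v ≤ 1 →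
    S.g k u - S.g k v < δ → ∀ x ∈ Icc u v, ∀ y ∈ Icc u v, |S.g' k y| ≤ q * |S.g' k x| := by
  obtain ⟨c, hc0, hc⟩ := S.N3
  obtain ⟨K, hK⟩ := N4' S hq
  have hlq : 0 < Real.log q := Real.log_pos hq
  have hd : 0 < S.b K - S.b (K+1) := by linarith [S.b_anti (Nat.lt_succ_self K)]
  -- lower bound for derivative on k < K
  have hpos : ∀ k : ℕ, ∃ d > 0, 1 ≤ k → ∀ x ∈ Icc (0:ℝ) 1, d ≤ |S.g' k x| := by
    intro k
    by_cases hk : 1 ≤ k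
    · refine ⟨Real.exp (-c) * |S.g' k 0|, mul_pos (Real.exp_pos _)
        (abs_pos.2 (S.deriv_ne k hk 0 (by simp))), fun _ x hx => ?_⟩
      have := loglip S hc hk (x := 0) (y := x) (by simp) hx
      have h2 : Real.exp (c * |0 - x|) ≤ Real.exp c := by
        apply Real.exp_le_exp.2
        rw [zero_sub, abs_neg, abs_of_nonneg hx.1]; nlinarith [hx.2]
      calc Real.exp (-c) * |S.g' k 0| ≤ Real.exp (-c) * (Real.exp c * |S.g' k x|) := by
            gcongr; exact this.trans (by gcongr)
        _ = |S.g' k x| := by rw [← mul_assoc, ← Real.exp_add]; simp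
    · exact ⟨1, one_pos, fun h => absurd h hk⟩
  choose d hd0 hd using hpos
  obtain ⟨D, hD0, hD⟩ : ∃ D > 0, ∀ k < K, D ≤ d k := by
    clear hK
    induction K with
    | zero => exact ⟨1, one_pos, by simp⟩
    | succ K ih =>
      obtain ⟨D, h0, h⟩ := ih (by linarith [S.b_anti (Nat.lt_succ_self K)])
      refine ⟨min D (d K), lt_min h0 (hd0 K), fun k hk => ?_⟩
      rcases Nat.lt_succ_iff_lt_or_eq.1 hk with h' | h'
      · exact (min_le_left _ _).trans (h k h')
      · subst h'; exact min_le_right _ _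
  refine ⟨D * (Real.log q / c), by positivity, fun k hk u v hu huv hv hlen x hx y hy => ?_⟩
  have hsub : Icc u v ⊆ Icc (0:ℝ) 1 := Icc_subset_Icc hu hv
  by_cases hkK : K ≤ k
  · exact hK k hkK hk x (hsub hx) y (hsub hy)
  · obtain ⟨z, hz, he⟩ := mvt S hk hu huv hv
    have h1 : D ≤ |S.g' k z| := (hD k (not_le.1 hkK)).trans (hd k hk z (hsub hz))
    have h2 : D * (v - u) < D * (Real.log q / c) := by
      rw [he] at hlen
      exact lt_of_le_of_lt (by gcongr) hlen
    have h3 : v - u < Real.log q / c := lt_of_mul_lt_mul_left h2 hD0.le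
    rw [lt_div_iff₀ hc0] at h3
    refine (loglip S hc hk (hsub hy) (hsub hx)).trans ?_
    gcongr
    rw [← Real.le_log_iff_exp_le (by linarith)]
    have : |y - x| ≤ v - u := by rw [abs_le]; constructor <;> linarith [hx.1, hx.2, hy.1, hy.2]
    nlinarith

structure Conf (n : ℕ) (h : ℝ) (m : Measure ℝ) : Prop where
  prob : IsProbabilityMeasure m
  noat : NullSingletonClass m
  supp : m (Icc (S.b n) 1)ᶜ = 0
  conf : ∀ k, 1 ≤ k → k ≤ n → ∀ u v L, 0 ≤ u → u ≤ v → v ≤ 1 → 0 ≤ L →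
    (∀ x ∈ Icc u v, |S.g' k x| ≤ L) →
    m.real (Icc (S.g k v) (S.g k u)) ≤ L ^ h * m.real (Icc u v)

lemma word_mem (w : List ℕ) (hw : ∀ i ∈ w, 1 ≤ i) {x : ℝ} (hx : x ∈ Icc (0:ℝ) 1) :
    wordComp S.g w x ∈ Icc (0:ℝ) 1 := by
  induction w with
  | nil => simpa [wordComp] using hx
  | cons k w ih =>
    simp only [wordComp, Function.comp]
    exact g_mem' S (hw k (by simp)) (ih (fun i hi => hw i (by simp [hi])))

lemma limit_sub (n : ℕ) : limitSet S.g n ⊆ Icc (S.b n) 1 := by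
  intro y hy
  have := mem_iInter.1 hy 0
  simp only [mem_iUnion, mem_ofPred_eq] at this
  obtain ⟨w, ⟨hl, hw⟩, x, hx, rfl⟩ := this
  match w, hl with
  | [j], _ =>
    have hj := hw j (by simp)
    have := g_mem S hj.1 hx
    simp only [wordComp, Function.comp, id]
    exact ⟨(S.b_anti.antitone hj.2).trans this.1, this.2.trans (b_le_one S _)⟩

lemma idx_eq {k j : ℕ} (hk : 1 ≤ k) (hj : 1 ≤ j) {y : ℝ} (h1 : S.b k < y) (h2 : y < S.b (k-1))
    (h3 : S.b j ≤ y) (h4 : y ≤ S.b (j-1)) : j = k := by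
  rcases lt_trichotomy j k with h | h | h
  · have := S.b_anti.antitone (show j ≤ k - 1 by omega)
    linarith
  · exact h
  · have := S.b_anti.antitone (show k ≤ j - 1 by omega)
    linarith

lemma limit_pull {n k : ℕ} (hk : 1 ≤ k) {x : ℝ} (hx : x ∈ Icc (0:ℝ) 1)
    (hy : S.g k x ∈ limitSet S.g n) (h1 : S.b k < S.g k x) (h2 : S.g k x < S.b (k-1)) :
    x ∈ limitSet S.g n := by
  refine mem_iInter.2 fun l => ?_
  have := mem_iInter.1 hy (l+1)
  simp only [mem_iUnion, mem_ofPred_eq] at this ⊢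
  obtain ⟨w, ⟨hl, hw⟩, z, hz, he⟩ := this
  match w, hl with
  | j :: w', hl =>
    have hj := hw j (by simp)
    have hw' : ∀ i ∈ w', 1 ≤ i ∧ i ≤ n := fun i hi => hw i (by simp [hi])
    have hz' := word_mem S w' (fun i hi => (hw' i hi).1) hz
    simp only [wordComp, Function.comp] at he
    have hm := g_mem S hj.1 hz'
    rw [he] at hm
    have hjk := idx_eq S hk hj.1 h1 h2 hm.1 hm.2
    subst hjk
    have hxz := (S.g_anti j hk).injOn hz' hx he
    refine ⟨w', ⟨by simpa using hl, hw'⟩, z, hz, hxz⟩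

lemma conf_of (n : ℕ) (h0 : 0 < S.h n) (hT0 : μH[S.h n] (limitSet S.g n) ≠ 0)
    (hT1 : μH[S.h n] (limitSet S.g n) ≠ ⊤) :
    Conf S n (S.h n) ((μH[S.h n] (limitSet S.g n))⁻¹ • (μH[S.h n]).restrict (limitSet S.g n)) := by
  set J := limitSet S.g n with hJ
  set h := S.h n with hh
  set T := μH[h] J with hT
  have hna : NullSingletonClass (μH[h] : Measure ℝ) := Measure.nullSingletonClass_hausdorff ℝ h0
  refine ⟨⟨?_⟩, ⟨fun x => ?_⟩, ?_, ?_⟩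
  · simp only [Measure.smul_apply, Measure.restrict_apply_univ, smul_eq_mul]
    exact ENNReal.inv_mul_cancel hT0 hT1
  · simp
  · rw [Measure.smul_apply, Measure.restrict_apply measurableSet_Icc.compl]
    have : (Icc (S.b n) 1)ᶜ ∩ J = ∅ := by
      ext y
      simp only [mem_inter_iff, mem_compl_iff, mem_empty_iff_false, iff_false, not_and]
      intro h1 h2
      exact h1 (limit_sub S n h2)
    simp [this]
  · intro k hk hkn u v L hu huv hv hL hder
    have hsub : Icc u v ⊆ Icc (0:ℝ) 1 := Icc_subset_Icc hu hv
    have hlip : LipschitzOnWith (Real.toNNReal L) (S.g k) (Icc u v ∩ J) := by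
      apply LipschitzOnWith.of_dist_le_mul
      intro x hx y hy
      rw [Real.coe_toNNReal L hL, Real.dist_eq, Real.dist_eq]
      exact lip S hk hu hv hder hx.1 hy.1
    have h1 := hlip.hausdorffMeasure_image_le h0.le
    have hincl : Icc (S.g k v) (S.g k u) ∩ J ⊆
        S.g k '' (Icc u v ∩ J) ∪ {S.b k, S.b (k-1)} := by
      rintro y ⟨hy, hyJ⟩
      rw [← image_Icc S hk hu huv hv] at hy
      obtain ⟨x, hx, rfl⟩ := hy
      have hm := g_mem S hk (hsub hx)
      by_cases e1 : S.g k x = S.b k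
      · right; simp [e1]
      by_cases e2 : S.g k x = S.b (k-1)
      · right; simp [e2]
      left
      exact ⟨x, ⟨hx, limit_pull S hk (hsub hx) hyJ (lt_of_le_of_ne hm.1 (Ne.symm e1))
        (lt_of_le_of_ne hm.2 e2)⟩, rfl⟩
    have h2 : μH[h] (Icc (S.g k v) (S.g k u) ∩ J) ≤
        (Real.toNNReal L : ENNReal) ^ h * μH[h] (Icc u v ∩ J) := by
      refine (measure_mono hincl).trans ((measure_union_le _ _).trans ?_)
      have : μH[h] ({S.b k, S.b (k-1)} : Set ℝ) = 0 :=
        (Set.toFinite _).measure_zero _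
      rw [this, add_zero]
      exact h1
    simp only [Measure.real, Measure.smul_apply, Measure.restrict_apply measurableSet_Icc,
      smul_eq_mul, ENNReal.toReal_mul]
    have hfin : μH[h] (Icc u v ∩ J) ≠ ⊤ := measure_ne_top_of_subset inter_subset_right hT1
    have h3 := ENNReal.toReal_mono (ENNReal.mul_ne_top
      (ENNReal.rpow_ne_top_of_nonneg h0.le ENNReal.coe_ne_top) hfin) h2
    rw [ENNReal.toReal_mul, ← ENNReal.toReal_rpow, ENNReal.coe_toReal, Real.coe_toNNReal L hL] at h3
    calc _ ≤ T⁻¹.toReal * (L ^ h * (μH[h] (Icc u v ∩ J)).toReal) := by gcongr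
      _ = _ := by ring

def Cone (a : ℝ) (φ : ℝ → ℝ) : Prop :=
  (∀ x ∈ Icc (0:ℝ) 1, 0 ≤ φ x) ∧
    ∀ x ∈ Icc (0:ℝ) 1, ∀ y ∈ Icc (0:ℝ) 1, φ x ≤ Real.exp (a * |x - y|) * φ y

lemma cone_cont {a : ℝ} {φ : ℝ → ℝ} (hφ : Cone a φ) : ContinuousOn φ (Icc (0:ℝ) 1) := by
  intro x hx
  have h1 : Tendsto (fun y => Real.exp (-(a * |x - y|)) * φ x) (𝓝[Icc (0:ℝ) 1] x) (𝓝 (φ x)) := by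
    have : Continuous (fun y => Real.exp (-(a * |x - y|)) * φ x) := by fun_prop
    have := this.tendsto x
    simp only [sub_self, abs_zero, mul_zero, neg_zero, Real.exp_zero, one_mul] at this
    exact this.mono_left nhdsWithin_le_nhds
  have h2 : Tendsto (fun y => Real.exp (a * |y - x|) * φ x) (𝓝[Icc (0:ℝ) 1] x) (𝓝 (φ x)) := by
    have : Continuous (fun y => Real.exp (a * |y - x|) * φ x) := by fun_prop
    have := this.tendsto x
    simp only [sub_self, abs_zero, mul_zero, Real.exp_zero, one_mul] at this
    exact this.mono_left nhdsWithin_le_nhds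
  refine tendsto_of_tendsto_of_tendsto_of_le_of_le' h1 h2 ?_ ?_
  · filter_upwards [self_mem_nhdsWithin] with y hy
    have := hφ.2 x hx y hy
    calc _ ≤ Real.exp (-(a * |x - y|)) * (Real.exp (a * |x - y|) * φ y) := by gcongr
      _ = φ y := by rw [← mul_assoc, ← Real.exp_add]; simp
  · filter_upwards [self_mem_nhdsWithin] with y hy
    exact hφ.2 y hy x hx

lemma cone_int {a : ℝ} {φ : ℝ → ℝ} (hφ : Cone a φ) (μ : Measure ℝ) [IsLocallyFiniteMeasure μ] :
    IntegrableOn φ (Icc (0:ℝ) 1) μ := (cone_cont hφ).integrableOn_Icc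

lemma cone_ptw {a : ℝ} (ha : 0 ≤ a) {φ : ℝ → ℝ} (hφ : Cone a φ) {x y : ℝ} (hx : x ∈ Icc (0:ℝ) 1)
    (hy : y ∈ Icc (0:ℝ) 1) : φ x ≤ Real.exp a * φ y := by
  refine (hφ.2 x hx y hy).trans ?_
  have := hφ.1 y hy
  have h2 : |x - y| ≤ 1 := by rw [abs_le]; constructor <;> linarith [hx.1, hx.2, hy.1, hy.2]
  gcongr
  nlinarith

lemma int_const_I (C : ℝ) (μ : Measure ℝ) (h1 : μ.real (Icc (0:ℝ) 1) = 1) :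
    ∫ _ in Icc (0:ℝ) 1, C ∂μ = C := by
  rw [setIntegral_const, h1]; simp

lemma cone_up {a : ℝ} (ha : 0 ≤ a) {φ : ℝ → ℝ} (hφ : Cone a φ) {x : ℝ} (hx : x ∈ Icc (0:ℝ) 1) :
    φ x ≤ Real.exp a * ∫ y in Icc (0:ℝ) 1, φ y := by
  rw [← integral_const_mul, ← int_const_I (φ x) volume (by simp)]
  apply setIntegral_mono_on (integrableOn_const (by simp)) ((cone_int hφ _).const_mul _)
    measurableSet_Icc
  intro y hy
  exact cone_ptw ha hφ hx hy

lemma cone_low {a : ℝ} (ha : 0 ≤ a) {φ : ℝ → ℝ} (hφ : Cone a φ) {x : ℝ} (hx : x ∈ Icc (0:ℝ) 1) :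
    ∫ y in Icc (0:ℝ) 1, φ y ≤ Real.exp a * φ x := by
  rw [← int_const_I (Real.exp a * φ x) volume (by simp)]
  apply setIntegral_mono_on (cone_int hφ _) (integrableOn_const (by simp))
    measurableSet_Icc
  intro y hy
  exact cone_ptw ha hφ hy hx

lemma cone_nonneg_int {a : ℝ} {φ : ℝ → ℝ} (hφ : Cone a φ) (μ : Measure ℝ) :
    0 ≤ ∫ y in Icc (0:ℝ) 1, φ y ∂μ :=
  setIntegral_nonneg measurableSet_Icc hφ.1

lemma cone_sub {a a' : ℝ} (ha' : 0 ≤ a') (haa : a' < a) {φ : ℝ → ℝ} (hφ : Cone a' φ) :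
    Cone a (fun x => φ x - (a - a') / a * Real.exp (-(2*a)) * ∫ y in Icc (0:ℝ) 1, φ y) := by
  have ha : 0 < a := by linarith
  set I := ∫ y in Icc (0:ℝ) 1, φ y with hI
  have hI0 : 0 ≤ I := cone_nonneg_int hφ _
  have hlow : ∀ y ∈ Icc (0:ℝ) 1, Real.exp (-a) * I ≤ φ y := by
    intro y hy
    have h1 := cone_low ha' hφ hy
    have h3 := hφ.1 y hy
    have h2 : I ≤ Real.exp a * φ y := h1.trans (by gcongr)
    calc _ ≤ Real.exp (-a) * (Real.exp a * φ y) := by gcongr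
      _ = φ y := by rw [← mul_assoc, ← Real.exp_add]; simp
  have hr1 : (a - a') / a ≤ 1 := by rw [div_le_one ha]; linarith
  have hr0 : 0 ≤ (a - a') / a := div_nonneg (by linarith) ha.le
  constructor
  · intro x hx
    have h1 := hlow x hx
    have h2 : (a - a') / a * Real.exp (-(2*a)) * I ≤ 1 * Real.exp (-a) * I := by
      gcongr; linarith
    linarith
  · intro x hx y hy
    set d := |x - y| with hd
    have hd0 : 0 ≤ d := abs_nonneg _
    have hd1 : d ≤ 1 := by rw [hd, abs_le]; constructor <;> linarith [hx.1, hx.2, hy.1, hy.2]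
    have h1 := hφ.2 x hx y hy
    have h2 := hlow y hy
    have e1 : Real.exp (a*d) - 1 ≤ a * d * Real.exp a := by
      have k1 := Real.add_one_le_exp (-(a*d))
      have k2 : Real.exp (-(a*d)) * Real.exp (a*d) = 1 := by rw [← Real.exp_add]; simp
      have k3 : Real.exp (a*d) ≤ Real.exp a := by apply Real.exp_le_exp.2; nlinarith
      have k4 := Real.exp_pos (a*d)
      have k5 : 0 ≤ a * d := by positivity
      have k6 : (-(a*d)+1) * Real.exp (a*d) ≤ 1 :=
        (mul_le_mul_of_nonneg_right k1 k4.le).trans k2.le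
      nlinarith
    have e2 : (a - a') * d ≤ Real.exp (a*d) - Real.exp (a'*d) := by
      have k1 := Real.add_one_le_exp ((a-a')*d)
      have k2 : Real.exp (a*d) = Real.exp (a'*d) * Real.exp ((a-a')*d) := by
        rw [← Real.exp_add]; ring_nf
      have k3 : 1 ≤ Real.exp (a'*d) := Real.one_le_exp (by positivity)
      have k4 : 0 ≤ (a-a')*d := mul_nonneg (by linarith) hd0
      rw [k2]
      nlinarith
    have e3 : (a - a') / a * Real.exp (-(2*a)) * I * (Real.exp (a*d) - 1) ≤
        φ y * (Real.exp (a*d) - Real.exp (a'*d)) := by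
      calc _ ≤ (a - a') / a * Real.exp (-(2*a)) * I * (a * d * Real.exp a) := by gcongr
        _ = (Real.exp (-a) * I) * ((a - a') * d) := by
          have : Real.exp (-a) = Real.exp (-(2*a)) * Real.exp a := by
            rw [← Real.exp_add]; ring_nf
          rw [this]; field_simp
        _ ≤ φ y * (Real.exp (a*d) - Real.exp (a'*d)) := by
          have : 0 ≤ (a - a') * d := mul_nonneg (by linarith) hd0
          have := hφ.1 y hy
          gcongr
    simp only
    nlinarith

def psi (h : ℝ) (φ : ℝ → ℝ) (k : ℕ) (x : ℝ) : ℝ := |S.g' k x| ^ h * φ (S.g k x)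

def Lop (n : ℕ) (h : ℝ) (φ : ℝ → ℝ) (x : ℝ) : ℝ := ∑ i ∈ Finset.range n, psi S h φ (i+1) x

/-- Uniform constants -/
structure Consts (c α : ℝ) : Prop where
  c0 : 0 < c
  α0 : 0 < α
  α1 : α < 1
  hc : ∀ n, 1 ≤ n → ∀ x ∈ Set.Icc (0 : ℝ) 1, |S.g'' n x / S.g' n x| < c
  hα : ∀ n, 1 ≤ n → ∀ x ∈ Set.Icc (0 : ℝ) 1, |S.g' n x| < α

lemma exists_consts : ∃ c α, Consts S c α := by
  obtain ⟨c, hc0, hc⟩ := S.N3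
  obtain ⟨α, h1, hα⟩ := S.N5
  exact ⟨c, α, hc0, lt_of_le_of_lt (abs_nonneg _) (hα 1 le_rfl 0 (by simp)), h1, hc, hα⟩

variable {S}

lemma Consts.lip {c α : ℝ} (C : Consts S c α) {k : ℕ} (hk : 1 ≤ k) {x y : ℝ}
    (hx : x ∈ Icc (0:ℝ) 1) (hy : y ∈ Icc (0:ℝ) 1) : |S.g k x - S.g k y| ≤ α * |x - y| :=
  ND.lip S hk le_rfl le_rfl (fun z hz => (C.hα k hk z hz).le) hx hy

lemma psi_cone {c α : ℝ} (C : Consts S c α) {a h : ℝ} (ha : 0 ≤ a) (h0 : 0 < h) (h1 : h ≤ 1)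
    {φ : ℝ → ℝ} (hφ : Cone a φ) {k : ℕ} (hk : 1 ≤ k) : Cone (c + α * a) (psi S h φ k) := by
  constructor
  · intro x hx
    exact mul_nonneg (Real.rpow_nonneg (abs_nonneg _) _) (hφ.1 _ (g_mem' S hk hx))
  · intro x hx y hy
    have h2 := hφ.2 _ (g_mem' S hk hx) _ (g_mem' S hk hy)
    have h3 := C.lip hk hx hy
    have h4 := loglip S C.hc hk hx hy
    have hc0 := C.c0
    have h5 : |S.g' k x| ^ h ≤ Real.exp (c * |x - y|) * |S.g' k y| ^ h := by
      calc _ ≤ (Real.exp (c * |x - y|) * |S.g' k y|) ^ h := by gcongr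
        _ = Real.exp (c * |x - y|) ^ h * |S.g' k y| ^ h :=
          Real.mul_rpow (Real.exp_pos _).le (abs_nonneg _)
        _ ≤ Real.exp (c * |x - y|) ^ (1:ℝ) * |S.g' k y| ^ h := by
          gcongr
          exact Real.one_le_exp (by positivity)
        _ = _ := by rw [Real.rpow_one]
    have h6 := hφ.1 _ (g_mem' S hk hy)
    unfold psi
    calc _ ≤ (Real.exp (c * |x - y|) * |S.g' k y| ^ h) *
          (Real.exp (a * (α * |x - y|)) * φ (S.g k y)) := by
            have h7 := hφ.1 _ (g_mem' S hk hx)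
            gcongr
            exact h2.trans (by gcongr)
      _ = _ := by
        rw [show (c + α * a) * |x - y| = c * |x - y| + a * (α * |x-y|) by ring, Real.exp_add]
        ring

lemma Lop_cone {c α : ℝ} (C : Consts S c α) {a h : ℝ} (ha : 0 ≤ a) (h0 : 0 < h) (h1 : h ≤ 1)
    {φ : ℝ → ℝ} (hφ : Cone a φ) (n : ℕ) : Cone (c + α * a) (Lop S n h φ) := by
  constructor
  · intro x hx
    exact Finset.sum_nonneg fun i _ => (psi_cone C ha h0 h1 hφ (by omega)).1 x hx
  · intro x hx y hy
    unfold Lop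
    rw [Finset.mul_sum]
    exact Finset.sum_le_sum fun i _ => (psi_cone C ha h0 h1 hφ (by omega)).2 x hx y hy

lemma sum_adj {μ : Measure ℝ} [IsLocallyFiniteMeasure μ] [NullSingletonClass μ] {φ : ℝ → ℝ}
    (hφ : ContinuousOn φ (Icc (0:ℝ) 1)) {p : ℕ → ℝ} (hp : ∀ i, p (i+1) ≤ p i)
    (hm : ∀ i, p i ∈ Icc (0:ℝ) 1) (n : ℕ) :
    ∑ i ∈ Finset.range n, ∫ x in Icc (p (i+1)) (p i), φ x ∂μ = ∫ x in Icc (p n) (p 0), φ x ∂μ := by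
  have hII : ∀ i j, IntervalIntegrable φ μ (p i) (p j) := by
    intro i j
    apply ContinuousOn.intervalIntegrable
    exact hφ.mono (uIcc_subset_Icc (hm i) (hm j))
  have h1 := intervalIntegral.sum_integral_adjacent_intervals (μ := μ) (f := φ) (a := p) (n := n)
    (fun k _ => hII k (k+1))
  have hanti : Antitone p := antitone_nat_of_succ_le hp
  have key : ∀ i j, i ≤ j → ∫ x in Icc (p j) (p i), φ x ∂μ = - ∫ x in (p i)..(p j), φ x ∂μ := by
    intro i j hij
    rw [integral_Icc_eq_integral_Ioc, intervalIntegral.integral_symm,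
      intervalIntegral.integral_of_le (hanti hij), neg_neg]
  rw [key 0 n (Nat.zero_le _), ← h1, ← Finset.sum_neg_distrib]
  exact Finset.sum_congr rfl fun i _ => key i (i+1) (Nat.le_succ i)

lemma L_m_piece {c α : ℝ} (C : Consts S c α) {a h : ℝ} (ha : 0 ≤ a) (h0 : 0 < h) (h1 : h ≤ 1)
    {φ : ℝ → ℝ} (hφ : Cone a φ) {n : ℕ} {m : Measure ℝ} (hm : Conf S n h m) {k : ℕ} (hk : 1 ≤ k)
    (hkn : k ≤ n) {u v : ℝ} (hu : 0 ≤ u) (huv : u ≤ v) (hv : v ≤ 1) :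
    ∫ x in Icc (S.g k v) (S.g k u), φ x ∂m ≤
      Real.exp (2 * (c + α * a) * (v - u)) * ∫ x in Icc u v, psi S h φ k x ∂m := by
  have := hm.prob
  have hsub : Icc u v ⊆ Icc (0:ℝ) 1 := Icc_subset_Icc hu hv
  have huI : u ∈ Icc (0:ℝ) 1 := hsub ⟨le_rfl, huv⟩
  have hvI : v ∈ Icc (0:ℝ) 1 := hsub ⟨huv, le_rfl⟩
  have hgs : Icc (S.g k v) (S.g k u) ⊆ Icc (0:ℝ) 1 :=
    Icc_subset_Icc (g_mem' S hk hvI).1 (g_mem' S hk huI).2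
  have hψ := psi_cone C ha h0 h1 hφ hk
  have hc0 := C.c0
  have hα0 := C.α0
  set w := v - u with hw
  have hw0 : 0 ≤ w := by linarith
  have s1 : ∫ x in Icc (S.g k v) (S.g k u), φ x ∂m ≤
      ∫ x in Icc (S.g k v) (S.g k u), Real.exp (a * (α * w)) * φ (S.g k u) ∂m := by
    apply setIntegral_mono_on ((cone_int hφ m).mono_set hgs) (integrableOn_const (by simp))
      measurableSet_Icc
    intro y hy
    rw [← image_Icc S hk hu huv hv] at hy
    obtain ⟨x, hx, rfl⟩ := hy
    refine (hφ.2 _ (g_mem' S hk (hsub hx)) _ (g_mem' S hk huI)).trans ?_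
    have h6 := hφ.1 _ (g_mem' S hk huI)
    gcongr
    refine (C.lip hk (hsub hx) huI).trans ?_
    gcongr
    rw [abs_of_nonneg (by linarith [hx.1])]
    linarith [hx.2]
  rw [setIntegral_const, smul_eq_mul] at s1
  have s2 := hm.conf k hk hkn u v (Real.exp (c * w) * |S.g' k u|) hu huv hv (by positivity) (by
    intro x hx
    refine (loglip S C.hc hk (hsub hx) huI).trans ?_
    gcongr
    rw [abs_of_nonneg (by linarith [hx.1])]
    linarith [hx.2])
  have s3 : (Real.exp (c * w) * |S.g' k u|) ^ h ≤ Real.exp (c * w) * |S.g' k u| ^ h := by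
    calc _ = Real.exp (c * w) ^ h * |S.g' k u| ^ h :=
          Real.mul_rpow (Real.exp_pos _).le (abs_nonneg _)
      _ ≤ Real.exp (c * w) ^ (1:ℝ) * |S.g' k u| ^ h := by
        gcongr
        exact Real.one_le_exp (by positivity)
      _ = _ := by rw [Real.rpow_one]
  have s4 : m.real (Icc u v) * psi S h φ k u ≤
      Real.exp ((c + α * a) * w) * ∫ x in Icc u v, psi S h φ k x ∂m := by
    rw [← smul_eq_mul (m.real (Icc u v)), ← setIntegral_const, ← integral_const_mul]
    apply setIntegral_mono_on (integrableOn_const (by simp))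
      (((cone_int hψ m).mono_set hsub).const_mul _) measurableSet_Icc
    intro x hx
    refine (hψ.2 _ huI _ (hsub hx)).trans ?_
    have := hψ.1 _ (hsub hx)
    gcongr
    rw [abs_of_nonpos (by linarith [hx.1])]
    linarith [hx.2]
  have h6 := hφ.1 _ (g_mem' S hk huI)
  calc _ ≤ m.real (Icc (S.g k v) (S.g k u)) * (Real.exp (a * (α * w)) * φ (S.g k u)) := s1
    _ ≤ ((Real.exp (c * w) * |S.g' k u| ^ h) * m.real (Icc u v)) *
        (Real.exp (a * (α * w)) * φ (S.g k u)) := by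
      gcongr
      exact s2.trans (by gcongr)
    _ = Real.exp ((c + α * a) * w) * (m.real (Icc u v) * psi S h φ k u) := by
      rw [show (c + α * a) * w = c * w + a * (α * w) by ring, Real.exp_add]
      unfold psi; ring
    _ ≤ Real.exp ((c + α * a) * w) *
        (Real.exp ((c + α * a) * w) * ∫ x in Icc u v, psi S h φ k x ∂m) := by gcongr
    _ = _ := by
      rw [← mul_assoc, ← Real.exp_add]; ring_nf

lemma L_m_k {c α : ℝ} (C : Consts S c α) {a h : ℝ} (ha : 0 ≤ a) (h0 : 0 < h) (h1 : h ≤ 1)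
    {φ : ℝ → ℝ} (hφ : Cone a φ) {n : ℕ} {m : Measure ℝ} (hm : Conf S n h m) {k : ℕ} (hk : 1 ≤ k)
    (hkn : k ≤ n) :
    ∫ x in Icc (S.b k) (S.b (k-1)), φ x ∂m ≤ ∫ x in Icc 0 1, psi S h φ k x ∂m := by
  have := hm.prob
  have := hm.noat
  have hψ := psi_cone C ha h0 h1 hφ hk
  have hN : ∀ N : ℕ, ∫ x in Icc (S.b k) (S.b (k-1)), φ x ∂m ≤
      Real.exp (2 * (c + α * a) * (1 / ((N:ℝ)+1))) * ∫ x in Icc 0 1, psi S h φ k x ∂m := by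
    intro N
    have hN0 : (0:ℝ) < (N:ℝ) + 1 := by positivity
    -- decreasing partition
    let p : ℕ → ℝ := fun i => max 0 (1 - (i:ℝ) / ((N:ℝ)+1))
    have hp : ∀ i, p (i+1) ≤ p i := by
      intro i
      simp only [p]
      gcongr
      linarith
    have hpI : ∀ i, p i ∈ Icc (0:ℝ) 1 := fun i =>
      ⟨le_max_left _ _, max_le zero_le_one (by
        have : 0 ≤ (i:ℝ) / ((N:ℝ)+1) := by positivity
        linarith)⟩
    have p0 : p 0 = 1 := by simp [p]
    have pN : p (N+1) = 0 := by simp [p, div_self hN0.ne']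
    have hstep : ∀ i ∈ Finset.range (N+1), p i - p (i+1) = 1 / ((N:ℝ)+1) := by
      intro i hi
      have hi' : (i:ℝ) + 1 ≤ (N:ℝ) + 1 := by exact_mod_cast Finset.mem_range.1 hi
      have e1 : ((i:ℝ) + 1) / ((N:ℝ)+1) ≤ 1 := by rw [div_le_one hN0]; exact hi'
      have e2 : (i:ℝ) / ((N:ℝ)+1) ≤ ((i:ℝ) + 1) / ((N:ℝ)+1) := by gcongr; linarith
      simp only [p]
      push_cast
      rw [max_eq_right (by linarith), max_eq_right (by linarith)]
      ring
    have A1 := sum_adj (μ := m) (cone_cont hψ) hp hpI (N+1)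
    rw [p0, pN] at A1
    -- image partition, reversed
    let r : ℕ → ℝ := fun i => S.g k (p (N + 1 - i))
    have hanti : Antitone p := antitone_nat_of_succ_le hp
    have hr : ∀ i, r (i+1) ≤ r i := fun i =>
      (S.g_anti k hk).antitoneOn (hpI _) (hpI _) (hanti (by omega))
    have A2 := sum_adj (μ := m) (cone_cont hφ) hr (fun i => g_mem' S hk (hpI _)) (N+1)
    have r0 : r 0 = S.b (k-1) := by simp [r, pN, S.g_zero k hk]
    have rN : r (N+1) = S.b k := by simp [r, p0, S.g_one k hk]
    rw [r0, rN] at A2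
    rw [← A2, ← A1, ← Finset.sum_range_reflect, Finset.mul_sum]
    apply Finset.sum_le_sum
    intro i hi
    have hi' := Finset.mem_range.1 hi
    have e1 : r (N + 1 - 1 - i + 1) = S.g k (p i) := by
      simp only [r]; congr 2; omega
    have e2 : r (N + 1 - 1 - i) = S.g k (p (i+1)) := by
      simp only [r]; congr 2; omega
    rw [e1, e2]
    have := L_m_piece C ha h0 h1 hφ hm hk hkn (hpI (i+1)).1 (hp i) (hpI i).2
    rwa [hstep i hi] at this
  have ht : Tendsto (fun N : ℕ => Real.exp (2 * (c + α * a) * (1 / ((N:ℝ)+1))) *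
      ∫ x in Icc 0 1, psi S h φ k x ∂m) atTop (𝓝 (Real.exp (2 * (c + α * a) * 0) *
      ∫ x in Icc 0 1, psi S h φ k x ∂m)) :=
    ((Real.continuous_exp.tendsto _).comp
      (tendsto_one_div_add_atTop_nhds_zero_nat.const_mul _)).mul_const _
  rw [mul_zero, Real.exp_zero, one_mul] at ht
  exact ge_of_tendsto' ht hN

lemma L_m {c α : ℝ} (C : Consts S c α) {a h : ℝ} (ha : 0 ≤ a) (h0 : 0 < h) (h1 : h ≤ 1)
    {φ : ℝ → ℝ} (hφ : Cone a φ) {n : ℕ} {m : Measure ℝ} (hm : Conf S n h m) :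
    ∫ x in Icc 0 1, φ x ∂m ≤ ∫ x in Icc 0 1, Lop S n h φ x ∂m := by
  have := hm.prob
  have := hm.noat
  have e1 : ∫ x in Icc 0 1, φ x ∂m = ∫ x in Icc (S.b n) (S.b 0), φ x ∂m := by
    apply setIntegral_congr_set
    rw [S.b_zero]
    have h2 : ∀ᵐ x ∂m, x ∈ Icc (S.b n) 1 := by
      rw [ae_iff]; exact hm.supp
    filter_upwards [h2] with x hx
    have hx' : x ∈ Icc (0:ℝ) 1 := ⟨(b_pos S n).le.trans hx.1, hx.2⟩
    exact propext ⟨fun _ => hx, fun _ => hx'⟩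
  rw [e1, ← sum_adj (μ := m) (cone_cont hφ) (fun i => (S.b_anti (Nat.lt_succ_self i)).le)
    (fun i => ⟨(b_pos S i).le, b_le_one S i⟩)]
  unfold Lop
  rw [integral_finsetSum _ (fun i _ => cone_int (psi_cone C ha h0 h1 hφ (by omega)) m)]
  apply Finset.sum_le_sum
  intro i hi
  exact L_m_k C ha h0 h1 hφ hm (by omega) (Finset.mem_range.1 hi)

lemma L_vol {c α : ℝ} (C : Consts S c α) {a h : ℝ} (ha : 0 ≤ a) (h0 : 0 < h) (h1 : h ≤ 1)
    {φ : ℝ → ℝ} (hφ : Cone a φ) {n : ℕ} (hn : 1 ≤ n) :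
    ∫ x in Icc 0 1, Lop S n h φ x ≤
      (n:ℝ) ^ (1 - h) * (1 + (1 - h) * Real.exp a) * ∫ x in Icc 0 1, φ x := by
  have hn0 : (0:ℝ) < n := by exact_mod_cast hn
  set I := ∫ x in Icc (0:ℝ) 1, φ x with hI
  have hk : ∀ k, 1 ≤ k → ∫ x in Icc 0 1, psi S h φ k x ≤
      (n:ℝ) ^ (1 - h) * ((∫ x in Icc (S.b k) (S.b (k-1)), φ x) + (1 - h) / n * (Real.exp a * I)) := by
    intro k hk
    have hcv := integral_image_eq_integral_abs_deriv_smul (s := Icc (0:ℝ) 1) (f := S.g k)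
      (f' := S.g' k) measurableSet_Icc (fun x hx => (S.deriv1 k hk x hx).hasDerivWithinAt)
      (S.g_anti k hk).injOn φ
    rw [S.g_image k hk] at hcv
    have hcont : ContinuousOn (fun x => |S.g' k x| • φ (S.g k x)) (Icc (0:ℝ) 1) :=
      (g'_cont S hk).abs.smul ((cone_cont hφ).comp (g_cont S hk) (fun x hx => g_mem' S hk hx))
    rw [hcv, ← int_const_I ((1 - h) / n * (Real.exp a * I)) volume (by simp),
      ← integral_add hcont.integrableOn_Icc (integrableOn_const (by simp)), ← integral_const_mul]
    apply setIntegral_mono_on (cone_int (psi_cone C ha h0 h1 hφ hk) _) _ measurableSet_Icc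
    · intro x hx
      have hφ0 := hφ.1 _ (g_mem' S hk hx)
      have hup := cone_up ha hφ (g_mem' S hk hx)
      have am := Real.geom_mean_le_arith_mean2_weighted h0.le (sub_nonneg.2 h1)
        (abs_nonneg (S.g' k x)) (show (0:ℝ) ≤ 1 / n by positivity) (by ring)
      have e1 : (n:ℝ) ^ (1-h) * (1 / (n:ℝ)) ^ (1-h) = 1 := by
        rw [← Real.mul_rpow hn0.le (by positivity), mul_one_div_cancel hn0.ne', Real.one_rpow]
      have e2 : |S.g' k x| ^ h ≤ (n:ℝ) ^ (1-h) * (|S.g' k x| + (1-h) / n) := by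
        calc |S.g' k x| ^ h = (n:ℝ) ^ (1-h) * (|S.g' k x| ^ h * (1 / (n:ℝ)) ^ (1-h)) := by
              rw [mul_left_comm, e1, mul_one]
          _ ≤ (n:ℝ) ^ (1-h) * (|S.g' k x| + (1-h) / n) := by
              gcongr
              refine am.trans ?_
              have : h * |S.g' k x| ≤ 1 * |S.g' k x| := by gcongr
              rw [mul_one_div]; linarith
      unfold psi
      simp only [smul_eq_mul]
      calc _ ≤ (n:ℝ) ^ (1-h) * (|S.g' k x| + (1-h) / n) * φ (S.g k x) := by gcongr
        _ = (n:ℝ) ^ (1-h) * (|S.g' k x| * φ (S.g k x) + (1-h) / n * φ (S.g k x)) := by ring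
        _ ≤ _ := by
          have : 0 ≤ 1 - h := by linarith
          gcongr
    · exact (hcont.integrableOn_Icc.add (integrableOn_const (by simp))).const_mul _
  unfold Lop
  rw [integral_finsetSum _ (fun i _ => cone_int (psi_cone C ha h0 h1 hφ (by omega)) _)]
  refine (Finset.sum_le_sum fun i _ => hk (i+1) (by omega)).trans ?_
  rw [← Finset.mul_sum, Finset.sum_add_distrib]
  simp only [Nat.add_sub_cancel]
  rw [sum_adj (μ := volume) (cone_cont hφ) (fun i => (S.b_anti (Nat.lt_succ_self i)).le)
    (fun i => ⟨(b_pos S i).le, b_le_one S i⟩), Finset.sum_const, Finset.card_range, nsmul_eq_mul]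
  have hle : ∫ x in Icc (S.b n) (S.b 0), φ x ≤ I := by
    apply setIntegral_mono_set (cone_int hφ _)
    · filter_upwards [ae_restrict_mem measurableSet_Icc] with x hx using hφ.1 x hx
    · exact (Icc_subset_Icc (b_pos S n).le (b_le_one S 0)).eventuallyLE
  rw [mul_assoc]
  gcongr
  have : (n:ℝ) * ((1 - h) / n * (Real.exp a * I)) = (1-h) * Real.exp a * I := by field_simp
  rw [this]
  linarith

lemma cone_mono {a a' : ℝ} (h : a ≤ a') {φ : ℝ → ℝ} (hφ : Cone a φ) : Cone a' φ := by
  refine ⟨hφ.1, fun x hx y hy => (hφ.2 x hx y hy).trans ?_⟩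
  have := hφ.1 y hy
  gcongr

lemma conf_I {n : ℕ} {h : ℝ} {m : Measure ℝ} (hm : Conf S n h m) : m.real (Icc (0:ℝ) 1) = 1 := by
  have := hm.prob
  have h1 : m (Icc (0:ℝ) 1)ᶜ = 0 := measure_mono_null
    (compl_subset_compl.2 (Icc_subset_Icc (b_pos S n).le le_rfl)) hm.supp
  rw [Measure.real, (prob_compl_eq_zero_iff measurableSet_Icc).1 h1]
  simp

lemma fixedpt {c α : ℝ} (C : Consts S c α) {a q : ℝ} (haa : c + α * a < a) (hq : 1 < q) :
    ∃ ρ > 1, ∀ n h m, 1 ≤ n → 0 < h → h ≤ 1 → Conf S n h m →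
      (n:ℝ) ^ (1 - h) * (1 + (1 - h) * Real.exp a) ≤ ρ →
      ∀ φ, Cone a φ → ∫ x in Icc 0 1, φ x ∂m ≤ q * ∫ x in Icc 0 1, φ x := by
  have ha : 0 < a := by
    have := C.c0; have := C.α1; nlinarith
  have ha' : 0 ≤ c + α * a := by
    have := C.c0; have := C.α0; positivity
  obtain ⟨β, hβ⟩ : ∃ β, β = (a - (c + α * a)) / a * Real.exp (-(2*a)) := ⟨_, rfl⟩
  have hβ0 : 0 < β := by
    rw [hβ]; exact mul_pos (div_pos (by linarith) ha) (Real.exp_pos _)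
  have hβ1 : β < 1 := by
    rw [hβ]
    have h1 : (a - (c + α * a)) / a ≤ 1 := by rw [div_le_one ha]; linarith
    have h2 : Real.exp (-(2*a)) < 1 := by rw [Real.exp_lt_one_iff]; linarith
    have h3 := Real.exp_pos (-(2*a))
    nlinarith
  have hden : 0 < β + (1-β) * q := by nlinarith
  refine ⟨q / (β + (1-β) * q), ?_, ?_⟩
  · rw [gt_iff_lt, one_lt_div hden]; nlinarith
  intro n h m hn h0 h1 hm hR
  have := hm.prob
  set R := (n:ℝ) ^ (1 - h) * (1 + (1 - h) * Real.exp a) with hRdef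
  have hR0 : 0 ≤ R := by
    have : 0 ≤ 1 - h := by linarith
    positivity
  rw [le_div_iff₀ hden] at hR
  let W : Set ℝ := {M | 0 ≤ M ∧ ∀ φ, Cone a φ → ∫ x in Icc 0 1, φ x ∂m ≤ M * ∫ x in Icc 0 1, φ x}
  have hWne : Real.exp a ∈ W := by
    refine ⟨(Real.exp_pos a).le, fun φ hφ => ?_⟩
    rw [← int_const_I (Real.exp a * ∫ x in Icc 0 1, φ x) m (conf_I hm)]
    exact setIntegral_mono_on (cone_int hφ m) (integrableOn_const (by simp)) measurableSet_Icc
      (fun x hx => cone_up ha.le hφ hx)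
  have hWb : BddBelow W := ⟨0, fun M hM => hM.1⟩
  have hstep : ∀ M ∈ W, R * (β + (1-β) * M) ∈ W := by
    intro M hM
    have hM0 := hM.1
    have hb : 0 ≤ β + (1-β) * M := by
      have : 0 ≤ 1 - β := by linarith
      positivity
    refine ⟨by positivity, fun φ hφ => ?_⟩
    have hL := Lop_cone C ha.le h0 h1 hφ n
    have hsub := cone_sub ha' haa hL
    rw [← hβ] at hsub
    have k1 := hM.2 _ hsub
    rw [integral_sub (cone_int hL m) (integrableOn_const (by simp)),
      integral_sub (cone_int hL _) (integrableOn_const (by simp)),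
      int_const_I _ _ (conf_I hm), int_const_I _ _ (by simp)] at k1
    have k2 := L_m C ha.le h0 h1 hφ hm
    have k3 := L_vol C ha.le h0 h1 hφ hn
    rw [← hRdef] at k3
    have k4 : ∫ x in Icc 0 1, φ x ∂m ≤ (β + (1-β) * M) * ∫ x in Icc 0 1, Lop S n h φ x := by
      linarith
    calc _ ≤ _ := k4
      _ ≤ (β + (1-β) * M) * (R * ∫ x in Icc 0 1, φ x) := by gcongr
      _ = _ := by ring
  set M := sInf W with hMdef
  have hMle : M ≤ q := by
    have hle : M ≤ R * (β + (1-β) * M) := by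
      by_contra hcon
      push Not at hcon
      have hct : Tendsto (fun z => R * (β + (1-β) * z)) (𝓝 M) (𝓝 (R * (β + (1-β) * M))) :=
        (by fun_prop : Continuous fun z => R * (β + (1-β) * z)).tendsto M
      have hev := hct.eventually (Iio_mem_nhds hcon)
      obtain ⟨e, he, hball⟩ := Metric.eventually_nhds_iff.1 hev
      obtain ⟨z, hz, hze⟩ := Real.lt_sInf_add_pos ⟨_, hWne⟩ he
      have hMz : M ≤ z := csInf_le hWb hz
      have : R * (β + (1-β) * z) < M := hball (y := z) (by rw [Real.dist_eq, abs_of_nonneg (by linarith)]; linarith)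
      have h3 := csInf_le hWb (hstep z hz)
      linarith
    by_contra hcon
    push Not at hcon
    have hlt : R * (1-β) < 1 := by
      have : R * (1-β) * q < 1 * q := by nlinarith [mul_nonneg hR0 hβ0.le, sq_nonneg R]
      exact lt_of_mul_lt_mul_right this (by linarith)
    nlinarith
  intro φ hφ
  have hI := cone_nonneg_int hφ volume
  refine le_of_forall_pos_le_add fun e he => ?_
  obtain ⟨z, hz, hze⟩ := Real.lt_sInf_add_pos ⟨_, hWne⟩
    (show 0 < e / (1 + ∫ x in Icc 0 1, φ x) by positivity)
  have h4 := hz.2 φ hφ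
  have h5 : e / (1 + ∫ x in Icc 0 1, φ x) * (∫ x in Icc 0 1, φ x) ≤ e := by
    rw [div_mul_eq_mul_div, div_le_iff₀ (by positivity)]
    nlinarith
  have h6 : z ≤ q + e / (1 + ∫ x in Icc 0 1, φ x) := by linarith
  nlinarith

variable (S)

lemma h_le (n : ℕ) (hn : 1 ≤ n) : S.h n ≤ 1 := by
  have h1 := S.h_dim n hn
  have h2 : dimH (limitSet S.g n) ≤ 1 := (dimH_mono (subset_univ _)).trans Real.dimH_univ.le
  rw [h1, ← ENNReal.ofReal_one] at h2
  exact (ENNReal.ofReal_le_ofReal_iff zero_le_one).1 h2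

lemma h_tend : Tendsto S.h atTop (𝓝 1) := by
  have h1 : Tendsto (fun n => 1 - S.h n) atTop (𝓝 0) := by
    refine tendsto_of_tendsto_of_tendsto_of_le_of_le' tendsto_const_nhds S.N1 ?_ ?_
    · filter_upwards [eventually_ge_atTop 1] with n hn
      linarith [h_le S n hn]
    · filter_upwards [eventually_ge_atTop 3] with n hn
      have h2 : 1 ≤ Real.log n := by
        rw [Real.le_log_iff_exp_le (by positivity)]
        have : (3:ℝ) ≤ n := by exact_mod_cast hn
        linarith [Real.exp_one_lt_d9]
      have h3 := h_le S n (by omega)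
      nlinarith
  simpa using (tendsto_const_nhds (x := (1:ℝ))).sub h1

lemma npow_tend : Tendsto (fun n : ℕ => (n:ℝ) ^ (1 - S.h n)) atTop (𝓝 1) := by
  have h1 := (Real.continuous_exp.tendsto 0).comp S.N1
  rw [Real.exp_zero] at h1
  refine h1.congr' ?_
  filter_upwards [eventually_ge_atTop 1] with n hn
  have : (0:ℝ) < n := by exact_mod_cast hn
  rw [Real.rpow_def_of_pos this, Function.comp, mul_comm]

lemma lemA (a : ℝ) {q : ℝ} (hq : 1 < q) : ∀ᶠ n in atTop, ∀ m, Conf S n (S.h n) m →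
    ∀ φ, Cone a φ → ∫ x in Icc 0 1, φ x ∂m ≤ q * ∫ x in Icc 0 1, φ x := by
  obtain ⟨c, α, C⟩ := exists_consts S
  have h1α : 0 < 1 - α := by linarith [C.α1]
  set A := max a (c / (1-α) + 1) with hA
  have hA1 : c + α * A < A := by
    have : c / (1-α) < A := lt_of_lt_of_le (by linarith) (le_max_right _ _)
    rw [div_lt_iff₀ h1α] at this
    linarith
  obtain ⟨ρ, hρ, H⟩ := fixedpt C hA1 hq
  have ht : Tendsto (fun n : ℕ => (n:ℝ) ^ (1 - S.h n) * (1 + (1 - S.h n) * Real.exp A)) atTop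
      (𝓝 (1 * (1 + (1 - 1) * Real.exp A))) :=
    (npow_tend S).mul (((tendsto_const_nhds.sub (h_tend S)).mul_const _).const_add _)
  simp only [sub_self, zero_mul, add_zero, mul_one] at ht
  filter_upwards [ht.eventually (Iio_mem_nhds hρ), eventually_ge_atTop 1,
    (h_tend S).eventually (Ioi_mem_nhds zero_lt_one)] with n hn hn1 hn0 m hm φ hφ
  exact H n _ m hn1 hn0 (h_le S n hn1) hm (le_of_lt hn) φ (cone_mono (le_max_left _ _) hφ)

lemma lemB {δ q : ℝ} (hδ : 0 < δ) (hq : 1 < q) : ∀ᶠ n in atTop, ∀ m, Conf S n (S.h n) m →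
    ∀ s t, 0 ≤ s → t ≤ 1 → δ ≤ t - s → m.real (Icc s t) ≤ q ^ 2 * (t - s) ^ S.h n := by
  set r := δ * (q-1) / 3 with hr
  have hr0 : 0 < r := by
    have : 0 < q - 1 := by linarith
    positivity
  set a := |Real.log r| / r with ha
  have ha0 : 0 ≤ a := by positivity
  filter_upwards [lemA S a hq, eventually_ge_atTop 1] with n hA hn1 m hm s t hs ht hst
  have := hm.prob
  set d : ℝ → ℝ := fun x => max 0 (max (s - x) (x - t)) with hd
  have hdl : ∀ x y, d y ≤ d x + |x - y| := by
    intro x y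
    have h1 := le_abs_self (x - y)
    have h2 := neg_abs_le (x - y)
    have h3 := abs_nonneg (x - y)
    have k1 := le_max_left 0 (max (s - x) (x - t))
    have k2 := (le_max_left (s - x) (x - t)).trans (le_max_right 0 _)
    have k3 := (le_max_right (s - x) (x - t)).trans (le_max_right 0 _)
    refine max_le (by simp only [hd]; linarith) (max_le ?_ ?_) <;> simp only [hd] <;> linarith
  have hcone : Cone a (fun x => Real.exp (-(a * d x))) := by
    refine ⟨fun x _ => (Real.exp_pos _).le, fun x _ y _ => ?_⟩
    simp only
    rw [← Real.exp_add]
    apply Real.exp_le_exp.2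
    have := mul_le_mul_of_nonneg_left (hdl x y) ha0
    linarith
  have k1 := hA m hm _ hcone
  have hsub : Icc s t ⊆ Icc (0:ℝ) 1 := Icc_subset_Icc hs ht
  have k2 : m.real (Icc s t) ≤ ∫ x in Icc 0 1, Real.exp (-(a * d x)) ∂m := by
    have e1 : m.real (Icc s t) = ∫ x in Icc s t, Real.exp (-(a * d x)) ∂m := by
      rw [setIntegral_congr_fun (g := fun _ => (1:ℝ)) measurableSet_Icc, setIntegral_const]
      · simp
      · intro x hx
        have : d x = 0 := by
          simp only [hd]
          rw [max_eq_left]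
          exact max_le (by linarith [hx.1]) (by linarith [hx.2])
        simp [this]
    rw [e1]
    apply setIntegral_mono_set (cone_int hcone _)
    · filter_upwards with x using (Real.exp_pos _).le
    · exact hsub.eventuallyLE
  have k3 : ∫ x in Icc 0 1, Real.exp (-(a * d x)) ≤ r + (t - s + 2 * r) := by
    have hindi : IntegrableOn (indicator (Icc (s-r) (t+r)) (fun _ => (1:ℝ))) (Icc (0:ℝ) 1) :=
      (integrableOn_const (by simp)).indicator measurableSet_Icc
    have hcst : IntegrableOn (fun _ : ℝ => r) (Icc (0:ℝ) 1) := integrableOn_const (by simp)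
    have hadd : IntegrableOn (fun x => r + indicator (Icc (s-r) (t+r)) (fun _ => (1:ℝ)) x)
      (Icc (0:ℝ) 1) := hcst.add hindi
    calc _ ≤ ∫ x in Icc (0:ℝ) 1, (r + indicator (Icc (s-r) (t+r)) (fun _ => (1:ℝ)) x) := by
          apply setIntegral_mono_on (cone_int hcone _)
            hadd measurableSet_Icc
          intro x hx
          by_cases hxr : x ∈ Icc (s-r) (t+r)
          · rw [indicator_of_mem hxr]
            have : Real.exp (-(a * d x)) ≤ 1 := by
              rw [Real.exp_le_one_iff]
              have : 0 ≤ d x := le_max_left _ _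
              have := mul_nonneg ha0 this
              linarith
            linarith
          · rw [indicator_of_notMem hxr, add_zero]
            have hdr : r ≤ d x := by
              by_contra hcon
              push Not at hcon
              have h1 := (le_max_left (s-x) (x-t)).trans (le_max_right 0 _)
              have h2 := (le_max_right (s-x) (x-t)).trans (le_max_right 0 _)
              simp only [hd] at hcon
              exact hxr ⟨by linarith, by linarith⟩
            rw [← Real.le_log_iff_exp_le hr0]
            have h3 : a * r = |Real.log r| := by rw [ha]; field_simp
            have h4 := mul_le_mul_of_nonneg_left hdr ha0
            have h5 := neg_abs_le (Real.log r)
            linarith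
      _ = r + volume.real (Icc (s-r) (t+r) ∩ Icc 0 1) := by
          rw [integral_add hcst hindi, int_const_I _ _ (by simp),
            integral_indicator measurableSet_Icc, Measure.restrict_restrict measurableSet_Icc,
            setIntegral_const]
          simp
      _ ≤ r + volume.real (Icc (s-r) (t+r)) := by
          gcongr
          · simp
          · exact inter_subset_left
      _ = _ := by
          rw [Real.volume_real_Icc_of_le (by linarith)]; ring
  have k4 : r + (t - s + 2 * r) ≤ q * (t - s) := by
    have : 3 * r = δ * (q - 1) := by rw [hr]; ring
    nlinarith
  have hts0 : 0 < t - s := by linarith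
  have k5 : t - s ≤ (t - s) ^ S.h n := by
    nth_rewrite 1 [← Real.rpow_one (t - s)]
    exact Real.rpow_le_rpow_of_exponent_ge hts0 (by linarith) (h_le S n hn1)
  calc _ ≤ q * ∫ x in Icc 0 1, Real.exp (-(a * d x)) := k2.trans k1
    _ ≤ q * (q * (t - s) ^ S.h n) := by
      have : q * (t - s) ≤ q * (t - s) ^ S.h n := by gcongr
      gcongr
      linarith
    _ = _ := by ring

lemma holder {h X : ℝ} (h0 : 0 < h) (h1 : h ≤ 1) (hX : 0 < X) {n : ℕ} (hn : 1 ≤ n) {l : ℕ → ℝ}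
    (hl : ∀ i, 0 ≤ l i) (hs : ∑ i ∈ Finset.range n, l i ≤ X) :
    ∑ i ∈ Finset.range n, l i ^ h ≤ (n:ℝ) ^ (1-h) * X ^ h := by
  have hn0 : (0:ℝ) < n := by exact_mod_cast hn
  have key : ∀ i, l i ^ h ≤ (n:ℝ) ^ (1-h) * X ^ h * (h * (l i / X) + (1-h) * (1 / n)) := by
    intro i
    have am := Real.geom_mean_le_arith_mean2_weighted h0.le (sub_nonneg.2 h1)
      (div_nonneg (hl i) hX.le) (show (0:ℝ) ≤ 1 / n by positivity) (by ring)
    have e1 : (n:ℝ) ^ (1-h) * (1 / (n:ℝ)) ^ (1-h) = 1 := by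
      rw [← Real.mul_rpow hn0.le (by positivity), mul_one_div_cancel hn0.ne', Real.one_rpow]
    have e2 : X ^ h * (l i / X) ^ h = l i ^ h := by
      rw [← Real.mul_rpow hX.le (div_nonneg (hl i) hX.le), mul_div_cancel₀ _ hX.ne']
    calc l i ^ h = (n:ℝ) ^ (1-h) * X ^ h * ((l i / X) ^ h * (1 / (n:ℝ)) ^ (1-h)) := by
          rw [← e2]
          calc _ = X ^ h * (l i / X) ^ h * ((n:ℝ) ^ (1-h) * (1 / (n:ℝ)) ^ (1-h)) := by
                rw [e1, mul_one]
            _ = _ := by ring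
      _ ≤ _ := by gcongr
  refine (Finset.sum_le_sum fun i _ => key i).trans ?_
  rw [← Finset.mul_sum, Finset.sum_add_distrib, ← Finset.mul_sum, ← Finset.sum_div,
    Finset.sum_const, Finset.card_range, nsmul_eq_mul]
  have e3 : (n:ℝ) * ((1-h) * (1/n)) = 1 - h := by field_simp
  have e4 : (∑ i ∈ Finset.range n, l i) / X ≤ 1 := by rwa [div_le_one hX]
  rw [e3]
  have : h * ((∑ i ∈ Finset.range n, l i) / X) + (1-h) ≤ 1 := by nlinarith
  calc _ ≤ (n:ℝ) ^ (1-h) * X ^ h * 1 := by gcongr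
    _ = _ := mul_one _

variable {S}

lemma transfer {n : ℕ} {h : ℝ} (h0 : 0 < h) (h1 : h ≤ 1) {m : Measure ℝ} (hm : Conf S n h m)
    {k : ℕ} (hk : 1 ≤ k) (hkn : k ≤ n) {u v κ B : ℝ} (hu : 0 ≤ u) (huv : u < v) (hv : v ≤ 1)
    (hκ : 1 ≤ κ) (hd : ∀ x ∈ Icc u v, ∀ y ∈ Icc u v, |S.g' k y| ≤ κ * |S.g' k x|)
    (hB0 : 0 ≤ B) (hB : m.real (Icc u v) ≤ B * (v - u) ^ h) :
    m.real (Icc (S.g k v) (S.g k u)) ≤ κ * B * (S.g k u - S.g k v) ^ h := by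
  obtain ⟨z, hz, he⟩ := mvt S hk hu huv hv
  have h2 := hm.conf k hk hkn u v (κ * |S.g' k z|) hu huv.le hv (by positivity)
    (fun x hx => hd z hz x hx)
  have h3 : κ ^ h ≤ κ := by
    calc κ ^ h ≤ κ ^ (1:ℝ) := by gcongr
      _ = κ := Real.rpow_one _
  have hvu : 0 ≤ v - u := by linarith
  rw [he]
  calc _ ≤ (κ * |S.g' k z|) ^ h * (B * (v - u) ^ h) := h2.trans (by gcongr)
    _ = κ ^ h * B * (|S.g' k z| * (v - u)) ^ h := by
      rw [Real.mul_rpow (by positivity) (abs_nonneg _), Real.mul_rpow (abs_nonneg _) hvu]; ring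
    _ ≤ _ := by gcongr

lemma find_idx {x : ℝ} (hx : 0 < x) (hx1 : x < 1) : ∃ i, S.b (i+1) ≤ x ∧ x < S.b i := by
  have hex : ∃ j, S.b j ≤ x := by
    obtain ⟨j, hj⟩ := (S.b_lim.eventually (Iio_mem_nhds hx)).exists
    exact ⟨j, le_of_lt hj⟩
  classical
  have h1 := Nat.find_spec hex
  have h2 : Nat.find hex ≠ 0 := by
    intro h; rw [h, S.b_zero] at h1; linarith
  obtain ⟨i, hi⟩ := Nat.exists_eq_succ_of_ne_zero h2
  refine ⟨i, by rwa [hi] at h1, ?_⟩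
  have := Nat.find_min hex (m := i) (by omega)
  exact not_le.1 this

lemma sumBound {n : ℕ} (hn : 1 ≤ n) {h : ℝ} (h0 : 0 < h) (h1 : h ≤ 1) {m : Measure ℝ}
    (hm : Conf S n h m) {s t B : ℝ} (hst : s < t) (hB0 : 0 ≤ B) {p : ℕ → ℝ}
    (hp : p = fun k => max s (min t (S.b k)))
    (hB : ∀ i, i < n → p (i+1) < p i →
      m.real (Icc (p (i+1)) (p i)) ≤ B * (p i - p (i+1)) ^ h) :
    m.real (Icc s t) ≤ B * (n:ℝ) ^ (1-h) * (t - s) ^ h := by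
  have := hm.prob
  have := hm.noat
  have hanti : ∀ i, p (i+1) ≤ p i := by
    intro i
    have := (S.b_anti (Nat.lt_succ_self i)).le
    rw [hp]; simp only
    gcongr
  have hcov : Icc s t ⊆ (Icc (S.b n) 1)ᶜ ∪ ⋃ i ∈ Finset.range n, Icc (p (i+1)) (p i) := by
    intro x hx
    by_cases hxb : x ∈ Icc (S.b n) 1
    · right
      have hexi : ∃ i < n, S.b (i+1) ≤ x ∧ x ≤ S.b i := by
        rcases eq_or_lt_of_le hxb.2 with h | h
        · exact ⟨0, by omega, by rw [h]; exact b_le_one S _, by rw [h, S.b_zero]⟩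
        · obtain ⟨i, hi1, hi2⟩ := find_idx (S := S) ((b_pos S n).trans_le hxb.1) h
          refine ⟨i, ?_, hi1, hi2.le⟩
          by_contra hcon
          have := S.b_anti.antitone (not_lt.1 hcon)
          linarith [hxb.1]
      obtain ⟨i, hi, hi1, hi2⟩ := hexi
      refine mem_biUnion (Finset.mem_coe.2 (Finset.mem_range.2 hi)) ?_
      rw [hp]
      exact ⟨max_le hx.1 ((min_le_right _ _).trans hi1), le_max_of_le_right (le_min hx.2 hi2)⟩
    · left; exact hxb
  have hpiece : ∀ i ∈ Finset.range n, m.real (Icc (p (i+1)) (p i)) ≤ B * (p i - p (i+1)) ^ h := by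
    intro i hi
    rcases eq_or_lt_of_le (hanti i) with he | hlt
    · rw [he, Icc_self, Measure.real, measure_singleton]
      simp [Real.zero_rpow h0.ne']
    · exact hB i (Finset.mem_range.1 hi) hlt
  have e0 : m.real (Icc (S.b n) 1)ᶜ = 0 := by rw [Measure.real, hm.supp]; rfl
  calc m.real (Icc s t) ≤ m.real ((Icc (S.b n) 1)ᶜ ∪ ⋃ i ∈ Finset.range n, Icc (p (i+1)) (p i)) :=
        measureReal_mono hcov
    _ ≤ m.real (Icc (S.b n) 1)ᶜ + m.real (⋃ i ∈ Finset.range n, Icc (p (i+1)) (p i)) :=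
        measureReal_union_le _ _
    _ ≤ 0 + ∑ i ∈ Finset.range n, m.real (Icc (p (i+1)) (p i)) := by
        rw [e0]; gcongr; exact measureReal_biUnion_finset_le _ _
    _ ≤ 0 + ∑ i ∈ Finset.range n, B * (p i - p (i+1)) ^ h := by
        gcongr with i hi; exact hpiece i hi
    _ = B * ∑ i ∈ Finset.range n, (p i - p (i+1)) ^ h := by rw [zero_add, Finset.mul_sum]
    _ ≤ B * ((n:ℝ) ^ (1-h) * (t - s) ^ h) := by
        gcongr
        apply holder h0 h1 (by linarith) hn (fun i => by linarith [hanti i])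
        rw [Finset.sum_range_sub']
        have a1 : p 0 ≤ t := by rw [hp]; exact max_le hst.le (min_le_left _ _)
        have a2 : s ≤ p n := by rw [hp]; exact le_max_left _ _
        linarith
    _ = _ := by ring

variable (S)

lemma crossing {q : ℝ} (hq : 1 < q) : ∃ δ > 0, ∀ᶠ n in atTop, ∀ m, Conf S n (S.h n) m →
    ∀ s t, 0 ≤ s → s < t → t ≤ 1 → t - s < δ →
    (∀ k, 1 ≤ k → k ≤ n → ¬ (S.b k ≤ s ∧ t ≤ S.b (k-1))) →
    m.real (Icc s t) ≤ q ^ 6 * (t - s) ^ S.h n := by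
  obtain ⟨δ, hδ, hsd⟩ := smallDist S hq
  obtain ⟨K, hK⟩ := N2' S hq
  obtain ⟨K1, hK1, hK1b⟩ := ((eventually_ge_atTop K).and
    (S.b_lim.eventually (Iio_mem_nhds hδ))).exists
  have hb1 : 0 < 1 - S.b 1 := by
    have := S.b_anti zero_lt_one
    rw [S.b_zero] at this; linarith
  refine ⟨δ, hδ, ?_⟩
  filter_upwards [lemB S (b_pos S K1) hq, lemB S (lt_min hδ hb1) hq, eventually_ge_atTop 1,
    (h_tend S).eventually (Ioi_mem_nhds zero_lt_one),
    (npow_tend S).eventually (Iio_mem_nhds hq)] with n hB1 hB2 hn h0 hnq m hm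
  have hB1 := hB1 m hm
  have hB2 := hB2 m hm
  have h1 := h_le S n hn
  have hnq : (n:ℝ) ^ (1 - S.h n) ≤ q := le_of_lt hnq
  have h0 : 0 < S.h n := h0
  set h := S.h n with hh
  have := hm.prob
  have q23 : q ^ 2 ≤ q ^ 3 := pow_le_pow_right₀ hq.le (by norm_num)
  have q24 : q ^ 2 ≤ q ^ 4 := pow_le_pow_right₀ hq.le (by norm_num)
  have q34 : q ^ 3 ≤ q ^ 4 := pow_le_pow_right₀ hq.le (by norm_num)
  have hq0 : 0 < q := by linarith
  have end0 : ∀ x, 0 < x → x ≤ 1 → m.real (Icc 0 x) ≤ q ^ 3 * (x - 0) ^ h := by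
    intro x hx0 hx1
    by_cases hxK : S.b K1 ≤ x
    · refine (hB1 0 x le_rfl hx1 (by linarith)).trans ?_
      have : 0 ≤ x - 0 := by linarith
      gcongr
    · push Not at hxK
      obtain ⟨k, hk1, hk2⟩ := find_idx (S := S) hx0 (hxK.trans_le (b_le_one S _))
      have hKk : K1 ≤ k := by
        by_contra hcon
        have := S.b_anti.antitone (show k + 1 ≤ K1 by omega)
        linarith
      have hbk : S.b k < δ := (S.b_anti.antitone hKk).trans_lt hK1b
      have hsum := sumBound hn h0 h1 hm (s := 0) (t := S.b k) (B := q) (b_pos S k) hq0.le rfl (by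
        intro i hi hlt
        have hki : k ≤ i := by
          by_contra hcon
          have a1 := S.b_anti.antitone (show i + 1 ≤ k by omega)
          have a2 := S.b_anti.antitone (show i ≤ k by omega)
          rw [min_eq_left a1, min_eq_left a2] at hlt
          exact lt_irrefl _ hlt
        have a1 := S.b_anti.antitone (show k ≤ i + 1 by omega)
        have a2 := S.b_anti.antitone hki
        simp only [min_eq_right a1, min_eq_right a2, max_eq_right (b_pos S _).le]
        have hg0 := S.g_zero (i+1) (by omega)
        have hg1 := S.g_one (i+1) (by omega)
        rw [Nat.add_sub_cancel] at hg0
        have ht := transfer h0 h1 hm (k := i+1) (by omega) (by omega) (u := 0) (v := 1) (κ := q)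
          (B := 1) le_rfl zero_lt_one le_rfl hq.le
          (hsd (i+1) (by omega) 0 1 le_rfl zero_lt_one le_rfl (by
            rw [hg0, hg1]; linarith [b_pos S (i+1)])) zero_le_one (by
            rw [conf_I hm]; simp)
        rw [hg0, hg1, mul_one] at ht
        exact ht)
      rw [sub_zero] at hsum ⊢
      have hbq : S.b k ≤ q * x := (hK k (by omega)).trans (by gcongr)
      have hqh : q ^ h ≤ q := by
        calc q ^ h ≤ q ^ (1:ℝ) := by gcongr; exact hq.le
          _ = q := Real.rpow_one _
      have hbp := (b_pos S k).le
      calc m.real (Icc 0 x) ≤ m.real (Icc 0 (S.b k)) :=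
            measureReal_mono (Icc_subset_Icc le_rfl hk2.le)
        _ ≤ _ := hsum
        _ ≤ q * q * (q * x) ^ h := by gcongr
        _ = q * q * (q ^ h * x ^ h) := by rw [Real.mul_rpow hq0.le hx0.le]
        _ ≤ q * q * (q * x ^ h) := by gcongr
        _ = _ := by ring
  have end1 : ∀ x, 0 ≤ x → x < 1 → m.real (Icc x 1) ≤ q ^ 4 * (1 - x) ^ h := by
    intro x hx0 hx1
    by_cases hxK : min δ (1 - S.b 1) ≤ 1 - x
    · refine (hB2 x 1 hx0 le_rfl hxK).trans ?_
      have : 0 ≤ 1 - x := by linarith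
      gcongr
    · push Not at hxK
      have hx2 := hxK.trans_le (min_le_left _ _)
      have hx3 := hxK.trans_le (min_le_right _ _)
      obtain ⟨u, v, hu, huv, hv, hgu, hgv⟩ := preimage_ex S (k := 1) le_rfl (p := x) (r := 1)
        (by linarith) hx1 (by simp [S.b_zero])
      have hu0 : u = 0 := by
        apply (S.g_anti 1 le_rfl).injOn ⟨hu, by linarith⟩ (by simp)
        rw [hgu, S.g_zero 1 le_rfl]; simp [S.b_zero]
      subst hu0
      have ht := transfer h0 h1 hm (k := 1) le_rfl hn (u := 0) (v := v) (κ := q)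
          (B := q ^ 3) le_rfl huv hv hq.le
          (hsd 1 le_rfl 0 v le_rfl huv hv (by rw [hgu, hgv]; exact hx2)) (by positivity)
          (end0 v huv hv)
      rw [hgu, hgv] at ht
      calc _ ≤ _ := ht
        _ = _ := by ring
  intro s t hs hst ht hlen hno
  set p : ℕ → ℝ := fun k => max s (min t (S.b k)) with hp
  have hsum := sumBound hn h0 h1 hm (B := q ^ 5) hst (by positivity) hp (by
    intro i hi hlt
    have hpt : ∀ j, p j ≤ t := fun j => max_le hst.le (min_le_left _ _)
    have hps : ∀ j, s ≤ p j := fun j => le_max_left _ _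
    have c1 : S.b (i+1) ≤ p (i+1) := by
      by_contra hcon
      push Not at hcon
      have h2 : min t (S.b (i+1)) < S.b (i+1) := (le_max_right _ _).trans_lt hcon
      have h3 : t < S.b (i+1) := by
        rcases min_lt_iff.1 h2 with h | h
        · exact h
        · exact absurd h (lt_irrefl _)
      have h4 : t ≤ p (i+1) := by
        simp only [hp]; rw [min_eq_left h3.le]; exact le_max_right _ _
      linarith [hpt i]
    have c2 : p i ≤ S.b i := by
      by_contra hcon
      push Not at hcon
      rcases lt_max_iff.1 hcon with h | h
      · have : p i = s := by
          simp only [hp]; rw [max_eq_left]; exact (min_le_right _ _).trans h.le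
        linarith [hps (i+1)]
      · exact absurd (h.trans_le (min_le_right _ _)) (lt_irrefl _)
    obtain ⟨u, v, hu, huv, hv, hgu, hgv⟩ := preimage_ex S (k := i+1) (by omega) c1 hlt
      (by simpa using c2)
    have huvB : m.real (Icc u v) ≤ q ^ 4 * (v - u) ^ h := by
      have hno' := hno (i+1) (by omega) (by omega)
      rw [Nat.add_sub_cancel] at hno'
      by_cases hc : S.b (i+1) ≤ s
      · have htb : S.b i < t := by
          by_contra hcon
          exact hno' ⟨hc, not_lt.1 hcon⟩
        have hpi : p i = S.b i := by
          apply le_antisymm c2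
          simp only [hp]; rw [min_eq_right htb.le]; exact le_max_right _ _
        have hu0 : u = 0 := by
          apply (S.g_anti (i+1) (by omega)).injOn ⟨hu, by linarith⟩ (by simp)
          rw [hgu, S.g_zero (i+1) (by omega), hpi]; simp
        subst hu0
        refine (end0 v huv hv).trans ?_
        have : 0 ≤ v - 0 := by linarith
        gcongr
      · push Not at hc
        have hpi : p (i+1) = S.b (i+1) := by
          refine le_antisymm ?_ c1
          exact max_le hc.le (min_le_right _ _)
        have hv1 : v = 1 := by
          apply (S.g_anti (i+1) (by omega)).injOn ⟨by linarith, hv⟩ (by simp)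
          rw [hgv, S.g_one (i+1) (by omega), hpi]
        subst hv1
        exact end1 u hu huv
    have htr := transfer h0 h1 hm (k := i+1) (by omega) (by omega) (κ := q)
          (B := q ^ 4) hu huv hv hq.le
          (hsd (i+1) (by omega) u v hu huv hv (by
            rw [hgu, hgv]; linarith [hpt i, hps (i+1)])) (by positivity) huvB
    rw [hgu, hgv] at htr
    calc _ ≤ _ := htr
      _ = _ := by ring)
  have hts : 0 ≤ t - s := by linarith
  calc _ ≤ _ := hsum
    _ ≤ q ^ 5 * q * (t - s) ^ h := by gcongr
    _ = _ := by ring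


def Good (m : Measure ℝ) (h B Cc lam : ℝ) : ℕ → ℝ → ℝ → Prop
  | 0, s, t => 0 ≤ s ∧ s < t ∧ t ≤ 1 ∧ t - s ≤ lam ∧
      m.real (Icc s t) ≤ B * Real.exp (Cc * (lam - (t - s))) * (t - s) ^ h
  | i+1, s, t => ∃ r, Good m h B Cc lam i s r ∧ Good m h B Cc lam i r t

variable {S}

lemma Good_image {n : ℕ} {h : ℝ} (h0 : 0 < h) (h1 : h ≤ 1) {m : Measure ℝ} (hm : Conf S n h m)
    {c α : ℝ} (C : Consts S c α) {B lam : ℝ} (hB : 0 ≤ B) {k : ℕ} (hk : 1 ≤ k) (hkn : k ≤ n)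
    (i : ℕ) : ∀ u v, Good m h B (c / (1-α)) lam i u v →
      Good m h B (c / (1-α)) lam i (S.g k v) (S.g k u) := by
  induction i with
  | zero =>
    rintro u v ⟨hu, huv, hv, hl, hb⟩
    have hα1 := C.α1
    have hα0 := C.α0
    have hc0 := C.c0
    have hlt := g_lt S hk hu huv hv
    have hU : u ∈ Icc (0:ℝ) 1 := ⟨hu, by linarith⟩
    have hV : v ∈ Icc (0:ℝ) 1 := ⟨by linarith, hv⟩
    have hlip := C.lip hk hU hV
    rw [abs_of_pos (by linarith), abs_sub_comm, abs_of_pos (by linarith)] at hlip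
    have hαu : α * (v - u) ≤ v - u := by nlinarith
    refine ⟨(g_mem' S hk hV).1, hlt, (g_mem' S hk hU).2, by linarith, ?_⟩
    have ht := transfer h0 h1 hm hk hkn (κ := Real.exp (c * (v - u)))
      (B := B * Real.exp (c / (1-α) * (lam - (v - u)))) hu huv hv
      (Real.one_le_exp (mul_nonneg hc0.le (by linarith)))
      (fun x hx y hy => by
        refine (loglip S C.hc hk (x := y) (y := x) ⟨by linarith [hy.1], by linarith [hy.2]⟩
          ⟨by linarith [hx.1], by linarith [hx.2]⟩).trans ?_
        have : |y - x| ≤ v - u := abs_le.2 ⟨by linarith [hx.2, hy.1], by linarith [hx.1, hy.2]⟩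
        gcongr) (by positivity) hb
    refine ht.trans ?_
    have hpos : 0 ≤ S.g k u - S.g k v := by linarith
    have e : Real.exp (c * (v - u)) * (B * Real.exp (c / (1-α) * (lam - (v - u)))) =
        B * Real.exp (c * (v - u) + c / (1-α) * (lam - (v - u))) := by
      rw [Real.exp_add]; ring
    rw [e]
    have hD : 0 ≤ c / (1 - α) := div_nonneg hc0.le (by linarith)
    have hcD : c = c / (1-α) * (1-α) := by
      have : (1:ℝ) - α ≠ 0 := by linarith
      field_simp
    have : c * (v - u) + c / (1-α) * (lam - (v - u)) ≤
        c / (1-α) * (lam - (S.g k u - S.g k v)) := by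
      generalize c / (1-α) = D at *
      rw [hcD]
      nlinarith
    gcongr
  | succ i ih =>
    rintro u v ⟨r, hr1, hr2⟩
    exact ⟨_, ih _ _ hr2, ih _ _ hr1⟩

lemma Good_bound {h : ℝ} (h0 : 0 < h) (h1 : h ≤ 1) {m : Measure ℝ} [IsProbabilityMeasure m]
    {B Cc lam : ℝ} (hB : 0 ≤ B) (hC : 0 ≤ Cc) (i : ℕ) : ∀ s t, Good m h B Cc lam i s t →
      s < t ∧ m.real (Icc s t) ≤ ((2:ℝ)^(1-h))^i * (B * Real.exp (Cc*lam)) * (t-s)^h := by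
  induction i with
  | zero =>
    rintro s t ⟨hs, hst, ht, hl, hb⟩
    refine ⟨hst, hb.trans ?_⟩
    have : 0 ≤ t - s := by linarith
    have h2 : Cc * (lam - (t - s)) ≤ Cc * lam := by
      apply mul_le_mul_of_nonneg_left _ hC; linarith
    rw [pow_zero, one_mul]
    gcongr
  | succ i ih =>
    rintro s t ⟨r, hr1, hr2⟩
    obtain ⟨a1, a2⟩ := ih _ _ hr1
    obtain ⟨b1, b2⟩ := ih _ _ hr2
    refine ⟨a1.trans b1, ?_⟩
    have hh := holder (h := h) (X := t - s) h0 h1 (by linarith) (n := 2) (by norm_num)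
      (l := fun j => if j = 0 then r - s else t - r)
      (by intro j; split_ifs <;> linarith)
      (by simp [Finset.sum_range_succ])
    simp only [Finset.sum_range_succ, Finset.sum_range_zero, if_true, one_ne_zero, if_false,
      zero_add, Nat.cast_ofNat] at hh
    have hsub : Icc s t ⊆ Icc s r ∪ Icc r t := Icc_subset_Icc_union_Icc
    have := (measureReal_mono (μ := m) hsub).trans (measureReal_union_le _ _)
    set Q := ((2:ℝ)^(1-h))^i * (B * Real.exp (Cc*lam)) with hQ
    have hQ0 : 0 ≤ Q := by positivity
    calc _ ≤ Q * ((r - s)^h + (t - r)^h) := by linarith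
      _ ≤ Q * ((2:ℝ)^(1-h) * (t-s)^h) := by gcongr
      _ = _ := by rw [hQ, pow_succ]; ring

lemma Good_dyadic {h : ℝ} {m : Measure ℝ} {B Cc lam d : ℝ} (hB : 0 ≤ B) (hC : 0 ≤ Cc)
    (hd : ∀ s t, 0 ≤ s → t ≤ 1 → d ≤ t - s → m.real (Icc s t) ≤ B * (t-s)^h)
    (i : ℕ) : ∀ s t, 0 ≤ s → s < t → t ≤ 1 → t - s ≤ lam * 2^i → d * 2^i ≤ t - s →
      Good m h B Cc lam i s t := by
  induction i with
  | zero =>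
    intro s t hs hst ht h1 h2
    rw [pow_zero, mul_one] at h1 h2
    refine ⟨hs, hst, ht, h1, (hd s t hs ht h2).trans ?_⟩
    have : 1 ≤ Real.exp (Cc * (lam - (t - s))) :=
      Real.one_le_exp (mul_nonneg hC (by linarith))
    have h3 : 0 ≤ t - s := by linarith
    have h4 : B ≤ B * Real.exp (Cc * (lam - (t - s))) := le_mul_of_one_le_right hB this
    gcongr
  | succ i ih =>
    intro s t hs hst ht h1 h2
    rw [pow_succ] at h1 h2
    exact ⟨(s+t)/2, ih _ _ hs (by linarith) (by linarith) (by linarith) (by linarith),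
      ih _ _ (by linarith) (by linarith) ht (by linarith) (by linarith)⟩

variable (S)

lemma main {ε : ℝ} (hε : 0 < ε) : ∀ᶠ n in atTop, ∀ m, Conf S n (S.h n) m →
    ∀ s t, 0 ≤ s → s < t → t ≤ 1 → m.real (Icc s t) ≤ (1 + ε) * (t - s) ^ S.h n := by
  obtain ⟨c, α, C⟩ := exists_consts S
  set q : ℝ := (1 + ε) ^ ((1:ℝ)/8) with hqd
  have hq : 1 < q := Real.one_lt_rpow (by linarith) (by norm_num)
  have hq8 : q ^ 8 = 1 + ε := by
    rw [hqd, ← Real.rpow_natCast, ← Real.rpow_mul (by linarith)]; norm_num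
  obtain ⟨δ, hδ, hcr⟩ := crossing S hq
  set D := c / (1-α) with hD
  have hD0 : 0 ≤ D := div_nonneg C.c0.le (by linarith [C.α1])
  have hpt : Tendsto (fun I : ℕ => ((1:ℝ)/2)^I) atTop (𝓝 0) :=
    tendsto_pow_atTop_nhds_zero_of_lt_one (by norm_num) (by norm_num)
  have hexp : Tendsto (fun I : ℕ => Real.exp (D * ((1:ℝ)/2)^I)) atTop (𝓝 1) := by
    have := (Real.continuous_exp.tendsto _).comp (hpt.const_mul D)
    simpa [Function.comp_def] using this
  obtain ⟨I, hI1, hI2⟩ := ((hpt.eventually (Iio_mem_nhds hδ)).and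
    (hexp.eventually (Iio_mem_nhds hq))).exists
  have hI1 : ((1:ℝ)/2)^I < δ := hI1
  have hI2 : Real.exp (D * ((1:ℝ)/2)^I) < q := hI2
  set lam := ((1:ℝ)/2)^I with hlam
  have hlam0 : 0 < lam := by positivity
  have hlam2 : lam * 2^I = 1 := by rw [hlam, ← mul_pow]; norm_num
  have h2t : Tendsto (fun n : ℕ => ((2:ℝ)^(1 - S.h n))^I) atTop (𝓝 1) := by
    have h1 : Tendsto (fun n => 1 - S.h n) atTop (𝓝 0) := by
      simpa using (h_tend S).const_sub 1
    have h2 : Tendsto (fun n => (2:ℝ)^(1 - S.h n)) atTop (𝓝 1) := by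
      simpa using tendsto_const_nhds.rpow h1 (Or.inl (two_ne_zero (α := ℝ)))
    simpa using h2.pow I
  filter_upwards [hcr, lemB S (show 0 < lam^2 by positivity) hq, eventually_ge_atTop 1,
    (h_tend S).eventually (Ioi_mem_nhds zero_lt_one),
    h2t.eventually (Iio_mem_nhds hq)] with n hcr hlB hn h0 h2 m hm
  have h0 : 0 < S.h n := h0
  have h2 : ((2:ℝ)^(1 - S.h n))^I < q := h2
  have h1 := h_le S n hn
  have hcr := hcr m hm
  have hlB := hlB m hm
  haveI := hm.prob
  have hq6 : 0 ≤ q ^ 6 := by positivity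
  have claim : ∀ j : ℕ, ∀ s t, 0 ≤ s → s < t → t ≤ 1 → α^j < t - s →
      Good m (S.h n) (q^6) D lam 0 s t ∨ Good m (S.h n) (q^6) D lam I s t := by
    intro j
    induction j with
    | zero => intro s t hs hst ht h; rw [pow_zero] at h; linarith
    | succ j ih =>
      intro s t hs hst ht hj
      by_cases hex : ∃ k, 1 ≤ k ∧ k ≤ n ∧ S.b k ≤ s ∧ t ≤ S.b (k-1)
      · obtain ⟨k, hk, hkn, hb1, hb2⟩ := hex
        obtain ⟨u, v, hu, huv, hv, hgu, hgv⟩ := preimage_ex S hk hb1 hst hb2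
        have hlip := C.lip hk (x := u) (y := v) ⟨hu, by linarith⟩ ⟨by linarith, hv⟩
        rw [hgu, hgv, abs_of_pos (by linarith), abs_sub_comm, abs_of_pos (by linarith)] at hlip
        have : α ^ j < v - u := by
          rw [pow_succ, mul_comm] at hj
          exact lt_of_mul_lt_mul_left (hj.trans_le hlip) C.α0.le
        rw [← hgu, ← hgv]
        rcases ih u v hu huv hv this with h | h
        · exact Or.inl (Good_image h0 h1 hm C hq6 hk hkn _ _ _ h)
        · exact Or.inr (Good_image h0 h1 hm C hq6 hk hkn _ _ _ h)
      · push Not at hex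
        by_cases hl : t - s < lam
        · left
          refine ⟨hs, hst, ht, hl.le, ?_⟩
          refine (hcr s t hs hst ht (hl.trans hI1)
            (fun k hk hkn hh => absurd hh.2 (not_le.2 (hex k hk hkn hh.1)))).trans ?_
          have : 1 ≤ Real.exp (D * (lam - (t - s))) :=
            Real.one_le_exp (mul_nonneg hD0 (by linarith))
          have h3 : 0 ≤ t - s := by linarith
          have h4 := le_mul_of_one_le_right hq6 this
          gcongr
        · right
          refine Good_dyadic (d := lam^2) hq6 hD0 ?_ I s t hs hst ht (by linarith) ?_
          · intro s t hs ht hst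
            refine (hlB s t hs ht hst).trans ?_
            have h3 : 0 ≤ t - s := le_trans (by positivity) hst
            have h4 : q ^ 2 ≤ q ^ 6 := pow_le_pow_right₀ hq.le (by norm_num)
            gcongr
          · have : lam ^ 2 * 2 ^ I = lam := by rw [sq, mul_assoc, hlam2, mul_one]
            linarith
  intro s t hs hst ht
  have hts : 0 < t - s := by linarith
  obtain ⟨j, hj⟩ := exists_pow_lt_of_lt_one hts C.α1
  have hp : 0 ≤ (t - s) ^ S.h n := by positivity
  rw [← hq8]
  have hqe : q ^ 6 * Real.exp (D * lam) ≤ q ^ 7 := by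
    calc _ ≤ q ^ 6 * q := by gcongr
      _ = q ^ 7 := by ring
  rcases claim j s t hs hst ht hj with h | h
  · refine (Good_bound h0 h1 hq6 hD0 0 s t h).2.trans ?_
    rw [pow_zero, one_mul]
    have : q ^ 7 ≤ q ^ 8 := pow_le_pow_right₀ hq.le (by norm_num)
    exact mul_le_mul_of_nonneg_right (hqe.trans this) hp
  · refine (Good_bound h0 h1 hq6 hD0 I s t h).2.trans ?_
    refine mul_le_mul_of_nonneg_right ?_ hp
    calc _ ≤ q * q ^ 7 := by gcongr
      _ = q ^ 8 := by ring

end ND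

/-- In the nonlinear setting, for every `ε > 0` there is `n₀` such that every closed interval
    `Δ ⊆ [0,1]` of positive length has density `m_n(Δ)/|Δ|^{h_n} ≤ 1 + ε` for all `n > n₀`. -/
theorem nonlinear_density_all_intervals (S : NonlinearIFS) :
    ∀ ε > (0 : ℝ), ∃ n₀ : ℕ, ∀ n > n₀, ∀ s t : ℝ,
      0 ≤ s → s < t → t ≤ 1 →
      normMeas S n (Set.Icc s t) / ENNReal.ofReal ((t - s) ^ S.h n) ≤
        ENNReal.ofReal (1 + ε) := by
  intro ε hε
  obtain ⟨n₀, hn₀⟩ := eventually_atTop.1 ((ND.main S hε).and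
    ((ND.h_tend S).eventually (Ioi_mem_nhds zero_lt_one)))
  refine ⟨n₀, fun n hn s t hs hst ht => ?_⟩
  obtain ⟨hmain, h0⟩ := hn₀ n hn.le
  have h0 : 0 < S.h n := h0
  have hts : 0 < (t - s) ^ S.h n := Real.rpow_pos_of_pos (by linarith) _
  by_cases hT0 : μH[S.h n] (limitSet S.g n) = 0
  · have : normMeas S n (Set.Icc s t) = 0 := by
      rw [normMeas, measure_mono_null inter_subset_right hT0, ENNReal.zero_div]
    rw [this, ENNReal.zero_div]; exact zero_le
  by_cases hT1 : μH[S.h n] (limitSet S.g n) = ⊤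
  · have : normMeas S n (Set.Icc s t) = 0 := by
      rw [normMeas, hT1, ENNReal.div_top]
    rw [this, ENNReal.zero_div]; exact zero_le
  have hm := ND.conf_of S n h0 hT0 hT1
  have hb := hmain _ hm s t hs hst ht
  have e : normMeas S n (Set.Icc s t) = ((μH[S.h n] (limitSet S.g n))⁻¹ •
      (μH[S.h n]).restrict (limitSet S.g n)) (Set.Icc s t) := by
    rw [Measure.smul_apply, Measure.restrict_apply measurableSet_Icc, smul_eq_mul, normMeas,
      ENNReal.div_eq_inv_mul]
  haveI := hm.prob
  rw [e, ← ofReal_measureReal]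
  apply ENNReal.div_le_of_le_mul
  rw [← ENNReal.ofReal_mul (by linarith)]
  exact ENNReal.ofReal_le_ofReal hb
end
end
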